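/- arXiv:1311.3190 — 2 statements merged into one kernel-verified Lean document; each statement's English description precedes it below -/
import Mathlib

section
/- Under the null hypothesis, for any fixed x > 0, P( M_n^+ ≥ x / (2 log n · log log n) ) ≥ e^{-x} + o(1) as n → ∞. -/
open MeasureTheory Filter Set

noncomputable section

/-- Density of the Beta(a,b) distribution on [0,1]. -/
def betaPDF (a b x : ℝ) : ℝ :=
  x ^ (a - 1) * (1 - x) ^ (b - 1) / (Real.Gamma a * Real.Gamma b / Real.Gamma (a + b))

/-- Regularized incomplete beta function `I_x(a,b) = P(Beta(a,b) < x)`. -/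
def regIncBeta (a b x : ℝ) : ℝ := ∫ t in Set.Ioc (0:ℝ) x, betaPDF a b t

/-- The `i`-th order statistic (0-based) of the sample `u`. -/
def orderStat {n : ℕ} (u : Fin n → ℝ) (i : Fin n) : ℝ := u (Tuple.sort u i)

/-- `p_{(i)} = P(Beta(i, n-i+1) < u_{(i)})` (with 1-based index `i = (i : Fin n) + 1`). -/
def pOrd {n : ℕ} (u : Fin n → ℝ) (i : Fin n) : ℝ :=
  regIncBeta ((i : ℕ) + 1 : ℝ) ((n : ℝ) - (i : ℕ)) (orderStat u i)

/-- One-sided exact Berk-Jones statistic `M_n^+`. -/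
def MnPlus {n : ℕ} (u : Fin n → ℝ) : ℝ := ⨅ i, pOrd u i

/-- One-sided exact Berk-Jones statistic `M_n^-`. -/
def MnMinus {n : ℕ} (u : Fin n → ℝ) : ℝ := ⨅ i, (1 - pOrd u i)

/-- Two-sided exact Berk-Jones statistic `M_n`. -/
def Mn {n : ℕ} (u : Fin n → ℝ) : ℝ := min (MnPlus u) (MnMinus u)

/-- Joint law of `n` i.i.d. `U[0,1]` random variables (the null hypothesis). -/
def nullMeasure (n : ℕ) : Measure (Fin n → ℝ) :=
  Measure.pi fun _ => MeasureTheory.volume.restrict (Set.Icc (0:ℝ) 1)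

end


/-- unnormalised beta density, 0-based index -/
noncomputable def bjF (n i : ℕ) (s : ℝ) : ℝ := s ^ i * (1 - s) ^ (n - 1 - i)

/-- normalising constant -/
noncomputable def bjC (n i : ℕ) : ℝ := (n.factorial : ℝ) / (i.factorial * (n - 1 - i).factorial)

/-- binomial upper tail P(Bin(n,c) ≥ i+1) -/
noncomputable def bjS (n i : ℕ) (c : ℝ) : ℝ :=
  ∑ k ∈ Finset.Ico (i + 1) (n + 1), (n.choose k : ℝ) * c ^ k * (1 - c) ^ (n - k)

lemma bjF_cont (n i : ℕ) : Continuous (bjF n i) := by unfold bjF; fun_prop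

lemma bjF_intble (n i : ℕ) (a b : ℝ) : IntervalIntegrable (bjF n i) volume a b :=
  (bjF_cont n i).intervalIntegrable a b

lemma bjF_nonneg (n i : ℕ) {s : ℝ} (h0 : 0 ≤ s) (h1 : s ≤ 1) : 0 ≤ bjF n i s := by
  unfold bjF; have : 0 ≤ 1 - s := by linarith
  positivity

lemma bjF_pos (n i : ℕ) {s : ℝ} (h0 : 0 < s) (h1 : s < 1) : 0 < bjF n i s := by
  unfold bjF; have : 0 < 1 - s := by linarith
  positivity

lemma bjC_pos (n i : ℕ) : 0 < bjC n i := by unfold bjC; positivity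

lemma bj_reg (n i : ℕ) (hi : i < n) (c : ℝ) (hc : 0 ≤ c) :
    regIncBeta ((i : ℕ) + 1 : ℝ) ((n : ℝ) - (i : ℕ)) c = bjC n i * ∫ s in (0:ℝ)..c, bjF n i s := by
  unfold regIncBeta
  rw [intervalIntegral.integral_of_le hc, ← integral_const_mul]
  congr 1
  ext t
  unfold betaPDF bjC bjF
  obtain ⟨j, rfl⟩ : ∃ j, n = i + 1 + j := ⟨n - (i+1), by omega⟩
  have e1 : ((i : ℝ) + 1 - 1) = (i : ℕ) := by ring
  have e2 : (((i + 1 + j : ℕ) : ℝ) - i - 1) = (j : ℕ) := by push_cast; ring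
  have e3 : (((i + 1 + j : ℕ) : ℝ) - i) = (j : ℝ) + 1 := by push_cast; ring
  have e4 : (i : ℝ) + 1 + ((j : ℝ) + 1) = ((i + 1 + j : ℕ) : ℝ) + 1 := by push_cast; ring
  have e5 : i + 1 + j - 1 - i = j := by omega
  rw [e1, e2, e3, e4, e5, Real.rpow_natCast, Real.rpow_natCast, Real.Gamma_nat_eq_factorial,
    Real.Gamma_nat_eq_factorial, Real.Gamma_nat_eq_factorial]
  field_simp

lemma bjS_deriv (n i : ℕ) (hi : i < n) (c : ℝ) :
    HasDerivAt (bjS n i) (bjC n i * bjF n i c) c := by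
  -- downward induction on i
  obtain ⟨j, rfl⟩ : ∃ j, n = i + 1 + j := ⟨n - (i+1), by omega⟩
  clear hi
  induction j generalizing i with
  | zero =>
    have : bjS (i+1+0) i = fun c => c ^ (i+1) := by
      ext c; simp [bjS]
    rw [this]
    have h := hasDerivAt_pow (i+1) c
    refine HasDerivAt.congr_deriv h ?_
    simp [bjC, bjF, Nat.factorial_succ]
    field_simp
    exact Or.inl trivial
  | succ j ih =>
    have h := ih (i + 1)
    rw [show i + 1 + 1 + j = i + 1 + (j + 1) by ring] at h
    have e : bjS (i + 1 + (j+1)) i = fun c => ((i+1+(j+1)).choose (i+1) : ℝ) * (c ^ (i+1) * (1 - c) ^ (j+1)) + bjS (i+1+(j+1)) (i+1) c := by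
      ext c
      unfold bjS
      rw [Finset.sum_eq_sum_Ico_succ_bot (by omega)]
      rw [show i + 1 + (j+1) - (i+1) = j + 1 by omega]
      ring
    rw [e]
    have h1 : HasDerivAt (fun c : ℝ => c ^ (i+1) * (1 - c) ^ (j+1)) (((i+1 : ℕ) : ℝ) * c ^ i * (1 - c) ^ (j+1) + c ^ (i+1) * (((j+1 : ℕ):ℝ) * (1 - c)^j * (-1))) c := by
      have a := hasDerivAt_pow (i+1) c
      have b := ((hasDerivAt_id c).const_sub 1).pow (j+1)
      simp only [Nat.add_sub_cancel] at a b
      exact a.mul b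
    have h2 := (h1.const_mul ((i+1+(j+1)).choose (i+1) : ℝ)).add h
    refine HasDerivAt.congr_deriv h2 ?_
    have ec : ((i+1+(j+1)).choose (i+1) : ℝ) = ((i+1+(j+1)).factorial : ℝ) / ((i+1).factorial * (j+1).factorial) := by
      rw [Nat.cast_choose ℝ (by omega : i+1 ≤ i+1+(j+1))]
      rw [show i + 1 + (j+1) - (i+1) = j + 1 by omega]
    rw [ec]
    unfold bjC bjF
    rw [show i + 1 + (j+1) - 1 - i = j + 1 by omega, show i + 1 + (j+1) - 1 - (i+1) = j by omega]
    simp only [Nat.factorial_succ i, Nat.factorial_succ j]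
    push_cast
    field_simp
    ring

lemma bjS_eq (n i : ℕ) (hi : i < n) (c : ℝ) :
    bjC n i * ∫ s in (0:ℝ)..c, bjF n i s = bjS n i c := by
  rw [← intervalIntegral.integral_const_mul]
  rw [intervalIntegral.integral_eq_sub_of_hasDerivAt (f := bjS n i)]
  · have : bjS n i 0 = 0 := by
      unfold bjS
      apply Finset.sum_eq_zero
      intro k hk
      simp at hk
      rw [zero_pow (by omega)]; ring
    rw [this]; ring
  · intro x _; exact bjS_deriv n i hi x
  · exact ((bjF_cont n i).const_mul _).intervalIntegrable _ _

lemma bjS_one (n i : ℕ) (hi : i < n) : bjS n i 1 = 1 := by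
  unfold bjS
  rw [Finset.sum_eq_single n]
  · simp
  · intro k hk hkn
    simp at hk
    simp [show n - k ≠ 0 by omega]
  · intro h; simp at h; omega

lemma bj_total (n i : ℕ) (hi : i < n) : ∫ s in (0:ℝ)..1, bjF n i s = (bjC n i)⁻¹ := by
  have := bjS_eq n i hi 1
  rw [bjS_one n i hi] at this
  exact eq_inv_of_mul_eq_one_right this

lemma bjS_mono (n i : ℕ) (hi : i < n) : StrictMonoOn (bjS n i) (Icc 0 1) := by
  apply strictMonoOn_of_deriv_pos (convex_Icc 0 1)
  · exact fun x _ => (bjS_deriv n i hi x).continuousAt.continuousWithinAt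
  · intro x hx
    rw [interior_Icc] at hx
    rw [(bjS_deriv n i hi x).deriv]
    exact mul_pos (bjC_pos n i) (bjF_pos n i hx.1 hx.2)

lemma bjS_cont (n i : ℕ) : Continuous (bjS n i) := by unfold bjS; fun_prop

lemma bjS_anti (n i j : ℕ) (hij : i ≤ j) {c : ℝ} (h0 : 0 ≤ c) (h1 : c ≤ 1) :
    bjS n j c ≤ bjS n i c := by
  unfold bjS
  apply Finset.sum_le_sum_of_subset_of_nonneg
  · intro k; simp; omega
  · intro k _ _
    have : 0 ≤ 1 - c := by linarith
    positivity

lemma bj_exists_c (n i : ℕ) (hi : i < n) (δ : ℝ) (h0 : 0 < δ) (h1 : δ < 1) :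
    ∃ c, 0 < c ∧ c < 1 ∧ bjS n i c = δ := by
  have hz : bjS n i 0 = 0 := by rw [← bjS_eq n i hi]; simp
  have := intermediate_value_Ioo (by norm_num : (0:ℝ) ≤ 1) (bjS_cont n i).continuousOn
  rw [hz, bjS_one n i hi] at this
  obtain ⟨c, hc, h⟩ := this ⟨h0, h1⟩
  exact ⟨c, hc.1, hc.2, h⟩

/-- second moment about `(i+1)/n` -/
lemma bj_var (n i : ℕ) (hi : i + 1 < n) (m : ℝ) (hm : m = ((i:ℝ) + 1) / n) :
    ∫ s in (0:ℝ)..1, (s - m) ^ 2 * bjF n i s ≤ 3 * (m * (1 - m) / n) * ∫ s in (0:ℝ)..1, bjF n i s := by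
  have e : (fun s => (s - m) ^ 2 * bjF n i s) =
      fun s => bjF (n+2) (i+2) s - 2 * m * bjF (n+1) (i+1) s + m ^ 2 * bjF n i s := by
    ext s
    unfold bjF
    rw [show n + 2 - 1 - (i+2) = n - 1 - i by omega, show n + 1 - 1 - (i+1) = n - 1 - i by omega]
    ring
  rw [e, intervalIntegral.integral_add, intervalIntegral.integral_sub,
    intervalIntegral.integral_const_mul, intervalIntegral.integral_const_mul,
    bj_total _ _ (by omega), bj_total _ _ (by omega), bj_total _ _ (by omega)]
  rotate_left
  · exact bjF_intble _ _ _ _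
  · exact (bjF_intble _ _ _ _).const_mul _
  · exact (bjF_intble _ _ _ _).sub ((bjF_intble _ _ _ _).const_mul _)
  · exact (bjF_intble _ _ _ _).const_mul _
  obtain ⟨j, rfl⟩ : ∃ j, n = i + 2 + j := ⟨n - (i+2), by omega⟩
  have c1 : (bjC (i+2+j+1) (i+1))⁻¹ = (bjC (i+2+j) i)⁻¹ * (((i:ℝ)+1) / ((i:ℝ)+2+j+1)) := by
    unfold bjC
    rw [show i+2+j+1 - 1 - (i+1) = j + 1 by omega, show i+2+j - 1 - i = j + 1 by omega,
      Nat.factorial_succ i, Nat.factorial_succ (i+2+j)]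
    push_cast
    field_simp
  have c2 : (bjC (i+2+j+2) (i+2))⁻¹ = (bjC (i+2+j) i)⁻¹ * (((i:ℝ)+1) * (i+2) / (((i:ℝ)+2+j+1) * (i+2+j+2))) := by
    unfold bjC
    rw [show i+2+j+2 - 1 - (i+2) = j + 1 by omega, show i+2+j - 1 - i = j + 1 by omega,
      Nat.factorial_succ (i+1), Nat.factorial_succ i, Nat.factorial_succ (i+2+j+1), Nat.factorial_succ (i+2+j)]
    push_cast
    field_simp
    ring
  rw [c1, c2]
  have hC : 0 < (bjC (i+2+j) i)⁻¹ := inv_pos.2 (bjC_pos _ _)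
  set C := (bjC (i+2+j) i)⁻¹
  have key : ((i:ℝ)+1) * (i+2) / (((i:ℝ)+2+j+1) * (i+2+j+2)) - 2 * m * (((i:ℝ)+1) / ((i:ℝ)+2+j+1)) + m^2 ≤ 3 * (m * (1 - m) / ((i+2+j : ℕ) : ℝ)) := by
    rw [hm]; push_cast
    have hi0 : (0:ℝ) ≤ i := Nat.cast_nonneg i
    have hj0 : (0:ℝ) ≤ j := Nat.cast_nonneg j
    generalize (i:ℝ) = a at *
    generalize (j:ℝ) = b at *
    have p1 : 0 < a + 2 + b := by linarith
    rw [← sub_nonneg]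
    have : 3 * ((a + 1) / (a + 2 + b) * (1 - (a + 1) / (a + 2 + b)) / (a + 2 + b)) -
      ((a + 1) * (a + 2) / ((a + 2 + b + 1) * (a + 2 + b + 2)) - 2 * ((a + 1) / (a + 2 + b)) * ((a + 1) / (a + 2 + b + 1)) + ((a + 1) / (a + 2 + b)) ^ 2)
      = (a+1) * (3 * (b+1) * (a+2+b+1) * (a+2+b+2) - ((a+2) * (a+2+b)^3 - 2 * (a+1) * (a+2+b)^2 * (a+2+b+2) + (a+1) * (a+2+b) * (a+2+b+1) * (a+2+b+2))) / ((a+2+b)^3 * (a+2+b+1) * (a+2+b+2)) := by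
      field_simp
      ring
    rw [this]
    apply div_nonneg _ (by positivity)
    apply mul_nonneg (by linarith)
    ring_nf
    positivity
  nlinarith [mul_le_mul_of_nonneg_left key hC.le]


lemma bjF_exp (n i : ℕ) {t : ℝ} (h0 : 0 < t) (h1 : t < 1) :
    bjF n i t = Real.exp (i * Real.log t + ((n - 1 - i : ℕ) : ℝ) * Real.log (1 - t)) := by
  unfold bjF
  rw [Real.exp_add, ← Real.log_pow, ← Real.log_pow, Real.exp_log (by positivity), Real.exp_log]
  have : 0 < 1 - t := by linarith
  positivity

lemma bj_nm (n i : ℕ) (hi : i + 1 < n) (m : ℝ) (hm : m = ((i:ℝ) + 1) / n) :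
    0 < m ∧ m < 1 ∧ (i:ℝ) + 1 = n * m ∧ ((n - 1 - i : ℕ) : ℝ) = n * (1 - m) ∧ (0:ℝ) < n := by
  have hn : (0:ℝ) < n := by exact_mod_cast (by omega : 0 < n)
  have hi' : (i:ℝ) + 1 < n := by exact_mod_cast hi
  have e : (i:ℝ) + 1 = n * m := by rw [hm]; field_simp
  refine ⟨by rw [hm]; positivity, by rw [hm, div_lt_one hn]; exact hi', e, ?_, hn⟩
  rw [show n - 1 - i = n - (i+1) by omega, Nat.cast_sub hi.le]
  push_cast
  rw [mul_sub, ← e]; ring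

lemma bj_lower (n i : ℕ) (hi : i + 1 < n) (m : ℝ) (hm : m = ((i:ℝ) + 1) / n) {t c : ℝ}
    (ht : 0 < t) (htc : t ≤ c) (hc : c < 1) :
    bjF n i c * Real.exp (-((c - t) * (n * (m - t) / (t * (1 - t))))) ≤ bjF n i t := by
  obtain ⟨hm0, hm1, e1, e2, hn⟩ := bj_nm n i hi m hm
  have hc0 : 0 < c := by linarith
  have ht1 : t < 1 := by linarith
  rw [bjF_exp n i ht ht1, bjF_exp n i hc0 hc, ← Real.exp_add, Real.exp_le_exp]
  have a1 : 1 - c / t ≤ Real.log t - Real.log c := by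
    rw [← Real.log_div ht.ne' hc0.ne']
    have := Real.one_sub_inv_le_log_of_pos (x := t / c) (by positivity)
    rwa [inv_div] at this
  have a2 : 1 - (1 - c) / (1 - t) ≤ Real.log (1 - t) - Real.log (1 - c) := by
    rw [← Real.log_div (by linarith) (by linarith)]
    have := Real.one_sub_inv_le_log_of_pos (x := (1 - t) / (1 - c)) (div_pos (by linarith) (by linarith))
    rwa [inv_div] at this
  have b1 : (i:ℝ) * (1 - c / t) ≤ i * (Real.log t - Real.log c) :=
    mul_le_mul_of_nonneg_left a1 (by positivity)
  have b2 : ((n - 1 - i : ℕ) : ℝ) * (1 - (1 - c) / (1 - t)) ≤ ((n - 1 - i : ℕ) : ℝ) * (Real.log (1 - t) - Real.log (1 - c)) :=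
    mul_le_mul_of_nonneg_left a2 (by positivity)
  have a3 : 1 - c / t ≤ 0 := by
    rw [sub_nonpos, le_div_iff₀ ht]; linarith
  have e3 : -((c - t) * (n * (m - t) / (t * (1 - t)))) = ((i:ℝ)+1) * (1 - c / t) + ((n - 1 - i : ℕ) : ℝ) * (1 - (1 - c) / (1 - t)) := by
    rw [e1, e2]
    have : 1 - t ≠ 0 := by linarith
    field_simp
    ring
  rw [e3]
  nlinarith

lemma bj_upper (n i : ℕ) (hi : i + 1 < n) (m : ℝ) (hm : m = ((i:ℝ) + 1) / n) {s c : ℝ}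
    (hc : 0 < c) (hcs : c ≤ s) (hs : s < 1) :
    bjF n i s ≤ bjF n i c * Real.exp ((s - c) * (n * (m - c) / (c * (1 - c)))) := by
  obtain ⟨hm0, hm1, e1, e2, hn⟩ := bj_nm n i hi m hm
  have hs0 : 0 < s := by linarith
  have hc1 : c < 1 := by linarith
  rw [bjF_exp n i hs0 hs, bjF_exp n i hc hc1, ← Real.exp_add, Real.exp_le_exp]
  have a1 : Real.log s - Real.log c ≤ s / c - 1 := by
    rw [← Real.log_div hs0.ne' hc.ne']
    exact Real.log_le_sub_one_of_pos (by positivity)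
  have a2 : Real.log (1 - s) - Real.log (1 - c) ≤ (1 - s) / (1 - c) - 1 := by
    rw [← Real.log_div (by linarith) (by linarith)]
    exact Real.log_le_sub_one_of_pos (div_pos (by linarith) (by linarith))
  have b1 : (i:ℝ) * (Real.log s - Real.log c) ≤ i * (s / c - 1) :=
    mul_le_mul_of_nonneg_left a1 (by positivity)
  have b2 : ((n - 1 - i : ℕ) : ℝ) * (Real.log (1 - s) - Real.log (1 - c)) ≤ ((n - 1 - i : ℕ) : ℝ) * ((1 - s) / (1 - c) - 1) :=
    mul_le_mul_of_nonneg_left a2 (by positivity)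
  have a3 : 0 ≤ s / c - 1 := by
    rw [sub_nonneg, le_div_iff₀ hc]; linarith
  have e3 : (s - c) * (n * (m - c) / (c * (1 - c))) = ((i:ℝ)+1) * (s / c - 1) + ((n - 1 - i : ℕ) : ℝ) * ((1 - s) / (1 - c) - 1) := by
    rw [e1, e2]
    have : 1 - c ≠ 0 := by linarith
    field_simp
    ring
  rw [e3]
  nlinarith

lemma bj_window (n i : ℕ) (hi : i + 1 < n) (m : ℝ) (hm : m = ((i:ℝ) + 1) / n) (w : ℝ) (hw : 0 < w)
    (h0 : 0 ≤ m - w) (h1 : m + w ≤ 1) :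
    (1 - 3 * (m * (1 - m) / n) / w ^ 2) * ∫ s in (0:ℝ)..1, bjF n i s ≤ ∫ s in (m - w)..(m + w), bjF n i s := by
  have hv := bj_var n i hi m hm
  have ii := fun a b => bjF_intble n i a b
  have gi : ∀ a b, IntervalIntegrable (fun s => (s - m) ^ 2 * bjF n i s) volume a b := by
    intro a b
    apply Continuous.intervalIntegrable
    have := bjF_cont n i
    fun_prop
  have s1 : ∫ s in (0:ℝ)..1, bjF n i s = (∫ s in (0:ℝ)..(m-w), bjF n i s) + (∫ s in (m-w)..(m+w), bjF n i s) + ∫ s in (m+w)..1, bjF n i s := by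
    rw [intervalIntegral.integral_add_adjacent_intervals (ii _ _) (ii _ _),
      intervalIntegral.integral_add_adjacent_intervals (ii _ _) (ii _ _)]
  have s2 : ∫ s in (0:ℝ)..1, (s - m) ^ 2 * bjF n i s = (∫ s in (0:ℝ)..(m-w), (s - m) ^ 2 * bjF n i s) + (∫ s in (m-w)..(m+w), (s - m) ^ 2 * bjF n i s) + ∫ s in (m+w)..1, (s - m) ^ 2 * bjF n i s := by
    rw [intervalIntegral.integral_add_adjacent_intervals (gi _ _) (gi _ _),
      intervalIntegral.integral_add_adjacent_intervals (gi _ _) (gi _ _)]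
  have t1 : w ^ 2 * (∫ s in (0:ℝ)..(m-w), bjF n i s) ≤ ∫ s in (0:ℝ)..(m-w), (s - m) ^ 2 * bjF n i s := by
    rw [← intervalIntegral.integral_const_mul]
    apply intervalIntegral.integral_mono_on h0 ((ii _ _).const_mul _) (gi _ _)
    intro s hs
    apply mul_le_mul_of_nonneg_right _ (bjF_nonneg n i hs.1 (by linarith [hs.2]))
    nlinarith [hs.2]
  have t2 : w ^ 2 * (∫ s in (m+w)..1, bjF n i s) ≤ ∫ s in (m+w)..1, (s - m) ^ 2 * bjF n i s := by
    rw [← intervalIntegral.integral_const_mul]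
    apply intervalIntegral.integral_mono_on h1 ((ii _ _).const_mul _) (gi _ _)
    intro s hs
    apply mul_le_mul_of_nonneg_right _ (bjF_nonneg n i (by linarith [hs.1]) hs.2)
    nlinarith [hs.1]
  have t3 : 0 ≤ ∫ s in (m-w)..(m+w), (s - m) ^ 2 * bjF n i s := by
    apply intervalIntegral.integral_nonneg (by linarith)
    intro s hs
    exact mul_nonneg (sq_nonneg _) (bjF_nonneg n i (by linarith [hs.1]) (by linarith [hs.2]))
  have hw2 : 0 < w ^ 2 := by positivity
  set I := ∫ s in (0:ℝ)..1, bjF n i s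
  have : w ^ 2 * (I - ∫ s in (m - w)..(m + w), bjF n i s) ≤ 3 * (m * (1 - m) / n) * I := by
    have : I - (∫ s in (m - w)..(m + w), bjF n i s) = (∫ s in (0:ℝ)..(m-w), bjF n i s) + ∫ s in (m+w)..1, bjF n i s := by
      linarith
    rw [this]
    linarith
  have h3 : (I - ∫ s in (m - w)..(m + w), bjF n i s) ≤ 3 * (m * (1 - m) / n) * I / w ^ 2 := by
    rw [le_div_iff₀ hw2]; linarith
  have e : (1 - 3 * (m * (1 - m) / n) / w ^ 2) * I = I - 3 * (m * (1 - m) / n) * I / w ^ 2 := by ring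
  rw [e]; linarith

lemma bj_mills (n i : ℕ) (hi : i + 1 < n) (m : ℝ) (hm : m = ((i:ℝ) + 1) / n) (κ d V R : ℝ)
    (hκ : 0 < κ) (hκ1 : κ < 1) (hd : 0 < d) (hd1 : d ≤ κ / 2 * (m * (1 - m)))
    (hV : V = m * (1 - m) / n) (hR : R = (1 + κ) * d / ((1 - κ) * V)) :
    bjF n i (m - d) * ((1 - Real.exp (-(R * (κ * d)))) / R) ≤ ∫ s in (0:ℝ)..(m - d), bjF n i s := by
  obtain ⟨hm0, hm1, e1, e2, hn⟩ := bj_nm n i hi m hm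
  have hmm : m * (1 - m) ≤ m := by nlinarith
  have hdm : d ≤ κ / 2 * m := hd1.trans (mul_le_mul_of_nonneg_left hmm (by linarith))
  have hVpos : 0 < V := by rw [hV]; exact div_pos (mul_pos hm0 (by linarith)) hn
  have hRpos : 0 < R := by rw [hR]; apply div_pos (by positivity) (mul_pos (by linarith) hVpos)
  have hw : m - d - κ * d ≥ (1 - κ) * m := by nlinarith
  have hw0 : 0 < (1 - κ) * m := mul_pos (by linarith) hm0
  have hκd : 0 < κ * d := by positivity
  have hIntg : ∫ s in (m - d - κ * d)..(m - d), bjF n i (m - d) * Real.exp (R * (s - (m - d))) = bjF n i (m - d) * ((1 - Real.exp (-(R * (κ * d)))) / R) := by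
    rw [intervalIntegral.integral_const_mul]
    congr 1
    rw [intervalIntegral.integral_eq_sub_of_hasDerivAt (f := fun s => Real.exp (R * (s - (m - d))) / R)]
    · simp only [sub_self, mul_zero, Real.exp_zero]
      rw [show R * (m - d - κ * d - (m - d)) = -(R * (κ * d)) by ring]; ring
    · intro x _
      have h := (((hasDerivAt_id x).sub_const (m - d)).const_mul R).exp.div_const R
      refine HasDerivAt.congr_deriv h ?_
      simp; field_simp
    · apply Continuous.intervalIntegrable; fun_prop
  rw [← hIntg]
  have h1 : ∫ s in (m - d - κ * d)..(m - d), bjF n i (m - d) * Real.exp (R * (s - (m - d))) ≤ ∫ s in (m - d - κ * d)..(m - d), bjF n i s := by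
    apply intervalIntegral.integral_mono_on (by linarith) (Continuous.intervalIntegrable (by fun_prop) _ _) (bjF_intble _ _ _ _)
    intro t ht
    have ht0 : 0 < t := by linarith [ht.1]
    have ht1 : t < 1 := by linarith [ht.2]
    refine le_trans ?_ (bj_lower n i hi m hm ht0 ht.2 (by linarith))
    apply mul_le_mul_of_nonneg_left _ (bjF_nonneg n i (by linarith) (by linarith))
    rw [Real.exp_le_exp]
    have key : n * (m - t) / (t * (1 - t)) ≤ R := by
      rw [hR, hV]
      have : (1 + κ) * d / ((1 - κ) * (m * (1 - m) / n)) = n * ((1 + κ) * d) / (((1 - κ) * m) * (1 - m)) := by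
        field_simp
      rw [this]
      apply div_le_div₀ (by positivity)
      · apply mul_le_mul_of_nonneg_left _ hn.le
        nlinarith [ht.1]
      · exact mul_pos hw0 (by linarith)
      · apply mul_le_mul (by linarith [ht.1]) (by linarith [ht.2]) (by linarith) ht0.le
    nlinarith [mul_le_mul_of_nonneg_left key (by linarith [ht.2] : 0 ≤ m - d - t)]
  refine h1.trans ?_
  rw [← intervalIntegral.integral_add_adjacent_intervals (bjF_intble n i 0 (m - d - κ * d)) (bjF_intble n i (m - d - κ * d) (m-d))]
  have : 0 ≤ ∫ s in (0:ℝ)..(m - d - κ * d), bjF n i s := by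
    apply intervalIntegral.integral_nonneg (by linarith)
    intro s hs
    exact bjF_nonneg n i hs.1 (by linarith [hs.2])
  linarith

lemma bj_log_sub {x : ℝ} (h0 : 0 ≤ x) (h1 : x < 1) : Real.log (1 - x) ≤ -x - x ^ 2 / 2 := by
  have hd : ∀ y, y < 1 → HasDerivAt (fun y : ℝ => -y - y^2/2 - Real.log (1 - y)) (-1 - y + 1 / (1 - y)) y := by
    intro y hy
    have a := (((hasDerivAt_id y).neg.sub ((hasDerivAt_pow 2 y).div_const 2)).sub (((hasDerivAt_id y).const_sub 1).log (by simp; linarith)))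
    refine HasDerivAt.congr_deriv a ?_
    simp; ring
  have hmono : MonotoneOn (fun y : ℝ => -y - y^2/2 - Real.log (1 - y)) (Ico 0 1) := by
    apply monotoneOn_of_deriv_nonneg (convex_Ico 0 1)
    · intro y hy; exact (hd y hy.2).continuousAt.continuousWithinAt
    · intro y hy; rw [interior_Ico] at hy; exact (hd y hy.2).differentiableAt.differentiableWithinAt
    · intro y hy
      rw [interior_Ico] at hy
      rw [(hd y hy.2).deriv]
      have : (0:ℝ) < 1 - y := by linarith [hy.2]
      have e : -1 - y + 1 / (1 - y) = y ^ 2 / (1 - y) := by field_simp; ring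
      rw [e]; positivity
  have := hmono ⟨le_refl _, by norm_num⟩ ⟨h0, h1⟩ h0
  simp at this
  linarith

lemma bj_log_add {x : ℝ} (h0 : 0 ≤ x) : Real.log (1 + x) ≤ x - x ^ 2 / 2 + x ^ 3 / 3 := by
  have hd : ∀ y, 0 ≤ y → HasDerivAt (fun y : ℝ => y - y^2/2 + y^3/3 - Real.log (1 + y)) (1 - y + y^2 - 1 / (1 + y)) y := by
    intro y hy
    have a := ((((hasDerivAt_id y).sub ((hasDerivAt_pow 2 y).div_const 2)).add ((hasDerivAt_pow 3 y).div_const 3)).sub (((hasDerivAt_id y).const_add 1).log (by simp; linarith)))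
    refine HasDerivAt.congr_deriv a ?_
    simp
  have hmono : MonotoneOn (fun y : ℝ => y - y^2/2 + y^3/3 - Real.log (1 + y)) (Ici 0) := by
    apply monotoneOn_of_deriv_nonneg (convex_Ici 0)
    · intro y hy; exact (hd y hy).continuousAt.continuousWithinAt
    · intro y hy; rw [interior_Ici] at hy; exact (hd y (le_of_lt hy)).differentiableAt.differentiableWithinAt
    · intro y hy
      rw [interior_Ici] at hy
      rw [(hd y (le_of_lt hy)).deriv]
      have hy' : 0 < y := hy
      have e : 1 - y + y^2 - 1 / (1 + y) = y ^ 3 / (1 + y) := by field_simp; ring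
      rw [e]; positivity
  have := hmono (by simp) (show x ∈ Ici 0 from h0) h0
  simp at this
  linarith

lemma bj_chernoff0 (n i : ℕ) (hi : i + 1 < n) (m : ℝ) (hm : m = ((i:ℝ) + 1) / n) {c : ℝ}
    (hc : 0 < c) (hcm : c ≤ m) :
    bjS n i c ≤ (c / m) ^ (i + 1) * ((1 - c) / (1 - m)) ^ (n - 1 - i) := by
  obtain ⟨hm0, hm1, e1, e2, hn⟩ := bj_nm n i hi m hm
  have hm1' : 0 < 1 - m := by linarith
  have hc1' : 0 < 1 - c := by linarith
  have h := intervalIntegral.integral_comp_mul_left (a := 0) (b := m) (fun t => bjF n i t) (c := c / m) (by positivity)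
  rw [mul_zero, div_mul_cancel₀ _ hm0.ne', smul_eq_mul] at h
  have h1 : ∫ t in (0:ℝ)..c, bjF n i t = (c / m) * ∫ s in (0:ℝ)..m, bjF n i (c / m * s) := by
    rw [h]; field_simp
  have h2 : ∫ s in (0:ℝ)..m, bjF n i (c / m * s) ≤ ∫ s in (0:ℝ)..m, (c/m)^i * ((1 - c) / (1 - m)) ^ (n - 1 - i) * bjF n i s := by
    apply intervalIntegral.integral_mono_on hm0.le
    · apply Continuous.intervalIntegrable
      have := bjF_cont n i
      fun_prop
    · exact (bjF_intble _ _ _ _).const_mul _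
    · intro s hs
      unfold bjF
      have hs0 := hs.1
      have hcs : c / m * s ≤ 1 := by
        have : c / m * s ≤ 1 * m := mul_le_mul ((div_le_one hm0).2 hcm) hs.2 hs.1 (by norm_num)
        linarith
      have key : 1 - c / m * s ≤ (1 - c) / (1 - m) * (1 - s) := by
        rw [div_mul_eq_mul_div (1 - c), le_div_iff₀ hm1']
        have e : (1 - c) * (1 - s) - (1 - c / m * s) * (1 - m) = (m - c) * (m - s) / m := by
          field_simp; ring
        have : 0 ≤ (m - c) * (m - s) / m := div_nonneg (mul_nonneg (by linarith) (by linarith [hs.2])) hm0.le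
        linarith
      calc (c / m * s) ^ i * (1 - c / m * s) ^ (n - 1 - i)
          ≤ (c / m * s) ^ i * ((1 - c) / (1 - m) * (1 - s)) ^ (n - 1 - i) := by
            gcongr
        _ = _ := by rw [mul_pow, mul_pow]; ring
  rw [intervalIntegral.integral_const_mul] at h2
  have h3 : ∫ s in (0:ℝ)..m, bjF n i s ≤ (bjC n i)⁻¹ := by
    rw [← bj_total n i (by omega), ← intervalIntegral.integral_add_adjacent_intervals (bjF_intble n i 0 m) (bjF_intble n i m 1)]
    have : 0 ≤ ∫ s in m..1, bjF n i s := by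
      apply intervalIntegral.integral_nonneg hm1.le
      intro s hs
      exact bjF_nonneg n i (by linarith [hs.1]) hs.2
    linarith
  rw [← bjS_eq n i (by omega), h1]
  have hC := bjC_pos n i
  calc bjC n i * (c / m * ∫ s in (0:ℝ)..m, bjF n i (c / m * s))
      ≤ bjC n i * (c / m * ((c/m)^i * ((1 - c) / (1 - m)) ^ (n - 1 - i) * (bjC n i)⁻¹)) := by
        gcongr
        exact h2.trans (mul_le_mul_of_nonneg_left h3 (by positivity))
    _ = _ := by rw [pow_succ]; field_simp

lemma bj_chernoff (n i : ℕ) (hi : i + 1 < n) (m : ℝ) (hm : m = ((i:ℝ) + 1) / n) (κ d V : ℝ)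
    (hκ1 : κ < 1) (hd : 0 < d) (hd1 : d ≤ κ * (m * (1 - m)))
    (hV : V = m * (1 - m) / n) :
    bjS n i (m - d) ≤ Real.exp (-((1 - κ) * (d ^ 2 / (2 * V)))) := by
  obtain ⟨hm0, hm1, e1, e2, hn⟩ := bj_nm n i hi m hm
  have hm1' : 0 < 1 - m := by linarith
  have hmm : 0 < m * (1 - m) := by positivity
  have hdm : d < m := by nlinarith
  refine (bj_chernoff0 n i hi m hm (by linarith) (by linarith)).trans ?_
  have p1 : 0 < (m - d) / m := div_pos (by linarith) hm0
  have p2 : 0 < (1 - (m - d)) / (1 - m) := div_pos (by linarith) hm1'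
  rw [← Real.exp_log (show 0 < ((m - d) / m) ^ (i + 1) * ((1 - (m - d)) / (1 - m)) ^ (n - 1 - i) by positivity),
    Real.exp_le_exp, Real.log_mul (by positivity) (by positivity), Real.log_pow, Real.log_pow]
  push_cast
  rw [e1, e2, show (m - d) / m = 1 - d / m by field_simp, show (1 - (m - d)) / (1 - m) = 1 + d / (1 - m) by field_simp; ring]
  have l1 := bj_log_sub (x := d / m) (by positivity) (by rwa [div_lt_one hm0])
  have l2 := bj_log_add (x := d / (1 - m)) (by positivity)
  have b1 := mul_le_mul_of_nonneg_left l1 (show 0 ≤ n * m by positivity)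
  have b2 := mul_le_mul_of_nonneg_left l2 (show 0 ≤ n * (1 - m) by positivity)
  refine (add_le_add b1 b2).trans ?_
  rw [hV]
  have e : -((1 - κ) * (d ^ 2 / (2 * (m * (1 - m) / n)))) - (n * m * (-(d / m) - (d / m) ^ 2 / 2) + n * (1 - m) * (d / (1 - m) - (d / (1 - m)) ^ 2 / 2 + (d / (1 - m)) ^ 3 / 3))
     = n * d ^ 2 / (6 * m * (1 - m) ^ 2) * (3 * κ * (1 - m) - 2 * m * d) := by
    field_simp
    ring
  rw [← sub_nonneg, e]
  apply mul_nonneg (by positivity)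
  have hκ0 : 0 < κ := by
    by_contra h
    nlinarith
  have : m * d ≤ κ * (1 - m) := by
    have : m * d ≤ 1 * d := mul_le_mul_of_nonneg_right hm1.le hd.le
    have h2 : κ * (m * (1 - m)) ≤ κ * (1 - m) := mul_le_mul_of_nonneg_left (by nlinarith) hκ0.le
    linarith
  nlinarith [mul_pos hκ0 hm1']


lemma bj_lowz (n i : ℕ) (hi : i + 1 < n) (m : ℝ) (hm : m = ((i:ℝ) + 1) / n) (Z σ : ℝ)
    (hZ : 2 ≤ Z) (hσ : 0 < σ) (hσV : σ ^ 2 = m * (1 - m) / n) (hA : 16 * Z ^ 2 ≤ n * (m * (1 - m))) :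
    Real.exp (-(4 / 3 * Z * (Z + 2))) / (96 * Z) ≤ bjS n i (m - Z * σ) := by
  obtain ⟨hm0, hm1, e1, e2, hn⟩ := bj_nm n i hi m hm
  have hm1' : 0 < 1 - m := by linarith
  have hq : 0 < m * (1 - m) := by positivity
  have hZ0 : 0 < Z := by linarith
  have hZσ : 0 < Z * σ := by positivity
  have hd1 : Z * σ ≤ 1 / 4 * (m * (1 - m)) := by
    apply le_of_sq_le_sq _ (by positivity)
    rw [mul_pow, hσV, mul_div_assoc', div_le_iff₀ hn]
    nlinarith
  have hdm : Z * σ ≤ 1 / 4 * m := by nlinarith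
  have hmill := bj_mills n i hi m hm (1/2) (Z * σ) (σ ^ 2) (3 * Z / σ) (by norm_num) (by norm_num)
    hZσ (by linarith) hσV (by field_simp; norm_num)
  have hexp : Real.exp (-(3 * Z / σ * (1 / 2 * (Z * σ)))) ≤ 1 / 2 := by
    have e : 3 * Z / σ * (1 / 2 * (Z * σ)) = 3 / 2 * Z ^ 2 := by field_simp
    rw [e, Real.exp_neg]
    rw [show (1:ℝ)/2 = 2⁻¹ by norm_num]
    apply inv_anti₀ (by norm_num)
    have := Real.add_one_le_exp (3 / 2 * Z ^ 2)
    nlinarith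
  set c := m - Z * σ with hc
  have hc0 : 3 / 4 * m ≤ c := by linarith
  have hc0' : 0 < c := by linarith
  have hc1 : c < 1 := by linarith
  have hfc : 0 < bjF n i c := bjF_pos n i hc0' hc1
  have L1 : bjF n i c * (σ / (6 * Z)) ≤ ∫ s in (0:ℝ)..c, bjF n i s := by
    refine le_trans ?_ hmill
    apply mul_le_mul_of_nonneg_left _ hfc.le
    calc σ / (6 * Z) = (1 - 1/2) / (3 * Z / σ) := by field_simp; norm_num
      _ ≤ _ := by gcongr
  -- upper bound on the total
  have h2σ : 2 * σ ≤ Z * σ := mul_le_mul_of_nonneg_right hZ hσ.le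
  have hZσ2 : Z * σ < 1 - m := by nlinarith
  have hwin := bj_window n i hi m hm (2 * σ) (by positivity) (by linarith) (by linarith)
  have e3 : 1 - 3 * (m * (1 - m) / n) / (2 * σ) ^ 2 = 1 / 4 := by
    rw [← hσV]; field_simp; norm_num
  rw [e3] at hwin
  have hR : n * (m - c) / (c * (1 - c)) ≤ 4 / 3 * Z / σ := by
    have a : n * (m - c) / (c * (1 - c)) ≤ n * (Z * σ) / (3 / 4 * m * (1 - m)) := by
      have : m - c = Z * σ := by rw [hc]; ring
      rw [this]
      apply div_le_div_of_nonneg_left (by positivity) (by positivity)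
      exact mul_le_mul hc0 (by linarith) hm1'.le hc0'.le
    refine a.trans (le_of_eq ?_)
    have : m * (1 - m) = n * σ ^ 2 := by rw [hσV]; field_simp
    rw [mul_assoc, this]
    field_simp
  have L2 : ∫ s in (m - 2 * σ)..(m + 2 * σ), bjF n i s ≤ 4 * σ * (bjF n i c * Real.exp (4 / 3 * Z * (Z + 2))) := by
    have : ∫ s in (m - 2 * σ)..(m + 2 * σ), bjF n i s ≤ ∫ s in (m - 2 * σ)..(m + 2 * σ), (bjF n i c * Real.exp (4 / 3 * Z * (Z + 2))) := by
      apply intervalIntegral.integral_mono_on (by linarith) (bjF_intble _ _ _ _) (by simp)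
      intro s hs
      have hcs : c ≤ s := by linarith [hs.1]
      refine (bj_upper n i hi m hm hc0' hcs (by linarith [hs.2])).trans ?_
      apply mul_le_mul_of_nonneg_left _ hfc.le
      rw [Real.exp_le_exp]
      have : s - c ≤ (Z + 2) * σ := by linarith [hs.2]
      calc (s - c) * (n * (m - c) / (c * (1 - c))) ≤ ((Z + 2) * σ) * (4 / 3 * Z / σ) := by
            apply mul_le_mul this hR _ (by positivity)
            apply div_nonneg
            · apply mul_nonneg hn.le; linarith
            · apply mul_nonneg hc0'.le; linarith
        _ = _ := by field_simp
    refine this.trans (le_of_eq ?_)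
    rw [intervalIntegral.integral_const, smul_eq_mul]; ring
  rw [bj_total n i (by omega)] at hwin
  rw [← bjS_eq n i (by omega)]
  have hC := bjC_pos n i
  have L3 : 1 ≤ bjC n i * (16 * σ * (bjF n i c * Real.exp (4 / 3 * Z * (Z + 2)))) := by
    have : (bjC n i)⁻¹ ≤ 16 * σ * (bjF n i c * Real.exp (4 / 3 * Z * (Z + 2))) := by linarith
    rwa [inv_le_iff_one_le_mul₀' hC] at this
  rw [Real.exp_neg]
  calc (Real.exp (4 / 3 * Z * (Z + 2)))⁻¹ / (96 * Z) = (Real.exp (4 / 3 * Z * (Z + 2)))⁻¹ / (96 * Z) * 1 := by ring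
    _ ≤ (Real.exp (4 / 3 * Z * (Z + 2)))⁻¹ / (96 * Z) * (bjC n i * (16 * σ * (bjF n i c * Real.exp (4 / 3 * Z * (Z + 2))))) := by gcongr
    _ = bjC n i * (bjF n i c * (σ / (6 * Z))) := by field_simp; norm_num
    _ ≤ _ := by gcongr

lemma bj_Mbound (n i : ℕ) (hi : i + 1 < n) (m : ℝ) (hm : m = ((i:ℝ) + 1) / n) (κ d V : ℝ)
    (hκ : 0 < κ) (hκ1 : κ ≤ 1 / 2) (hd : 0 < d) (hd1 : d ≤ κ / 2 * (m * (1 - m)))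
    (hV : V = m * (1 - m) / n) (hdV : 4 / κ ^ 3 * V ≤ d ^ 2) :
    (1 - κ) ^ 3 / (1 + κ) ^ 2 * (V / d ^ 2) ≤
      bjS n i (m - d) * ((∫ s in (m - κ * d)..(m + κ * d), bjF n i s) / (bjF n i (m - d) * ((1 + κ) * d))) := by
  obtain ⟨hm0, hm1, e1, e2, hn⟩ := bj_nm n i hi m hm
  have hm1' : 0 < 1 - m := by linarith
  have hq : 0 < m * (1 - m) := by positivity
  have hVpos : 0 < V := by rw [hV]; positivity
  have hdm : d ≤ 1 / 4 * m := by nlinarith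
  have hdm' : d ≤ 1 / 4 * (1 - m) := by nlinarith
  have hκd : κ * d ≤ d := by nlinarith
  have hc0 : 0 < m - d := by linarith
  have hfc : 0 < bjF n i (m - d) := bjF_pos n i hc0 (by linarith)
  have h1κ : 0 < 1 - κ := by linarith
  set R := (1 + κ) * d / ((1 - κ) * V) with hR
  have hRpos : 0 < R := by positivity
  have hmill := bj_mills n i hi m hm κ d V R hκ (by linarith) hd hd1 hV hR
  have hwin := bj_window n i hi m hm (κ * d) (by positivity) (by linarith) (by linarith)
  rw [bj_total n i (by omega), ← hV] at hwin
  have hdV' : 4 * V ≤ κ ^ 3 * d ^ 2 := by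
    rw [div_mul_eq_mul_div, div_le_iff₀ (by positivity)] at hdV; linarith
  have k1 : 1 - κ ≤ 1 - 3 * V / (κ * d) ^ 2 := by
    have : 3 * V / (κ * d) ^ 2 ≤ κ := by
      rw [div_le_iff₀ (by positivity)]
      nlinarith
    linarith
  have k2 : 1 - κ ≤ 1 - Real.exp (-(R * (κ * d))) := by
    have a : 4 / κ ^ 2 ≤ R * (κ * d) := by
      have : 4 / κ ^ 2 ≤ κ * d ^ 2 / V := by
        rw [div_le_div_iff₀ (by positivity) hVpos]; nlinarith
      refine this.trans ?_
      rw [hR]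
      have e : (1 + κ) * d / ((1 - κ) * V) * (κ * d) = (1 + κ) / (1 - κ) * (κ * d ^ 2 / V) := by field_simp
      rw [e]
      have : 1 ≤ (1 + κ) / (1 - κ) := by rw [le_div_iff₀ h1κ]; linarith
      exact le_mul_of_one_le_left (by positivity) this
    have b : Real.exp (-(R * (κ * d))) ≤ κ := by
      rw [Real.exp_neg]
      have h1 := Real.add_one_le_exp (R * (κ * d))
      rw [inv_le_iff_one_le_mul₀ (Real.exp_pos _)]
      have h2 : 4 / κ ^ 2 * κ ≤ Real.exp (R * (κ * d)) * κ := by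
        apply mul_le_mul_of_nonneg_right _ hκ.le; linarith
      have h3 : 4 / κ ^ 2 * κ = 4 / κ := by field_simp
      have h4 : 1 ≤ 4 / κ := by rw [le_div_iff₀ hκ]; linarith
      linarith
    linarith
  have hC := bjC_pos n i
  rw [← bjS_eq n i (by omega)]
  have A1 : bjF n i (m - d) * ((1 - κ) / R) ≤ ∫ s in (0:ℝ)..(m - d), bjF n i s :=
    le_trans (by gcongr) hmill
  have A2 : (1 - κ) * (bjC n i)⁻¹ ≤ ∫ s in (m - κ * d)..(m + κ * d), bjF n i s :=
    le_trans (by gcongr) hwin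
  calc (1 - κ) ^ 3 / (1 + κ) ^ 2 * (V / d ^ 2)
      = bjC n i * (bjF n i (m - d) * ((1 - κ) / R)) * (((1 - κ) * (bjC n i)⁻¹) / (bjF n i (m - d) * ((1 + κ) * d))) := by
        rw [hR]; field_simp
    _ ≤ _ := by
        gcongr
        exact mul_nonneg hC.le (le_trans (by positivity) A1)

/-- likelihood ratio of the uniform law on `[0, 1/(1+θ)]` against the uniform law, on the event that
exactly `i+1` points are below `c` -/
noncomputable def bjL (n i : ℕ) (c θ : ℝ) : ℝ :=
  (1 + θ) ^ (i + 1) * (max 0 (1 - (1 + θ) * c) / (1 - c)) ^ (n - 1 - i)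

lemma bjL_nonneg (n i : ℕ) (c θ : ℝ) (hc : c < 1) (hθ : 0 ≤ θ) : 0 ≤ bjL n i c θ := by
  unfold bjL
  have : 0 < 1 - c := by linarith
  positivity

lemma bjL_cont (n i : ℕ) (c : ℝ) : Continuous (bjL n i c) := by
  unfold bjL; fun_prop

lemma bj_theta (n i : ℕ) (c m κ d θ0 θ1 : ℝ) (hc : 0 < c) (hc1 : c < 1) (hcd : c = m - d)
    (hκ : 0 < κ) (hd : 0 < d) (hm : m + κ * d ≤ 1)
    (h0 : 0 < θ0) (h0' : θ0 ≤ (1 - κ) * d / c) (h1 : (1 + κ) * d / c ≤ θ1) :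
    (∫ s in (m - κ * d)..(m + κ * d), bjF n i s) / (bjF n i c * ((1 + κ) * d)) ≤
      ∫ θ in θ0..θ1, bjL n i c θ * θ⁻¹ := by
  have hc1' : 0 < 1 - c := by linarith
  have hfc : 0 < bjF n i c := bjF_pos n i hc hc1
  have hab : (1 - κ) * d / c ≤ (1 + κ) * d / c := by gcongr; linarith
  have hIntg : ∀ a b, 0 < a → a ≤ b → IntervalIntegrable (fun θ => bjL n i c θ * θ⁻¹) volume a b := by
    intro a b ha hb
    apply ContinuousOn.intervalIntegrable
    intro x hx
    rw [uIcc_of_le hb] at hx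
    have hx0 : x ≠ 0 := by linarith [hx.1]
    exact ((bjL_cont n i c).continuousAt.mul (continuousAt_inv₀ hx0)).continuousWithinAt
  have hpos : 0 < (1 - κ) * d / c := h0.trans_le h0'
  have M : ∫ θ in ((1 - κ) * d / c)..((1 + κ) * d / c), bjL n i c θ * θ⁻¹ ≤ ∫ θ in θ0..θ1, bjL n i c θ * θ⁻¹ := by
    apply intervalIntegral.integral_mono_interval h0' hab h1
    · rw [EventuallyLE, ae_restrict_iff' measurableSet_Ioc]
      refine Filter.Eventually.of_forall fun θ hθ => ?_
      have : 0 < θ := h0.trans hθ.1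
      exact mul_nonneg (bjL_nonneg n i c θ hc1 this.le) (by positivity)
    · exact hIntg _ _ h0 (h0'.trans (hab.trans h1))
  refine le_trans ?_ M
  have hsub := intervalIntegral.integral_comp_add_mul (a := (1 - κ) * d / c) (b := (1 + κ) * d / c) (fun t => bjF n i t) hc.ne' c
  have e1 : c + c * ((1 - κ) * d / c) = m - κ * d := by rw [mul_div_cancel₀ _ hc.ne', hcd]; ring
  have e2 : c + c * ((1 + κ) * d / c) = m + κ * d := by rw [mul_div_cancel₀ _ hc.ne', hcd]; ring
  rw [e1, e2, smul_eq_mul] at hsub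
  have e3 : ∫ s in (m - κ * d)..(m + κ * d), bjF n i s = c * ∫ x in ((1 - κ) * d / c)..((1 + κ) * d / c), bjF n i (c + c * x) := by
    rw [hsub]; field_simp
  have e4 : (∫ s in (m - κ * d)..(m + κ * d), bjF n i s) / (bjF n i c * ((1 + κ) * d)) =
      ∫ x in ((1 - κ) * d / c)..((1 + κ) * d / c), c / (bjF n i c * ((1 + κ) * d)) * bjF n i (c + c * x) := by
    rw [intervalIntegral.integral_const_mul, e3]; ring
  rw [e4]
  apply intervalIntegral.integral_mono_on hab
  · apply Continuous.intervalIntegrable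
    have := bjF_cont n i
    fun_prop
  · exact hIntg _ _ hpos hab
  intro θ hθ
  have hθ0 : 0 < θ := hpos.trans_le hθ.1
  have hθ1 : c * θ ≤ (1 + κ) * d := by
    have := hθ.2; rw [le_div_iff₀ hc] at this; linarith
  have hle : 0 ≤ 1 - (1 + θ) * c := by nlinarith
  unfold bjL
  rw [max_eq_right hle]
  have e5 : bjF n i (c + c * θ) = bjF n i c * ((1 + θ) ^ i * ((1 - (1 + θ) * c) / (1 - c)) ^ (n - 1 - i)) := by
    unfold bjF
    rw [show c + c * θ = c * (1 + θ) by ring, mul_pow, div_pow, show 1 - (1 + θ) * c = 1 - c * (1 + θ) by ring]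
    field_simp
  rw [e5]
  have e6 : c / (bjF n i c * ((1 + κ) * d)) * (bjF n i c * ((1 + θ) ^ i * ((1 - (1 + θ) * c) / (1 - c)) ^ (n - 1 - i)))
     = ((1 + θ) ^ i * ((1 - (1 + θ) * c) / (1 - c)) ^ (n - 1 - i)) * (c / ((1 + κ) * d)) := by
    field_simp
  rw [e6]
  apply mul_le_mul
  · apply mul_le_mul_of_nonneg_right _ (by positivity)
    exact pow_le_pow_right₀ (by linarith) (by omega)
  · rw [div_le_iff₀ (by positivity), inv_mul_eq_div, le_div_iff₀ hθ0]; exact hθ1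
  · positivity
  · positivity


/-- number of sample points strictly below `c` -/
noncomputable def bjCnt {n : ℕ} (u : Fin n → ℝ) (c : ℝ) : ℕ := by
  classical exact (Finset.univ.filter (fun j => u j < c)).card

lemma bjCnt_sum {n : ℕ} (u : Fin n → ℝ) (c : ℝ) :
    bjCnt u c = ∑ j, (Iio c).indicator (fun _ => (1:ℕ)) (u j) := by
  classical
  unfold bjCnt
  rw [Finset.card_filter]
  refine Finset.sum_congr rfl fun j _ => ?_
  by_cases h : u j < c <;> simp [h]

lemma bjCnt_meas {n : ℕ} (c : ℝ) : Measurable (fun u : Fin n → ℝ => bjCnt u c) := by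
  simp_rw [bjCnt_sum]
  apply Finset.measurable_sum
  intro j _
  exact (measurable_const.indicator measurableSet_Iio).comp (measurable_pi_apply j)

lemma bjCnt_anti {n : ℕ} (c : ℝ) {u v : Fin n → ℝ} (h : u ≤ v) : bjCnt v c ≤ bjCnt u c := by
  classical
  unfold bjCnt
  apply Finset.card_le_card
  intro j; simp
  exact fun hj => (h j).trans_lt hj

lemma bjCnt_order {n : ℕ} (u : Fin n → ℝ) (c : ℝ) (i : Fin n) (h : bjCnt u c ≤ i) :
    c ≤ orderStat u i := by
  classical
  by_contra hlt
  push Not at hlt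
  unfold orderStat at hlt
  have hsub : (Finset.Iic i).map (Tuple.sort u).toEmbedding ⊆ Finset.univ.filter (fun j => u j < c) := by
    intro j hj
    simp only [Finset.mem_map, Finset.mem_Iic, Equiv.coe_toEmbedding] at hj
    obtain ⟨k, hk, rfl⟩ := hj
    simp only [Finset.mem_filter, Finset.mem_univ, true_and]
    exact (Tuple.monotone_sort u hk).trans_lt hlt
  have := Finset.card_le_card hsub
  rw [Finset.card_map, Fin.card_Iic] at this
  unfold bjCnt at h
  omega

noncomputable def bjMu : Measure ℝ := volume.restrict (Icc (0:ℝ) 1)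

instance bjMu_prob : IsProbabilityMeasure bjMu := ⟨by simp [bjMu]⟩

instance bjNull_prob (n : ℕ) : IsProbabilityMeasure (nullMeasure n) := by
  have : nullMeasure n = Measure.pi fun _ => bjMu := rfl
  rw [this]; infer_instance

lemma bjMu_Iio {c : ℝ} (h1 : c ≤ 1) : bjMu (Iio c) = ENNReal.ofReal c := by
  unfold bjMu
  rw [Measure.restrict_apply measurableSet_Iio]
  have : Iio c ∩ Icc 0 1 = Ico 0 c := by ext x; simp; constructor
                                         · intro h; exact ⟨h.2.1, h.1⟩
                                         · intro h; exact ⟨h.2, h.1, by linarith⟩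
  rw [this, Real.volume_Ico, sub_zero]

lemma bjMu_Iic {c : ℝ} (h1 : c ≤ 1) : bjMu (Iic c) = ENNReal.ofReal c := by
  unfold bjMu
  rw [Measure.restrict_apply measurableSet_Iic]
  have : Iic c ∩ Icc 0 1 = Icc 0 c := by ext x; simp; constructor
                                         · intro h; exact ⟨h.2.1, h.1⟩
                                         · intro h; exact ⟨h.2, h.1, by linarith⟩
  rw [this, Real.volume_Icc, sub_zero]

lemma bjMu_Ici {c : ℝ} (h0 : 0 ≤ c) : bjMu (Ici c) = ENNReal.ofReal (1 - c) := by
  unfold bjMu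
  rw [Measure.restrict_apply measurableSet_Ici]
  have : Ici c ∩ Icc 0 1 = Icc c 1 := by ext x; simp; intro h _; linarith
  rw [this, Real.volume_Icc]

lemma bj_binom (n i : ℕ) {c : ℝ} (h0 : 0 ≤ c) (h1 : c ≤ 1) :
    (nullMeasure n {u | i + 1 ≤ bjCnt u c}).toReal ≤ bjS n i c := by
  classical
  have hc1 : 0 ≤ 1 - c := by linarith
  have hS : 0 ≤ bjS n i c := by unfold bjS; positivity
  apply ENNReal.toReal_le_of_le_ofReal hS
  let box : Finset (Fin n) → Set (Fin n → ℝ) := fun S => univ.pi (fun j => if j ∈ S then Iio c else Ici c)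
  have hsub : {u : Fin n → ℝ | i + 1 ≤ bjCnt u c} ⊆ ⋃ S ∈ (Finset.univ : Finset (Fin n)).powerset.filter (fun S => i + 1 ≤ S.card), box S := by
    intro u hu
    simp only [mem_iUnion]
    refine ⟨Finset.univ.filter (fun j => u j < c), ?_, ?_⟩
    · simp; unfold bjCnt at hu; exact hu
    · intro j _
      by_cases h : u j < c
      · simp [h]
      · simp [h]; linarith
  refine (measure_mono hsub).trans ((measure_biUnion_finset_le _ _).trans ?_)
  have hbox : ∀ S, nullMeasure n (box S) = ENNReal.ofReal (c ^ S.card * (1 - c) ^ (n - S.card)) := by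
    intro S
    have : nullMeasure n = Measure.pi fun _ => bjMu := rfl
    rw [this, Measure.pi_pi]
    have e : ∀ j, bjMu (if j ∈ S then Iio c else Ici c) = ENNReal.ofReal (if j ∈ S then c else 1 - c) := by
      intro j
      by_cases h : j ∈ S <;> simp [h, bjMu_Iio h1, bjMu_Ici h0]
    simp_rw [e]
    rw [← ENNReal.ofReal_prod_of_nonneg]
    · congr 1
      rw [Finset.prod_ite]
      simp only [Finset.prod_const]
      congr 2
      · congr 1; ext; simp
      · rw [show (Finset.univ.filter (fun j => j ∉ S)) = Sᶜ by ext; simp, Finset.card_compl, Fintype.card_fin]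
    · intro j _; split_ifs <;> assumption
  simp_rw [hbox]
  rw [← ENNReal.ofReal_sum_of_nonneg (fun S _ => by positivity)]
  apply ENNReal.ofReal_le_ofReal
  rw [Finset.sum_filter]
  have := Finset.sum_powerset_apply_card (x := (Finset.univ : Finset (Fin n))) (fun k => if i + 1 ≤ k then c ^ k * (1 - c) ^ (n - k) else 0)
  rw [this, Finset.card_univ, Fintype.card_fin]
  unfold bjS
  simp only [nsmul_eq_mul, mul_ite, mul_zero]
  rw [← Finset.sum_filter]
  apply le_of_eq
  apply Finset.sum_congr
  · ext k; simp; omega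
  · intros; ring

/-! ### Harris inequality -/

lemma bj_cheb1 (μ : Measure ℝ) [IsProbabilityMeasure μ] (F G : ℝ → ℝ) (hF : Monotone F) (hG : Monotone G)
    (hFi : Integrable F μ) (hGi : Integrable G μ) (hFG : Integrable (fun t => F t * G t) μ) :
    (∫ t, F t ∂μ) * (∫ t, G t ∂μ) ≤ ∫ t, F t * G t ∂μ := by
  have h1 : ∀ s, ∫ t, (F s - F t) * (G s - G t) ∂μ = F s * G s - F s * (∫ t, G t ∂μ) - G s * (∫ t, F t ∂μ) + ∫ t, F t * G t ∂μ := by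
    intro s
    have e : (fun t => (F s - F t) * (G s - G t)) = fun t => F s * G s - F s * G t - G s * F t + F t * G t := by
      ext t; ring
    rw [e, integral_add _ hFG, integral_sub _ (hFi.const_mul _), integral_sub (integrable_const _) (hGi.const_mul _), integral_const_mul, integral_const_mul]
    · simp [integral_const_mul]
    · exact (integrable_const _).sub (hGi.const_mul _)
    · exact ((integrable_const _).sub (hGi.const_mul _)).sub (hFi.const_mul _)
  have h2 : 0 ≤ ∫ s, ∫ t, (F s - F t) * (G s - G t) ∂μ ∂μ := by
    apply integral_nonneg; intro s
    apply integral_nonneg; intro t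
    change 0 ≤ (F s - F t) * (G s - G t)
    rcases le_total s t with h | h
    · exact mul_nonneg_of_nonpos_of_nonpos (by linarith [hF h]) (by linarith [hG h])
    · exact mul_nonneg (by linarith [hF h]) (by linarith [hG h])
  simp_rw [h1] at h2
  rw [integral_add _ (integrable_const _), integral_sub _ (hGi.mul_const _), integral_sub hFG (hFi.mul_const _), integral_mul_const, integral_mul_const] at h2
  · simp at h2; linarith
  · exact hFG.sub (hFi.mul_const _)
  · exact (hFG.sub (hFi.mul_const _)).sub (hGi.mul_const _)


lemma bj_bdd_int {α : Type*} [MeasurableSpace α] (μ : Measure α) [IsProbabilityMeasure μ] (f : α → ℝ)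
    (hf : Measurable f) (h : ∀ u, f u ∈ Icc (0:ℝ) 1) : Integrable f μ := by
  refine Integrable.of_bound hf.aestronglyMeasurable 1 (Eventually.of_forall fun u => ?_)
  rw [Real.norm_eq_abs, abs_of_nonneg (h u).1]; exact (h u).2

lemma bj_cons_meas (n : ℕ) : Measurable (fun z : ℝ × (Fin n → ℝ) => (Fin.cons z.1 z.2 : Fin (n+1) → ℝ)) := by
  rw [measurable_pi_iff]
  intro j
  refine Fin.cases ?_ (fun k => ?_) j
  · simpa using measurable_fst
  · simp only [Fin.cons_succ]; exact (measurable_pi_apply k).comp measurable_snd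

lemma bj_pi_succ (μ : Measure ℝ) [IsProbabilityMeasure μ] (n : ℕ) (f : (Fin (n+1) → ℝ) → ℝ)
    (hf : Measurable f) (h : ∀ u, f u ∈ Icc (0:ℝ) 1) :
    ∫ u, f u ∂(Measure.pi fun _ : Fin (n+1) => μ) = ∫ t, ∫ w, f (Fin.cons t w) ∂(Measure.pi fun _ : Fin n => μ) ∂μ := by
  have := ((measurePreserving_piFinSuccAbove (fun _ : Fin (n+1) => μ) 0).symm).integral_comp' f
  rw [← this]
  have e : ∀ z, (MeasurableEquiv.piFinSuccAbove (fun _ : Fin (n+1) => ℝ) 0).symm z = Fin.cons z.1 z.2 := by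
    intro z
    simp [MeasurableEquiv.piFinSuccAbove_symm_apply, Fin.insertNthEquiv]
  simp_rw [e]
  rw [integral_prod]
  exact bj_bdd_int _ _ (hf.comp (bj_cons_meas n)) (fun z => h _)

lemma bj_harris (μ : Measure ℝ) [IsProbabilityMeasure μ] : ∀ (n : ℕ) (f g : (Fin n → ℝ) → ℝ), Measurable f → Measurable g →
    Monotone f → Monotone g → (∀ u, f u ∈ Icc (0:ℝ) 1) → (∀ u, g u ∈ Icc (0:ℝ) 1) →
    (∫ u, f u ∂(Measure.pi fun _ : Fin n => μ)) * (∫ u, g u ∂(Measure.pi fun _ : Fin n => μ)) ≤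
      ∫ u, f u * g u ∂(Measure.pi fun _ : Fin n => μ) := by
  intro n
  induction n with
  | zero =>
    intro f g hf hg _ _ _ _
    rw [Measure.pi_of_empty _ isEmptyElim]
    simp
  | succ n ih =>
    intro f g hf hg mf mg bf bg
    have bfg : ∀ u, f u * g u ∈ Icc (0:ℝ) 1 := fun u => ⟨mul_nonneg (bf u).1 (bg u).1, mul_le_one₀ (bf u).2 (bg u).1 (bg u).2⟩
    rw [bj_pi_succ μ n f hf bf, bj_pi_succ μ n g hg bg, bj_pi_succ μ n (fun u => f u * g u) (hf.mul hg) bfg]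
    have msec : ∀ (f : (Fin (n+1) → ℝ) → ℝ), Measurable f → ∀ t : ℝ, Measurable (fun w : Fin n → ℝ => f (Fin.cons t w)) := by
      intro f hf t
      exact (hf.comp (bj_cons_meas n)).comp (measurable_const.prodMk measurable_id)
    have mono : ∀ (f : (Fin (n+1) → ℝ) → ℝ), Measurable f → Monotone f → (∀ u, f u ∈ Icc (0:ℝ) 1) →
        Monotone (fun t => ∫ w, f (Fin.cons t w) ∂(Measure.pi fun _ : Fin n => μ)) := by
      intro f hf mf bf s t hst
      apply integral_mono (bj_bdd_int _ _ (msec f hf s) (fun _ => bf _)) (bj_bdd_int _ _ (msec f hf t) (fun _ => bf _))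
      intro w
      apply mf
      intro j
      refine Fin.cases ?_ (fun k => ?_) j <;> simp [hst]
    have bd : ∀ (f : (Fin (n+1) → ℝ) → ℝ), Measurable f → (∀ u, f u ∈ Icc (0:ℝ) 1) →
        ∀ t : ℝ, (∫ w, f (Fin.cons t w) ∂(Measure.pi fun _ : Fin n => μ)) ∈ Icc (0:ℝ) 1 := by
      intro f hf bf t
      refine ⟨integral_nonneg fun w => (bf _).1, ?_⟩
      calc _ ≤ ∫ w, (1:ℝ) ∂(Measure.pi fun _ : Fin n => μ) := integral_mono (bj_bdd_int _ _ (msec f hf t) (fun _ => bf _)) (integrable_const _) (fun w => (bf _).2)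
        _ = 1 := by simp
    have mF := mono f hf mf bf
    have mG := mono g hg mg bg
    have iF := bj_bdd_int μ _ mF.measurable (bd f hf bf)
    have iG := bj_bdd_int μ _ mG.measurable (bd g hg bg)
    have iFG := bj_bdd_int μ _ (mF.measurable.mul mG.measurable) (fun t => ⟨mul_nonneg (bd f hf bf t).1 (bd g hg bg t).1, mul_le_one₀ (bd f hf bf t).2 (bd g hg bg t).1 (bd g hg bg t).2⟩)
    refine (bj_cheb1 μ _ _ mF mG iF iG iFG).trans ?_
    apply integral_mono iFG
    · refine bj_bdd_int μ _ ?_ (bd (fun u => f u * g u) (hf.mul hg) bfg)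
      exact (mono (fun u => f u * g u) (hf.mul hg) (fun u v h => mul_le_mul (mf h) (mg h) (bg u).1 (bf v).1) bfg).measurable
    · intro t
      exact ih _ _ (msec f hf t) (msec g hg t)
        (fun w w' h => mf (by intro j; refine Fin.cases ?_ (fun k => ?_) j <;> simp [h _]))
        (fun w w' h => mg (by intro j; refine Fin.cases ?_ (fun k => ?_) j <;> simp [h _])) (fun _ => bf _) (fun _ => bg _)

lemma bj_harris_set (n : ℕ) (A B : Set (Fin n → ℝ)) (hA : MeasurableSet A) (hB : MeasurableSet B)
    (uA : IsUpperSet A) (uB : IsUpperSet B) :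
    (nullMeasure n A).toReal * (nullMeasure n B).toReal ≤ (nullMeasure n (A ∩ B)).toReal := by
  have key : ∀ A : Set (Fin n → ℝ), MeasurableSet A → ∫ u, A.indicator (fun _ => (1:ℝ)) u ∂(nullMeasure n) = (nullMeasure n A).toReal := by
    intro A hA
    rw [integral_indicator hA]; simp [Measure.real]
  have mon : ∀ A : Set (Fin n → ℝ), IsUpperSet A → Monotone (A.indicator (fun _ => (1:ℝ))) := by
    intro A uA u v h
    by_cases hu : u ∈ A
    · simp [hu, uA h hu]
    · simp only [hu, not_false_eq_true, indicator_of_notMem]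
      exact indicator_nonneg (fun _ _ => zero_le_one) _
  have bd : ∀ (A : Set (Fin n → ℝ)) u, A.indicator (fun _ => (1:ℝ)) u ∈ Icc (0:ℝ) 1 := by
    intro A u
    by_cases hu : u ∈ A <;> simp [hu]
  have := bj_harris bjMu n _ _ (measurable_const.indicator hA) (measurable_const.indicator hB) (mon A uA) (mon B uB) (bd A) (bd B)
  change (∫ u, _ ∂(nullMeasure n)) * (∫ u, _ ∂(nullMeasure n)) ≤ ∫ u, _ ∂(nullMeasure n) at this
  rw [key A hA, key B hB] at this
  have e : (fun u => A.indicator (fun _ => (1:ℝ)) u * B.indicator (fun _ => (1:ℝ)) u) = (A ∩ B).indicator (fun _ => (1:ℝ)) := by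
    ext u
    by_cases hu : u ∈ A <;> by_cases hv : u ∈ B <;> simp [hu, hv]
  rw [e, key _ (hA.inter hB)] at this
  exact this

/-- Intersections of K measurable upper sets each of probability at least p -/
lemma bj_harris_blocks (n K : ℕ) (A : ℕ → Set (Fin n → ℝ)) (hA : ∀ k, MeasurableSet (A k)) (uA : ∀ k, IsUpperSet (A k))
    (p : ℝ) (hp : 0 ≤ p) (h : ∀ k < K, p ≤ (nullMeasure n (A k)).toReal) :
    p ^ K ≤ (nullMeasure n {u | ∀ k < K, u ∈ A k}).toReal := by
  induction K with
  | zero => simp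
  | succ K ih =>
    have e : {u | ∀ k < K + 1, u ∈ A k} = {u | ∀ k < K, u ∈ A k} ∩ A K := by
      ext u
      constructor
      · intro h; exact ⟨fun k hk => h k (Nat.lt_succ_of_lt hk), h K (Nat.lt_succ_self K)⟩
      · rintro ⟨h1, h2⟩ k hk
        rcases Nat.lt_succ_iff_lt_or_eq.1 hk with hk | hk
        · exact h1 k hk
        · rw [hk]; exact h2
    have m : MeasurableSet {u : Fin n → ℝ | ∀ k < K, u ∈ A k} := by
      have : {u : Fin n → ℝ | ∀ k < K, u ∈ A k} = ⋂ k ∈ Finset.range K, A k := by ext; simp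
      rw [this]; exact Finset.measurableSet_biInter _ fun k _ => hA k
    rw [e, pow_succ]
    refine le_trans ?_ (bj_harris_set n _ _ m (hA K) ?_ (uA K))
    · exact mul_le_mul (ih fun k hk => h k (by omega)) (h K (by omega)) hp ENNReal.toReal_nonneg
    · intro u v huv hu k hk
      exact uA k huv (hu k hk)


noncomputable def bjNu (l : ℝ) : Measure ℝ := ENNReal.ofReal l • volume.restrict (Icc (0:ℝ) l⁻¹)

lemma bjNu_prob {l : ℝ} (hl : 0 < l) : IsProbabilityMeasure (bjNu l) := by
  constructor
  simp [bjNu]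
  rw [← ENNReal.ofReal_mul hl.le, mul_inv_cancel₀ hl.ne', ENNReal.ofReal_one]

noncomputable def bjEll (l c : ℝ) (x : ℝ) : ENNReal :=
  if x < c then ENNReal.ofReal l else ENNReal.ofReal ((1 - l * c) / (1 - c))

lemma bjEll_meas (l c : ℝ) : Measurable (bjEll l c) := by
  unfold bjEll
  exact Measurable.ite measurableSet_Iio measurable_const measurable_const

lemma bjNu_Iic {l a : ℝ} (hl : 0 < l) (h : a ≤ l⁻¹) : bjNu l (Iic a) = ENNReal.ofReal l * ENNReal.ofReal a := by
  unfold bjNu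
  rw [Measure.smul_apply, Measure.restrict_apply measurableSet_Iic]
  have : Iic a ∩ Icc 0 l⁻¹ = Icc 0 a := by
    ext x; simp only [mem_inter_iff, mem_Iic, mem_Icc]; constructor
    · intro h; exact ⟨h.2.1, h.1⟩
    · intro h'; exact ⟨h'.2, h'.1, h'.2.trans h⟩
  rw [this, Real.volume_Icc, sub_zero, smul_eq_mul]

lemma bj_map1 {l c : ℝ} (hl : 1 ≤ l) (hc : 0 < c) (hc1 : c < 1) (hlc : l * c ≤ 1) :
    (bjNu l).map (fun x => min x c) = (bjMu.withDensity (bjEll l c)).map (fun x => min x c) := by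
  have hl0 : 0 < l := by linarith
  have := bjNu_prob hl0
  have mm : Measurable (fun x : ℝ => min x c) := measurable_id.min measurable_const
  have : IsProbabilityMeasure ((bjNu l).map (fun x => min x c)) := Measure.isProbabilityMeasure_map mm.aemeasurable
  have h1c : 0 < 1 - c := by linarith
  apply Measure.ext_of_Iic
  intro a
  rw [Measure.map_apply mm measurableSet_Iic, Measure.map_apply mm measurableSet_Iic]
  rcases le_or_gt c a with h | h
  · have e : (fun x : ℝ => min x c) ⁻¹' Iic a = univ := by
      ext x; simp [h]
    rw [e, measure_univ, withDensity_apply _ MeasurableSet.univ, Measure.restrict_univ,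
      ← lintegral_add_compl _ (measurableSet_Iio (a := c))]
    rw [setLIntegral_congr_fun (g := fun _ => ENNReal.ofReal l) measurableSet_Iio (fun x hx => by simp only [bjEll]; exact if_pos hx),
      setLIntegral_congr_fun (g := fun _ => ENNReal.ofReal ((1 - l * c) / (1 - c))) measurableSet_Iio.compl (fun x hx => by simp only [bjEll]; exact if_neg hx)]
    rw [setLIntegral_const, setLIntegral_const, compl_Iio, bjMu_Iio hc1.le, bjMu_Ici hc.le,
      ← ENNReal.ofReal_mul hl0.le, ← ENNReal.ofReal_mul (div_nonneg (by linarith) h1c.le), ← ENNReal.ofReal_add (by positivity)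
      (mul_nonneg (div_nonneg (by linarith) h1c.le) h1c.le), div_mul_cancel₀ _ h1c.ne']
    simp
  · have e : (fun x : ℝ => min x c) ⁻¹' Iic a = Iic a := by
      ext x; simp; intro h'; linarith
    rw [e, withDensity_apply _ measurableSet_Iic]
    rw [setLIntegral_congr_fun (g := fun _ => ENNReal.ofReal l) measurableSet_Iic (fun x hx => by simp only [bjEll]; rw [if_pos (lt_of_le_of_lt hx h)]),
      setLIntegral_const, bjMu_Iic (by linarith), bjNu_Iic hl0]
    rw [inv_eq_one_div, le_div_iff₀ hl0]
    nlinarith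

noncomputable def bjQ (n : ℕ) (l : ℝ) : Measure (Fin n → ℝ) := Measure.pi fun _ => bjNu l

lemma bjQ_prob (n : ℕ) {l : ℝ} (hl : 0 < l) : IsProbabilityMeasure (bjQ n l) := by
  have := bjNu_prob hl
  unfold bjQ; infer_instance

lemma bj_mapn (n : ℕ) {l c : ℝ} (hl : 1 ≤ l) (hc : 0 < c) (hc1 : c < 1) (hlc : l * c ≤ 1) :
    (bjQ n l).map (fun u j => min (u j) c) =
      ((nullMeasure n).withDensity (fun u => ∏ j, bjEll l c (u j))).map (fun u j => min (u j) c) := by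
  have hl0 : 0 < l := by linarith
  have := bjNu_prob hl0
  have mm : Measurable (fun x : ℝ => min x c) := measurable_id.min measurable_const
  have hpr : IsProbabilityMeasure ((bjNu l).map (fun x => min x c)) := Measure.isProbabilityMeasure_map mm.aemeasurable
  have mR : Measurable (fun (u : Fin n → ℝ) j => min (u j) c) := by
    rw [measurable_pi_iff]; intro j; exact mm.comp (measurable_pi_apply j)
  unfold bjQ
  rw [Measure.pi_map_pi (f := fun _ x => min x c) (fun _ => mm.aemeasurable)]
  apply Measure.pi_eq
  intro s hs
  rw [Measure.map_apply mR (MeasurableSet.univ_pi hs)]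
  have e : (fun (u : Fin n → ℝ) j => min (u j) c) ⁻¹' (univ.pi s) = univ.pi (fun j => (fun x => min x c) ⁻¹' (s j)) := by
    ext u; simp
  have ms : ∀ j, MeasurableSet ((fun x => min x c) ⁻¹' (s j)) := fun j => mm (hs j)
  rw [e, withDensity_apply _ (MeasurableSet.univ_pi ms), ← lintegral_indicator (MeasurableSet.univ_pi ms)]
  have e2 : (univ.pi (fun j => (fun x => min x c) ⁻¹' (s j))).indicator (fun u : Fin n → ℝ => ∏ j, bjEll l c (u j))
      = fun u => ∏ j, ((fun x => min x c) ⁻¹' (s j)).indicator (bjEll l c) (u j) := by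
    ext u
    by_cases hu : u ∈ univ.pi (fun j => (fun x => min x c) ⁻¹' (s j))
    · rw [indicator_of_mem hu]
      apply Finset.prod_congr rfl
      intro j _
      rw [indicator_of_mem (hu j (mem_univ j))]
    · rw [indicator_of_notMem hu]
      simp only [mem_univ_pi, not_forall] at hu
      obtain ⟨j, hj⟩ := hu
      symm
      apply Finset.prod_eq_zero (Finset.mem_univ j)
      rw [indicator_of_notMem hj]
  rw [e2]
  have mX : ∀ j, Measurable (((fun x => min x c) ⁻¹' (s j)).indicator (bjEll l c)) := fun j => (bjEll_meas l c).indicator (ms j)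
  have ind := ProbabilityTheory.iIndepFun_pi (μ := fun _ : Fin n => bjMu) (fun j => (mX j).aemeasurable)
  have := ProbabilityTheory.lintegral_prod_eq_prod_lintegral_of_indepFun Finset.univ _ ind (fun j => (mX j).comp (measurable_pi_apply j))
  change ∫⁻ u, _ ∂(Measure.pi fun _ : Fin n => bjMu) = _
  rw [this]
  apply Finset.prod_congr rfl
  intro j _
  have e3 := (measurePreserving_eval (fun _ : Fin n => bjMu) j).lintegral_comp (mX j)
  change ∫⁻ u, ((fun x => min x c) ⁻¹' (s j)).indicator (bjEll l c) (Function.eval j u) ∂(Measure.pi fun _ : Fin n => bjMu) = _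
  rw [e3, lintegral_indicator (ms j), ← withDensity_apply _ (ms j), ← Measure.map_apply mm (hs j), ← bj_map1 hl hc hc1 hlc]

lemma bjEll_prod {n : ℕ} (l c : ℝ) (u : Fin n → ℝ) : 
    ∏ j, bjEll l c (u j) = ENNReal.ofReal l ^ bjCnt u c * ENNReal.ofReal ((1 - l * c) / (1 - c)) ^ (n - bjCnt u c) := by
  classical
  unfold bjEll bjCnt
  rw [Finset.prod_ite]
  simp only [Finset.prod_const]
  congr 2
  rw [Finset.filter_not, ← Finset.compl_eq_univ_sdiff, Finset.card_compl, Fintype.card_fin]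

lemma bj_change (n i : ℕ) (hi : i + 1 < n) {c θ : ℝ} (hc : 0 < c) (hc1 : c < 1) (hθ : 0 ≤ θ) (T : Set (Fin n → ℝ))
    (hT : MeasurableSet T) (hTc : ∀ u, (fun j => min (u j) c) ∈ T ↔ u ∈ T) (hTi : ∀ u ∈ T, i + 1 ≤ bjCnt u c) :
    bjL n i c θ * (nullMeasure n T).toReal ≤ (bjQ n (1 + θ) T).toReal := by
  have hl : 1 ≤ 1 + θ := by linarith
  have h1c : 0 < 1 - c := by linarith
  rcases le_or_gt ((1 + θ) * c) 1 with hlc | hlc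
  swap
  · have : bjL n i c θ = 0 := by
      unfold bjL
      rw [max_eq_left (by linarith), zero_div, zero_pow (by omega), mul_zero]
    rw [this, zero_mul]; exact ENNReal.toReal_nonneg
  set a := (1 - (1 + θ) * c) / (1 - c) with ha
  have ha0 : 0 ≤ a := div_nonneg (by linarith) h1c.le
  have ha1 : a ≤ 1 := by rw [ha, div_le_one h1c]; nlinarith
  have hL : bjL n i c θ = (1 + θ) ^ (i+1) * a ^ (n - 1 - i) := by
    unfold bjL; rw [max_eq_right (by linarith)]
  have mm : Measurable (fun x : ℝ => min x c) := measurable_id.min measurable_const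
  have mR : Measurable (fun (u : Fin n → ℝ) j => min (u j) c) := by
    rw [measurable_pi_iff]; intro j; exact mm.comp (measurable_pi_apply j)
  have hpre : (fun (u : Fin n → ℝ) j => min (u j) c) ⁻¹' T = T := by ext u; exact hTc u
  have hQ : bjQ n (1 + θ) T = ((nullMeasure n).withDensity (fun u => ∏ j, bjEll (1 + θ) c (u j))) T := by
    have := congrArg (fun m => m T) (bj_mapn n hl hc hc1 hlc)
    simp only [Measure.map_apply mR hT, hpre] at this
    exact this
  have key : ENNReal.ofReal (bjL n i c θ) * nullMeasure n T ≤ bjQ n (1 + θ) T := by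
    rw [hQ, withDensity_apply _ hT, ← setLIntegral_const]
    apply setLIntegral_mono' hT
    intro u hu
    have hN := hTi u hu
    have hNn : bjCnt u c ≤ n := by
      classical
      unfold bjCnt; exact (Finset.card_le_univ _).trans (by simp)
    rw [bjEll_prod, ← ENNReal.ofReal_pow (by linarith), ← ENNReal.ofReal_pow ha0, ← ENNReal.ofReal_mul (by positivity)]
    apply ENNReal.ofReal_le_ofReal
    rw [hL]
    apply mul_le_mul (pow_le_pow_right₀ hl hN) (pow_le_pow_of_le_one ha0 ha1 (by omega)) (by positivity) (by positivity)
  have := bjQ_prob n (l := 1 + θ) (by linarith)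
  have h2 := ENNReal.toReal_mono (measure_ne_top _ _) key
  rw [ENNReal.toReal_mul, ENNReal.toReal_ofReal (by rw [hL]; positivity)] at h2
  exact h2

def bjT (n : ℕ) (B : Finset ℕ) (c : ℕ → ℝ) (i : ℕ) : Set (Fin n → ℝ) :=
  {u | i + 1 ≤ bjCnt u (c i) ∧ ∀ j ∈ B, j < i → bjCnt u (c j) ≤ j}

lemma bjT_meas (n : ℕ) (B : Finset ℕ) (c : ℕ → ℝ) (i : ℕ) : MeasurableSet (bjT n B c i) := by
  have e : bjT n B c i = {u | i + 1 ≤ bjCnt u (c i)} ∩ ⋂ j ∈ B.filter (· < i), {u | bjCnt u (c j) ≤ j} := by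
    ext u; simp [bjT]
  rw [e]
  apply MeasurableSet.inter
  · exact measurableSet_le measurable_const (bjCnt_meas _)
  · exact Finset.measurableSet_biInter _ fun j _ => measurableSet_le (bjCnt_meas _) measurable_const

lemma bjCnt_min {n : ℕ} (u : Fin n → ℝ) {c d : ℝ} (h : c ≤ d) : bjCnt (fun j => min (u j) d) c = bjCnt u c := by
  classical
  unfold bjCnt
  congr 1
  ext j
  simp [not_lt.2 h]

lemma bj_ville (n : ℕ) (B : Finset ℕ) (c : ℕ → ℝ) (hB : ∀ i ∈ B, i + 1 < n) (hc : ∀ i ∈ B, 0 < c i)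
    (hc1 : ∀ i ∈ B, c i < 1) (hm : ∀ i ∈ B, ∀ j ∈ B, i ≤ j → c i ≤ c j) {θ : ℝ} (hθ : 0 ≤ θ) :
    ∑ i ∈ B, bjL n i (c i) θ * (nullMeasure n (bjT n B c i)).toReal ≤ 1 := by
  have hpr := bjQ_prob n (l := 1 + θ) (by linarith)
  calc _ ≤ ∑ i ∈ B, (bjQ n (1 + θ) (bjT n B c i)).toReal := by
        apply Finset.sum_le_sum
        intro i hi
        apply bj_change n i (hB i hi) (hc i hi) (hc1 i hi) hθ _ (bjT_meas n B c i)
        · intro u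
          simp only [bjT, mem_ofPred_eq]
          rw [bjCnt_min u le_rfl]
          have : ∀ j ∈ B, j < i → bjCnt (fun j => min (u j) (c i)) (c j) = bjCnt u (c j) := 
            fun j hj hji => bjCnt_min u (hm j hj i hi hji.le)
          constructor
          · rintro ⟨h1, h2⟩; exact ⟨h1, fun j hj hji => by rw [← this j hj hji]; exact h2 j hj hji⟩
          · rintro ⟨h1, h2⟩; exact ⟨h1, fun j hj hji => by rw [this j hj hji]; exact h2 j hj hji⟩
        · intro u hu; exact hu.1
    _ = (bjQ n (1 + θ) (⋃ i ∈ B, bjT n B c i)).toReal := by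
        rw [measure_biUnion_finset _ (fun i _ => bjT_meas n B c i), ENNReal.toReal_sum (fun i _ => measure_ne_top _ _)]
        intro i hi j hj hij
        rw [Function.onFun, Set.disjoint_left]
        intro u h1 h2
        rcases lt_or_gt_of_ne hij with h | h
        · have := h2.2 i hi h; have := h1.1; omega
        · have := h1.2 j hj h; have := h2.1; omega
    _ ≤ 1 := by
        apply ENNReal.toReal_le_of_le_ofReal zero_le_one
        rw [ENNReal.ofReal_one]; exact prob_le_one

lemma bj_block (n : ℕ) (B : Finset ℕ) (c : ℕ → ℝ) (hB : ∀ i ∈ B, i + 1 < n) (hc : ∀ i ∈ B, 0 < c i)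
    (hc1 : ∀ i ∈ B, c i < 1) (hm : ∀ i ∈ B, ∀ j ∈ B, i ≤ j → c i ≤ c j) {θ0 θ1 M : ℝ} (h0 : 0 < θ0) (h01 : θ0 ≤ θ1)
    (hM0 : 0 ≤ M) (hM : ∀ i ∈ B, M ≤ ∫ θ in θ0..θ1, bjL n i (c i) θ * θ⁻¹) :
    M * (nullMeasure n {u | ∃ i ∈ B, i + 1 ≤ bjCnt u (c i)}).toReal ≤ Real.log (θ1 / θ0) := by
  classical
  have hsub : {u : Fin n → ℝ | ∃ i ∈ B, i + 1 ≤ bjCnt u (c i)} ⊆ ⋃ i ∈ B, bjT n B c i := by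
    rintro u hu
    have hex : ∃ i, i ∈ B ∧ i + 1 ≤ bjCnt u (c i) := by
      obtain ⟨i, h, h'⟩ := hu; exact ⟨i, h, h'⟩
    simp only [mem_iUnion]
    refine ⟨Nat.find hex, (Nat.find_spec hex).1, (Nat.find_spec hex).2, fun j hj hji => ?_⟩
    have := Nat.find_min hex hji
    push Not at this
    have := this hj; omega
  have hP : (nullMeasure n {u | ∃ i ∈ B, i + 1 ≤ bjCnt u (c i)}).toReal ≤ ∑ i ∈ B, (nullMeasure n (bjT n B c i)).toReal := by
    rw [← ENNReal.toReal_sum (fun i _ => measure_ne_top _ _)]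
    apply ENNReal.toReal_mono
    · exact (ENNReal.sum_lt_top.2 fun i _ => measure_lt_top _ _).ne
    · exact (measure_mono hsub).trans (measure_biUnion_finset_le _ _)
  have hne : ∀ θ ∈ uIcc θ0 θ1, θ ≠ 0 := by
    intro θ hθ; rw [uIcc_of_le h01] at hθ; linarith [hθ.1]
  have hinv : ContinuousOn (fun θ : ℝ => θ⁻¹) (uIcc θ0 θ1) := ContinuousOn.inv₀ continuousOn_id hne
  have hii : ∀ i ∈ B, IntervalIntegrable (fun θ => bjL n i (c i) θ * θ⁻¹ * (nullMeasure n (bjT n B c i)).toReal) volume θ0 θ1 := by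
    intro i hi
    apply ContinuousOn.intervalIntegrable
    exact ((bjL_cont n i (c i)).continuousOn.mul hinv).mul continuousOn_const
  calc _ ≤ M * ∑ i ∈ B, (nullMeasure n (bjT n B c i)).toReal := mul_le_mul_of_nonneg_left hP hM0
    _ = ∑ i ∈ B, M * (nullMeasure n (bjT n B c i)).toReal := Finset.mul_sum _ _ _
    _ ≤ ∑ i ∈ B, (∫ θ in θ0..θ1, bjL n i (c i) θ * θ⁻¹) * (nullMeasure n (bjT n B c i)).toReal :=
        Finset.sum_le_sum fun i hi => mul_le_mul_of_nonneg_right (hM i hi) ENNReal.toReal_nonneg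
    _ = ∫ θ in θ0..θ1, ∑ i ∈ B, bjL n i (c i) θ * θ⁻¹ * (nullMeasure n (bjT n B c i)).toReal := by
        rw [intervalIntegral.integral_finsetSum hii]
        simp_rw [intervalIntegral.integral_mul_const]
    _ ≤ ∫ θ in θ0..θ1, θ⁻¹ := by
        apply intervalIntegral.integral_mono_on h01 
        · have := IntervalIntegrable.sum B hii
          refine this.congr (fun θ _ => ?_)
          simp
        · exact hinv.intervalIntegrable
        · intro θ hθ
          have hθ0 : 0 < θ := by linarith [hθ.1]
          have := bj_ville n B c hB hc hc1 hm hθ0.le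
          calc _ = (∑ i ∈ B, bjL n i (c i) θ * (nullMeasure n (bjT n B c i)).toReal) * θ⁻¹ := by
                rw [Finset.sum_mul]; exact Finset.sum_congr rfl fun i _ => by ring
            _ ≤ 1 * θ⁻¹ := mul_le_mul_of_nonneg_right this (by positivity)
            _ = θ⁻¹ := one_mul _
    _ = Real.log (θ1 / θ0) := integral_inv_of_pos h0 (by linarith)


set_option maxHeartbeats 1000000 in
lemma bj_index (n i : ℕ) (hi : i + 1 < n) (m : ℝ) (hm : m = ((i:ℝ) + 1) / n) (κ L δ c Z σ θ0 θ1 : ℝ)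
    (hκ : 0 < κ) (hκ1 : κ < 1 / 2) (hL : 16 / κ ^ 2 ≤ L) (hZ : 2 ≤ Z) (hZκ : 4 / κ ^ 3 ≤ Z ^ 2)
    (hZL : 16 * Z ^ 2 ≤ L ^ 2) (hbulk : L ^ 2 ≤ n * (m * (1 - m)))
    (hδ0 : 0 < δ) (hδ1 : δ < Real.exp (-(4 / 3 * Z * (Z + 2))) / (96 * Z))
    (hδ2 : Real.exp (-((1 - κ) * (1 + 2 * κ) * L)) ≤ δ)
    (hc : 0 < c) (hc1 : c < 1) (hcS : bjS n i c = δ)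
    (hσ : 0 < σ) (hσV : σ ^ 2 = m * (1 - m) / n) (h0 : 0 < θ0) (h0' : θ0 ≤ σ / m)
    (h1 : 6 * Real.sqrt L * (σ / m) ≤ θ1) :
    (1 - κ) ^ 3 / ((1 + κ) ^ 2 * (2 + 4 * κ) * L * δ) ≤ ∫ θ in θ0..θ1, bjL n i c θ * θ⁻¹ := by
  obtain ⟨hm0, hm1, e1, e2, hn⟩ := bj_nm n i hi m hm
  have hm1' : 0 < 1 - m := by linarith
  have hq : 0 < m * (1 - m) := by positivity
  have hqm : m * (1 - m) ≤ m := by nlinarith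
  have hqm' : m * (1 - m) ≤ 1 - m := by nlinarith
  have hn0 : (0:ℝ) < n := hn
  have hLpos : 0 < L := lt_of_lt_of_le (by positivity) hL
  have hZ0 : 0 < Z := by linarith
  set q := m * (1 - m) with hqd
  -- upper end: d > Zσ
  have hσq : n * σ ^ 2 = q := by rw [hσV]; field_simp
  have hZσ : Z * σ ≤ q / 4 := by
    rw [← pow_le_pow_iff_left₀ (by positivity) (by positivity) (two_ne_zero)]
    have : n * (Z * σ) ^ 2 ≤ n * (q / 4) ^ 2 := by
      calc n * (Z * σ) ^ 2 = Z ^ 2 * (n * σ ^ 2) := by ring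
        _ = Z ^ 2 * q := by rw [hσq]
        _ ≤ (n * q / 16) * q := by apply mul_le_mul_of_nonneg_right _ hq.le; linarith
        _ = _ := by ring
    exact le_of_mul_le_mul_left this hn0
  have hmono := bjS_mono n i (by omega)
  have hcm : c < m - Z * σ := by
    rw [← hmono.lt_iff_lt ⟨hc.le, hc1.le⟩ ⟨by linarith, by linarith [mul_pos hZ0 hσ]⟩, hcS]
    exact hδ1.trans_le (bj_lowz n i hi m hm Z σ hZ hσ hσV (by linarith))
  -- lower end
  set D := Real.sqrt ((2 + 4 * κ) * L) * σ with hD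
  have hD0 : 0 < D := by positivity
  have hDsq : D ^ 2 = (2 + 4 * κ) * L * σ ^ 2 := by
    rw [hD, mul_pow, Real.sq_sqrt (by positivity)]
  have hLL : 16 * L ≤ κ ^ 2 * L ^ 2 := by
    rw [div_le_iff₀ (by positivity)] at hL
    nlinarith
  have hDq : D ≤ κ / 2 * q := by
    rw [← pow_le_pow_iff_left₀ (by positivity) (by positivity) (two_ne_zero)]
    have : n * D ^ 2 ≤ n * (κ / 2 * q) ^ 2 := by
      calc n * D ^ 2 = (2 + 4 * κ) * L * (n * σ ^ 2) := by rw [hDsq]; ring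
        _ = (2 + 4 * κ) * L * q := by rw [hσq]
        _ ≤ (4 * L) * q := by
            apply mul_le_mul_of_nonneg_right _ hq.le
            apply mul_le_mul_of_nonneg_right _ hLpos.le
            linarith
        _ ≤ (κ ^ 2 / 4 * (n * q)) * q := by
            apply mul_le_mul_of_nonneg_right _ hq.le
            have := mul_le_mul_of_nonneg_left hbulk (by positivity : 0 ≤ κ ^ 2)
            linarith
        _ = _ := by ring
    exact le_of_mul_le_mul_left this hn0
  have hκq : κ / 2 * q ≤ q / 4 := by linarith [mul_le_mul_of_nonneg_right (by linarith : κ / 2 ≤ 1 / 4) hq.le]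
  have hcl : m - D ≤ c := by
    rw [← hmono.le_iff_le ⟨by linarith, by linarith⟩ ⟨hc.le, hc1.le⟩, hcS]
    refine (bj_chernoff n i hi m hm κ D (σ ^ 2) (by linarith) hD0 (by linarith [mul_pos hκ hq]) hσV).trans (le_trans (le_of_eq ?_) hδ2)
    congr 2
    rw [hDsq]; field_simp; ring
  set d := m - c with hd
  have hcd : c = m - d := by rw [hd]; ring
  have hdZ : Z * σ < d := by linarith
  have hd0 : 0 < d := lt_trans (by positivity) hdZ
  have hdD : d ≤ D := by linarith
  have hMb := bj_Mbound n i hi m hm κ d (σ ^ 2) hκ hκ1.le hd0 (by linarith) hσV (by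
    calc 4 / κ ^ 3 * σ ^ 2 ≤ Z ^ 2 * σ ^ 2 := by gcongr
      _ = (Z * σ) ^ 2 := by ring
      _ ≤ d ^ 2 := by gcongr)
  have hcm2 : m / 2 ≤ c := by linarith
  have hth := bj_theta n i c m κ d θ0 θ1 hc hc1 hcd hκ hd0 (by linarith [mul_le_mul_of_nonneg_right (by linarith : κ ≤ 1) hd0.le]) h0 (by
    refine h0'.trans ?_
    rw [div_le_div_iff₀ hm0 hc]
    have h2 : σ ≤ (1 - κ) * d := by
      have g1 := mul_le_mul_of_nonneg_right hZ hσ.le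
      have g2 := mul_le_mul_of_nonneg_right (by linarith : 1 / 2 ≤ 1 - κ) hd0.le
      linarith
    calc σ * c ≤ σ * m := by apply mul_le_mul_of_nonneg_left _ hσ.le; linarith
      _ ≤ _ := mul_le_mul_of_nonneg_right h2 hm0.le) (by
    refine le_trans ?_ h1
    rw [mul_div_assoc', div_le_div_iff₀ hc hm0]
    have hs : Real.sqrt ((2 + 4 * κ) * L) ≤ 2 * Real.sqrt L := by
      rw [show 2 * Real.sqrt L = Real.sqrt (4 * L) by
        rw [Real.sqrt_mul (by norm_num), show (4:ℝ) = 2 ^ 2 by norm_num, Real.sqrt_sq (by norm_num)]]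
      apply Real.sqrt_le_sqrt
      exact mul_le_mul_of_nonneg_right (by linarith) hLpos.le
    have hD2 : d ≤ 2 * Real.sqrt L * σ := hdD.trans (mul_le_mul_of_nonneg_right hs hσ.le)
    calc (1 + κ) * d * m ≤ (3 / 2) * (2 * Real.sqrt L * σ) * (2 * c) := by
          apply mul_le_mul _ (by linarith) hm0.le (by positivity)
          apply mul_le_mul (by linarith) hD2 hd0.le (by norm_num)
      _ = _ := by ring)
  rw [← hcd, hcS] at hMb
  have hfin := hMb.trans (mul_le_mul_of_nonneg_left hth hδ0.le)
  have hV : 1 / ((2 + 4 * κ) * L) ≤ σ ^ 2 / d ^ 2 := by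
    rw [div_le_div_iff₀ (by positivity) (by positivity)]
    have : d ^ 2 ≤ D ^ 2 := by gcongr
    rw [hDsq] at this; linarith
  have h1κ : 0 < 1 - κ := by linarith
  have h3 := (mul_le_mul_of_nonneg_left hV (by positivity : 0 ≤ (1 - κ) ^ 3 / (1 + κ) ^ 2)).trans hfin
  have h4 : (1 - κ) ^ 3 / ((1 + κ) ^ 2 * (2 + 4 * κ) * L * δ) = ((1 - κ) ^ 3 / (1 + κ) ^ 2 * (1 / ((2 + 4 * κ) * L))) / δ := by
    field_simp
  rw [h4, div_le_iff₀ hδ0]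
  linarith


/-- the mean `(i+1)/n` -/
noncomputable def bjm (n i : ℕ) : ℝ := ((i:ℝ) + 1) / n

/-- the relative standard deviation -/
noncomputable def bjs (n i : ℕ) : ℝ := Real.sqrt ((1 - bjm n i) / (bjm n i * n))

lemma bj_c_mono (n : ℕ) (c : ℕ → ℝ) (δ : ℝ) (hc : ∀ i < n, 0 < c i ∧ c i < 1 ∧ bjS n i (c i) = δ)
    {i j : ℕ} (hij : i ≤ j) (hj : j < n) : c i ≤ c j := by
  obtain ⟨h1, h2, h3⟩ := hc i (by omega)
  obtain ⟨g1, g2, g3⟩ := hc j hj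
  rw [← (bjS_mono n j hj).le_iff_le ⟨h1.le, h2.le⟩ ⟨g1.le, g2.le⟩, g3, ← h3]
  exact bjS_anti n i j hij h1.le h2.le

lemma bj_blockprob (n : ℕ) (κ L δ Z a R : ℝ) (c : ℕ → ℝ) (B : Finset ℕ)
    (hκ : 0 < κ) (hκ1 : κ < 1 / 2) (hL1 : 1 ≤ L) (hL : 16 / κ ^ 2 ≤ L) (hZ : 2 ≤ Z) (hZκ : 4 / κ ^ 3 ≤ Z ^ 2)
    (hZL : 16 * Z ^ 2 ≤ L ^ 2) (hδ0 : 0 < δ) (hδ1 : δ < Real.exp (-(4 / 3 * Z * (Z + 2))) / (96 * Z))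
    (hδ2 : Real.exp (-((1 - κ) * (1 + 2 * κ) * L)) ≤ δ)
    (hc : ∀ i < n, 0 < c i ∧ c i < 1 ∧ bjS n i (c i) = δ)
    (ha : 0 < a) (hR : 1 ≤ R)
    (hB : ∀ i ∈ B, i + 1 < n ∧ L ^ 2 ≤ n * (bjm n i * (1 - bjm n i)) ∧ a ≤ bjs n i ∧ bjs n i ≤ a * R) :
    (nullMeasure n {u | ∃ i ∈ B, i + 1 ≤ bjCnt u (c i)}).toReal ≤
      (Real.log (6 * Real.sqrt L) + Real.log R) * ((1 + κ) ^ 2 * (2 + 4 * κ) * L * δ / (1 - κ) ^ 3) := by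
  have h1κ : 0 < 1 - κ := by linarith
  have hsL : 1 ≤ Real.sqrt L := by rw [Real.one_le_sqrt]; exact hL1
  have hM0 : 0 < (1 - κ) ^ 3 / ((1 + κ) ^ 2 * (2 + 4 * κ) * L * δ) := by positivity
  have key := bj_block n B c (fun i hi => (hB i hi).1) (fun i hi => (hc i (by have := (hB i hi).1; omega)).1)
    (fun i hi => (hc i (by have := (hB i hi).1; omega)).2.1)
    (fun i hi j hj hij => bj_c_mono n c δ hc hij (by have := (hB j hj).1; omega))
    (θ0 := a) (θ1 := 6 * Real.sqrt L * (a * R)) (M := (1 - κ) ^ 3 / ((1 + κ) ^ 2 * (2 + 4 * κ) * L * δ)) ha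
    (by nlinarith [mul_le_mul hsL hR zero_le_one (by linarith)]) hM0.le (by
      intro i hi
      obtain ⟨b1, b2, b3, b4⟩ := hB i hi
      obtain ⟨c1, c2, c3⟩ := hc i (by omega)
      obtain ⟨hm0, hm1, e1, e2, hn⟩ := bj_nm n i b1 (bjm n i) rfl
      have hm1' : 0 < 1 - bjm n i := by linarith
      have hs0 : 0 < bjs n i := by unfold bjs; positivity
      have e : bjs n i * bjm n i / bjm n i = bjs n i := by field_simp
      apply bj_index n i b1 (bjm n i) rfl κ L δ (c i) Z (bjs n i * bjm n i) a _ hκ hκ1 hL hZ hZκ hZL b2 hδ0 hδ1 hδ2 c1 c2 c3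
        (by positivity) _ ha (by rw [e]; exact b3) (by rw [e]; gcongr)
      unfold bjs
      rw [mul_pow, Real.sq_sqrt (by positivity)]
      field_simp)
  rw [show 6 * Real.sqrt L * (a * R) / a = (6 * Real.sqrt L) * R by field_simp, Real.log_mul (by positivity) (by positivity)] at key
  calc _ = ((1 - κ) ^ 3 / ((1 + κ) ^ 2 * (2 + 4 * κ) * L * δ)
      * (nullMeasure n {u | ∃ i ∈ B, i + 1 ≤ bjCnt u (c i)}).toReal) * ((1 + κ) ^ 2 * (2 + 4 * κ) * L * δ / (1 - κ) ^ 3) := by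
        field_simp
    _ ≤ _ := mul_le_mul_of_nonneg_right key (by positivity)

lemma bj_cube_ae (n : ℕ) : nullMeasure n {u | ∀ j, u j ∈ Icc (0:ℝ) 1}ᶜ = 0 := by
  have e : {u : Fin n → ℝ | ∀ j, u j ∈ Icc (0:ℝ) 1} = univ.pi (fun _ => Icc (0:ℝ) 1) := by ext u; simp only [mem_univ_pi]; rfl
  rw [e, prob_compl_eq_zero_iff (MeasurableSet.univ_pi fun _ => measurableSet_Icc)]
  unfold nullMeasure
  rw [Measure.pi_pi]; simp

lemma bj_good (n : ℕ) (hn : 0 < n) (c : ℕ → ℝ) (δ : ℝ) (hc : ∀ i < n, 0 < c i ∧ c i < 1 ∧ bjS n i (c i) = δ)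
    (u : Fin n → ℝ) (hu : ∀ j, u j ∈ Icc (0:ℝ) 1) (h : ∀ i < n, bjCnt u (c i) ≤ i) : δ ≤ MnPlus u := by
  have : Nonempty (Fin n) := ⟨⟨0, hn⟩⟩
  unfold MnPlus
  apply le_ciInf
  intro i
  have h1 := bjCnt_order u (c i) i (h i i.2)
  obtain ⟨c1, c2, c3⟩ := hc i i.2
  have h2 : orderStat u i ∈ Icc (0:ℝ) 1 := hu _
  unfold pOrd
  rw [bj_reg n i i.2 _ h2.1, bjS_eq n i i.2, ← c3, (bjS_mono n i i.2).le_iff_le ⟨c1.le, c2.le⟩ h2]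
  exact h1

lemma bj_cov1 (n i : ℕ) (L : ℝ) (hL : 1 ≤ L) (h1 : 2 * L ^ 2 ≤ (i:ℝ) + 1) (h2 : 2 * L ^ 2 ≤ (n:ℝ) - i - 1) :
    i + 1 < n ∧ L ^ 2 ≤ n * (bjm n i * (1 - bjm n i)) := by
  have hL2 : 1 ≤ L ^ 2 := by nlinarith
  have h : i + 1 < n := by
    have : (i:ℝ) + 1 < n := by linarith
    exact_mod_cast this
  refine ⟨h, ?_⟩
  obtain ⟨hm0, hm1, e1, e2, hn⟩ := bj_nm n i h (bjm n i) rfl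
  have g2 : 2 * L ^ 2 ≤ n * (1 - bjm n i) := by linarith
  rw [e1] at h1
  have hm1' : 0 < 1 - bjm n i := by linarith
  have k1 := mul_le_mul_of_nonneg_right h1 hm1'.le
  have k2 := mul_le_mul_of_nonneg_right g2 hm0.le
  nlinarith

lemma bj_cov2 (n i : ℕ) (h : i + 1 < n) : 1 / (n:ℝ) ≤ bjs n i ∧ bjs n i ≤ 1 := by
  obtain ⟨hm0, hm1, e1, e2, hn⟩ := bj_nm n i h (bjm n i) rfl
  have hm1' : 0 < 1 - bjm n i := by linarith
  have a1 : 1 ≤ n * bjm n i := by rw [← e1]; linarith [Nat.cast_nonneg (α := ℝ) i]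
  have a2 : 1 ≤ n * (1 - bjm n i) := by
    rw [← e2]; exact_mod_cast (by omega : 1 ≤ n - 1 - i)
  unfold bjs
  constructor
  · apply Real.le_sqrt_of_sq_le
    rw [div_pow, one_pow, div_le_div_iff₀ (by positivity) (by positivity)]
    nlinarith
  · refine Real.sqrt_le_iff.2 ⟨zero_le_one, ?_⟩
    rw [one_pow, div_le_one (by positivity)]
    linarith

lemma bj_cov3 (n K : ℕ) (hn : 2 ≤ n) (hK : 0 < K) (s : ℝ) (h1 : 1 / (n:ℝ) ≤ s) (h2 : s ≤ 1) :
    ∃ k < K, (n:ℝ) ^ (-((k:ℝ) + 1) / K) ≤ s ∧ s ≤ (n:ℝ) ^ (-((k:ℝ) + 1) / K) * (n:ℝ) ^ ((1:ℝ) / K) := by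
  classical
  have hn0 : (0:ℝ) < n := by exact_mod_cast (by omega : 0 < n)
  have hK0 : (0:ℝ) < K := by exact_mod_cast hK
  have hK1 : (n:ℝ) ^ (-(((K - 1 : ℕ):ℝ) + 1) / K) ≤ s := by
    rw [Nat.cast_sub hK, Nat.cast_one, sub_add_cancel, neg_div, div_self hK0.ne', Real.rpow_neg_one, inv_eq_one_div]
    exact h1
  have hex : ∃ k : ℕ, (n:ℝ) ^ (-((k:ℝ) + 1) / K) ≤ s := ⟨K - 1, hK1⟩
  refine ⟨Nat.find hex, ?_, Nat.find_spec hex, ?_⟩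
  · have := Nat.find_min' hex hK1; omega
  · rw [← Real.rpow_add hn0]
    rcases Nat.eq_zero_or_pos (Nat.find hex) with h | h
    · rw [h]
      refine h2.trans (le_of_eq ?_)
      rw [← add_div]; simp
    · have := Nat.find_min hex (m := Nat.find hex - 1) (by omega)
      push Not at this
      refine this.le.trans (le_of_eq ?_)
      congr 1
      rw [Nat.cast_sub h, Nat.cast_one]; ring

/-- the final bound for a given `n` -/
lemma bj_pern (n K : ℕ) (hK : 0 < K) (hn : 2 ≤ n) (κ L δ Z p : ℝ)
    (hκ : 0 < κ) (hκ1 : κ < 1 / 2) (hL1 : 1 ≤ L) (hL : 16 / κ ^ 2 ≤ L) (hZ : 2 ≤ Z) (hZκ : 4 / κ ^ 3 ≤ Z ^ 2)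
    (hZL : 16 * Z ^ 2 ≤ L ^ 2) (hδ0 : 0 < δ) (hδ : δ < 1) (hδ1 : δ < Real.exp (-(4 / 3 * Z * (Z + 2))) / (96 * Z))
    (hδ2 : Real.exp (-((1 - κ) * (1 + 2 * κ) * L)) ≤ δ)
    (hp1 : p ≤ 1)
    (hp : (Real.log (6 * Real.sqrt L) + Real.log n / K) * ((1 + κ) ^ 2 * (2 + 4 * κ) * L * δ / (1 - κ) ^ 3) ≤ p) :
    (1 - p) ^ K - (4 * L ^ 2 + 2) * δ ≤ (nullMeasure n {u | δ ≤ MnPlus u}).toReal := by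
  classical
  have hn0 : (0:ℝ) < n := by exact_mod_cast (by omega : 0 < n)
  have hn1 : (1:ℝ) < n := by exact_mod_cast (by omega : 1 < n)
  have hK0 : (0:ℝ) < K := by exact_mod_cast hK
  have : ∀ i, ∃ c, i < n → 0 < c ∧ c < 1 ∧ bjS n i c = δ := by
    intro i
    by_cases hi : i < n
    · obtain ⟨c, h⟩ := bj_exists_c n i hi δ hδ0 hδ; exact ⟨c, fun _ => h⟩
    · exact ⟨0, fun h => absurd h hi⟩
  choose c hc using this
  let N := ⌈2 * L ^ 2⌉₊
  let X : Finset ℕ := ((Finset.range N) ∪ (Finset.range N).image (fun j => n - 1 - j)).filter (· < n)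
  let R : ℝ := (n:ℝ) ^ ((1:ℝ) / K)
  let a : ℕ → ℝ := fun k => (n:ℝ) ^ (-((k:ℝ) + 1) / K)
  let B : ℕ → Finset ℕ := fun k => (Finset.range n).filter (fun i => i + 1 < n ∧ L ^ 2 ≤ n * (bjm n i * (1 - bjm n i)) ∧ a k ≤ bjs n i ∧ bjs n i ≤ a k * R)
  let A : ℕ → Set (Fin n → ℝ) := fun k => {u | ∀ i ∈ B k, bjCnt u (c i) ≤ i}
  have hR : 1 ≤ R := Real.one_le_rpow hn1.le (by positivity)
  have ha : ∀ k, 0 < a k := fun k => Real.rpow_pos_of_pos hn0 _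
  have hlogR : Real.log R = Real.log n / K := by
    simp only [R]; rw [Real.log_rpow hn0]; ring
  have hAm : ∀ k, MeasurableSet (A k) := by
    intro k
    have : A k = ⋂ i ∈ B k, {u | bjCnt u (c i) ≤ i} := by ext; simp [A]
    rw [this]
    exact Finset.measurableSet_biInter _ fun j _ => measurableSet_le (bjCnt_meas _) measurable_const
  have hAu : ∀ k, IsUpperSet (A k) := by
    intro k u v huv hu i hi
    exact (bjCnt_anti _ huv).trans (hu i hi)
  have hblock : ∀ k < K, 1 - p ≤ (nullMeasure n (A k)).toReal := by
    intro k hk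
    have h1 := bj_blockprob n κ L δ Z (a k) R c (B k) hκ hκ1 hL1 hL hZ hZκ hZL hδ0 hδ1 hδ2 hc (ha k) hR (by
      intro i hi; simp only [B, Finset.mem_filter] at hi; exact hi.2)
    rw [hlogR] at h1
    have e : {u | ∃ i ∈ B k, i + 1 ≤ bjCnt u (c i)} = (A k)ᶜ := by
      ext u; simp [A]
    rw [e] at h1
    have h2 := prob_compl_eq_one_sub (μ := nullMeasure n) (hAm k)
    rw [h2, ENNReal.toReal_sub_of_le prob_le_one (by simp)] at h1
    simp at h1
    linarith
  have hinter := bj_harris_blocks n K A hAm hAu (1 - p) (by linarith) hblock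
  -- coverage
  have hcover : ∀ i < n, i ∉ X → ∃ k < K, i ∈ B k := by
    intro i hi hiX
    simp only [X, Finset.mem_filter, Finset.mem_union, Finset.mem_range, Finset.mem_image, not_and] at hiX
    have hiX' : ¬ (i < N ∨ ∃ j < N, n - 1 - j = i) := fun h => hiX h hi
    push Not at hiX'
    have g1 : 2 * L ^ 2 ≤ (i:ℝ) + 1 := by
      have : (N:ℝ) ≤ i := by exact_mod_cast hiX'.1
      have := Nat.le_ceil (2 * L ^ 2)
      linarith
    have g2 : 2 * L ^ 2 ≤ (n:ℝ) - i - 1 := by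
      have h1 : N ≤ n - 1 - i := by
        by_contra hlt
        exact hiX'.2 (n - 1 - i) (by omega) (by omega)
      have h2 : (N:ℝ) + i + 1 ≤ n := by exact_mod_cast (by omega : N + i + 1 ≤ n)
      have := Nat.le_ceil (2 * L ^ 2)
      linarith
    obtain ⟨b1, b2⟩ := bj_cov1 n i L hL1 g1 g2
    obtain ⟨b3, b4⟩ := bj_cov2 n i b1
    obtain ⟨k, hk, b5, b6⟩ := bj_cov3 n K hn hK _ b3 b4
    exact ⟨k, hk, by simp only [B, Finset.mem_filter, Finset.mem_range]; exact ⟨hi, b1, b2, b5, b6⟩⟩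
  let E : Set (Fin n → ℝ) := ⋃ i ∈ X, {u | i + 1 ≤ bjCnt u (c i)}
  have hE : (nullMeasure n E).toReal ≤ (4 * L ^ 2 + 2) * δ := by
    have hX : (X.card : ℝ) ≤ 4 * L ^ 2 + 2 := by
      have h1 : X.card ≤ N + N := by
        refine (Finset.card_filter_le _ _).trans ((Finset.card_union_le _ _).trans ?_)
        exact add_le_add (by simp) (Finset.card_image_le.trans (by simp))
      have h2 : (N:ℝ) < 2 * L ^ 2 + 1 := Nat.ceil_lt_add_one (by positivity)
      have h3 : (X.card : ℝ) ≤ N + N := by exact_mod_cast h1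
      linarith
    calc _ ≤ ∑ i ∈ X, (nullMeasure n {u | i + 1 ≤ bjCnt u (c i)}).toReal := by
          rw [← ENNReal.toReal_sum (fun i _ => measure_ne_top _ _)]
          apply ENNReal.toReal_mono
          · exact (ENNReal.sum_lt_top.2 fun i _ => measure_lt_top _ _).ne
          · exact measure_biUnion_finset_le _ _
      _ ≤ ∑ i ∈ X, δ := by
          apply Finset.sum_le_sum
          intro i hi
          obtain ⟨c1, c2, c3⟩ := hc i (Finset.mem_filter.1 hi).2
          exact (bj_binom n i c1.le c2.le).trans c3.le
      _ = X.card * δ := by simp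
      _ ≤ _ := mul_le_mul_of_nonneg_right hX hδ0.le
  have hsub : {u | ∀ k < K, u ∈ A k} ⊆ {u | δ ≤ MnPlus u} ∪ (E ∪ {u : Fin n → ℝ | ∀ j, u j ∈ Icc (0:ℝ) 1}ᶜ) := by
    intro u hu
    by_cases hcube : ∀ j, u j ∈ Icc (0:ℝ) 1
    swap
    · exact Or.inr (Or.inr hcube)
    by_cases hEu : u ∈ E
    · exact Or.inr (Or.inl hEu)
    left
    apply bj_good n (by omega) c δ hc u hcube
    intro i hi
    by_cases hiX : i ∈ X
    · by_contra hlt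
      apply hEu
      simp only [E, mem_iUnion]
      refine ⟨i, hiX, ?_⟩
      change i + 1 ≤ _
      omega
    · obtain ⟨k, hk, hik⟩ := hcover i hi hiX
      exact hu k hk i hik
  have h1 : nullMeasure n {u | ∀ k < K, u ∈ A k} ≤ nullMeasure n {u | δ ≤ MnPlus u} + nullMeasure n E := by
    refine (measure_mono hsub).trans ((measure_union_le _ _).trans ?_)
    refine add_le_add le_rfl ((measure_union_le _ _).trans ?_)
    rw [bj_cube_ae, add_zero]
  have h2 := ENNReal.toReal_mono (ENNReal.add_ne_top.2 ⟨measure_ne_top _ _, measure_ne_top _ _⟩) h1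
  rw [ENNReal.toReal_add (measure_ne_top _ _) (measure_ne_top _ _)] at h2
  linarith


lemma bj_choose (x : ℝ) (ε : ℝ) (hε : 0 < ε) :
    ∃ κ : ℝ, 0 < κ ∧ κ < 1 / 2 ∧ ∃ K : ℕ, 0 < K ∧ x * (1 + κ) ^ 3 * (1 + 2 * κ) / (1 - κ) ^ 3 / K ≤ 1 ∧
      Real.exp (-x) - ε ≤ (1 - x * (1 + κ) ^ 3 * (1 + 2 * κ) / (1 - κ) ^ 3 / K) ^ K := by
  have hcont : ContinuousAt (fun κ : ℝ => Real.exp (-(x * (1 + κ) ^ 3 * (1 + 2 * κ) / (1 - κ) ^ 3))) 0 := by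
    apply Real.continuous_exp.continuousAt.comp
    apply ContinuousAt.neg
    apply ContinuousAt.div (by fun_prop) (by fun_prop)
    norm_num
  have h1 : ∀ᶠ κ : ℝ in nhds 0, Real.exp (-x) - ε / 2 < Real.exp (-(x * (1 + κ) ^ 3 * (1 + 2 * κ) / (1 - κ) ^ 3)) := by
    apply hcont.eventually_const_lt
    norm_num; exact hε
  have h2 : ∀ᶠ κ : ℝ in nhdsWithin 0 (Ioi 0), 0 < κ ∧ κ < 1 / 2 ∧ Real.exp (-x) - ε / 2 < Real.exp (-(x * (1 + κ) ^ 3 * (1 + 2 * κ) / (1 - κ) ^ 3)) := by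
    filter_upwards [self_mem_nhdsWithin, h1.filter_mono nhdsWithin_le_nhds, (eventually_lt_nhds (by norm_num : (0:ℝ) < 1 / 2)).filter_mono nhdsWithin_le_nhds] with κ a b c
    exact ⟨a, c, b⟩
  obtain ⟨κ, hκ, hκ1, hκ2⟩ := h2.exists
  refine ⟨κ, hκ, hκ1, ?_⟩
  set y := x * (1 + κ) ^ 3 * (1 + 2 * κ) / (1 - κ) ^ 3
  have h3 := (Real.tendsto_one_add_div_pow_exp (-y)).eventually_const_lt (u := Real.exp (-x) - ε) (by linarith)
  have h4 : ∀ᶠ K : ℕ in atTop, y / K ≤ 1 := 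
    ((tendsto_const_div_atTop_nhds_zero_nat y).eventually_lt_const (by norm_num : (0:ℝ) < 1)).mono fun _ h => h.le
  obtain ⟨K, h3, h4, h5⟩ := (h3.and (h4.and (eventually_gt_atTop 0))).exists
  refine ⟨K, h5, h4, ?_⟩
  rw [show 1 - y / K = 1 + -y / K by ring]
  exact h3.le

lemma bj_lexp (b w : ℝ) (hb : 0 < b) (hw : 0 < w) : ∀ᶠ L : ℝ in atTop, L * Real.exp (-(b * L)) < w := by
  have h := Real.tendsto_pow_mul_exp_neg_atTop_nhds_zero 1
  have h2 : Tendsto (fun L : ℝ => b * L) atTop atTop := tendsto_id.const_mul_atTop hb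
  have h3 := (h.comp h2).eventually_lt_const (u := b * w) (by positivity)
  filter_upwards [h3] with L hL
  simp only [Function.comp, pow_one] at hL
  have : b * (L * Real.exp (-(b * L))) < b * w := by linarith
  exact lt_of_mul_lt_mul_left this hb.le

theorem bj_final (x : ℝ) (hx : 0 < x) :
    ∀ ε > (0:ℝ), ∀ᶠ n : ℕ in Filter.atTop,
      Real.exp (-x) - ε ≤
        ((nullMeasure n) {u | x / (2 * Real.log n * Real.log (Real.log n)) ≤ MnPlus u}).toReal := by
  intro ε hε
  obtain ⟨κ, hκ, hκ1, K, hK, hyK, hfin⟩ := bj_choose x (ε / 2) (by linarith)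
  have hK0 : (0:ℝ) < K := by exact_mod_cast hK
  have h1κ : 0 < 1 - κ := by linarith
  let Z : ℝ := max 2 (4 / κ ^ 3)
  have hZ : 2 ≤ Z := le_max_left _ _
  have hZκ : 4 / κ ^ 3 ≤ Z ^ 2 := by
    have : 4 / κ ^ 3 ≤ Z := le_max_right _ _
    nlinarith
  let w : ℝ := Real.exp (-(4 / 3 * Z * (Z + 2))) / (96 * Z)
  have hw : 0 < w := by positivity
  have hη : 0 < κ * (1 - 2 * κ) := mul_pos hκ (by linarith)
  have hlog : Tendsto (fun n : ℕ => Real.log (n:ℝ)) atTop atTop := Real.tendsto_log_atTop.comp tendsto_natCast_atTop_atTop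
  have hll : Tendsto (fun n : ℕ => Real.log (Real.log (n:ℝ))) atTop atTop := Real.tendsto_log_atTop.comp hlog
  have ev1 := hll.eventually (eventually_ge_atTop (1:ℝ))
  have ev2 := hll.eventually (eventually_ge_atTop (16 / κ ^ 2))
  have ev3 := hll.eventually (eventually_ge_atTop (4 * Z))
  have ev4 := hll.eventually (bj_lexp 1 (min (min 1 w) (ε / 2) / (3 * x)) one_pos (by positivity))
  have ev5 := hll.eventually (bj_lexp (κ * (1 - 2 * κ)) (x / 2) hη (by positivity))
  have ev6 := hll.eventually (bj_lexp 1 (κ / (6 * K)) one_pos (by positivity))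
  have ev7 := hlog.eventually (eventually_gt_atTop (0:ℝ))
  filter_upwards [ev1, ev2, ev3, ev4, ev5, ev6, ev7, eventually_ge_atTop 2] with n e1 e2 e3 e4 e5 e6 e7 e8
  set ℓ := Real.log (n:ℝ)
  set L := Real.log ℓ
  have hℓ : ℓ = Real.exp L := (Real.exp_log e7).symm
  have hL0 : 0 < L := by linarith
  have hexp : Real.exp (-L) = 1 / ℓ := by rw [Real.exp_neg, ← hℓ, one_div]
  rw [one_mul, hexp] at e4 e6
  set δ := x / (2 * ℓ * L) with hδ
  have hδ0 : 0 < δ := by positivity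
  have hδE : (4 * L ^ 2 + 2) * δ ≤ 3 * x * (L * (1 / ℓ)) := by
    have : (4 * L ^ 2 + 2) * δ ≤ (6 * L ^ 2) * δ := by
      apply mul_le_mul_of_nonneg_right _ hδ0.le; nlinarith
    refine this.trans (le_of_eq ?_)
    rw [hδ]; field_simp; norm_num
  rw [lt_div_iff₀ (by positivity)] at e4
  have e4' : 3 * x * (L * (1 / ℓ)) < min (min 1 w) (ε / 2) := by linarith
  have hδs : δ ≤ (4 * L ^ 2 + 2) * δ := by nlinarith [sq_nonneg L]
  rw [lt_min_iff, lt_min_iff] at e4'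
  have main := bj_pern n K hK e8 κ L δ Z _ hκ hκ1 e1 e2 hZ hZκ (by nlinarith) hδ0 (by linarith) (by linarith) (by
    have : Real.exp (-((1 - κ) * (1 + 2 * κ) * L)) = Real.exp (-(κ * (1 - 2 * κ) * L)) * (1 / ℓ) := by
      rw [← hexp, ← Real.exp_add]; congr 1; ring
    rw [this, hδ]
    calc _ = (L * Real.exp (-(κ * (1 - 2 * κ) * L))) * (1 / (ℓ * L)) := by field_simp
      _ ≤ (x / 2) * (1 / (ℓ * L)) := mul_le_mul_of_nonneg_right e5.le (by positivity)
      _ = _ := by field_simp) hyK (by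
    have hs1 : Real.sqrt L ≤ L := by
      rw [Real.sqrt_le_left hL0.le]; nlinarith
    have hs0 : 0 < Real.sqrt L := Real.sqrt_pos.2 hL0
    have g1 : Real.log (6 * Real.sqrt L) ≤ 6 * L := by
      have := Real.log_le_sub_one_of_pos (by positivity : 0 < 6 * Real.sqrt L)
      linarith
    have g2 : 6 * L ≤ κ / K * ℓ := by
      rw [mul_one_div, div_lt_iff₀ e7] at e6
      have : κ / (6 * K) * ℓ = (κ / K * ℓ) / 6 := by field_simp
      linarith
    calc _ ≤ (κ / K * ℓ + ℓ / K) * ((1 + κ) ^ 2 * (2 + 4 * κ) * L * δ / (1 - κ) ^ 3) := by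
          apply mul_le_mul_of_nonneg_right _ (by positivity)
          linarith
      _ = _ := by rw [hδ]; field_simp; ring)
  linarith [e4'.1.1, e4'.2]

theorem berk_jones_MnPlus_null_lower_bound (x : ℝ) (hx : 0 < x) :
    ∀ ε > (0:ℝ), ∀ᶠ n : ℕ in Filter.atTop,
      Real.exp (-x) - ε ≤
        ((nullMeasure n) {u | x / (2 * Real.log n * Real.log (Real.log n)) ≤ MnPlus u}).toReal := by
  exact bj_final x hx
end

section
/- Under the null hypothesis, let i_* = argmin_{1 ≤ i ≤ n} p_{(i)} be the index at which the one-sided statistic M_n^+ attains its minimum. Then P( log n ≤ i_* ≤ n - log n ) → 1 as n → ∞; the analogous claim holds for the index minimizing 1 - p_{(i)} (the M_n^- statistic) and for the index at which M_n is attained. -/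
open MeasureTheory Filter Set

noncomputable section

namespace BJ

/-- Expectation of `f (Bin(n,x))`, recursively. -/
def E1 (x : ℝ) : ℕ → (ℕ → ℝ) → ℝ
  | 0, f => f 0
  | n + 1, f => x * E1 x n (fun k => f (k + 1)) + (1 - x) * E1 x n f

/-- Joint expectation of `f (N_s) g (N_t)`, recursively. -/
def E2 (s t : ℝ) : ℕ → (ℕ → ℝ) → (ℕ → ℝ) → ℝ
  | 0, f, g => f 0 * g 0
  | n + 1, f, g => s * E2 s t n (fun k => f (k + 1)) (fun k => g (k + 1))
      + (t - s) * E2 s t n f (fun k => g (k + 1)) + (1 - t) * E2 s t n f g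

/-- Binomial point mass. -/
def bp (n k : ℕ) (x : ℝ) : ℝ := (n.choose k : ℝ) * x ^ k * (1 - x) ^ (n - k)

/-- Upper binomial tail. -/
def T (n j : ℕ) (x : ℝ) : ℝ := E1 x n (fun k => if j ≤ k then 1 else 0)

theorem E1_add (x : ℝ) (n : ℕ) : ∀ f g : ℕ → ℝ,
    E1 x n (fun k => f k + g k) = E1 x n f + E1 x n g := by
  induction n with
  | zero => intro f g; simp [E1]
  | succ n ih => intro f g; simp only [E1]; rw [ih f g, ih (fun k => f (k+1)) (fun k => g (k+1))]; ring

theorem E1_smul (x : ℝ) (n : ℕ) (c : ℝ) : ∀ f : ℕ → ℝ,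
    E1 x n (fun k => c * f k) = c * E1 x n f := by
  induction n with
  | zero => intro f; simp [E1]
  | succ n ih => intro f; simp only [E1]; rw [ih f, ih (fun k => f (k+1))]; ring

theorem E1_const (x : ℝ) (n : ℕ) (c : ℝ) : E1 x n (fun _ => c) = c := by
  induction n with
  | zero => simp [E1]
  | succ n ih => simp only [E1]; rw [ih]; ring

theorem E1_sub (x : ℝ) (n : ℕ) (f g : ℕ → ℝ) :
    E1 x n (fun k => f k - g k) = E1 x n f - E1 x n g := by
  have := E1_add x n (fun k => f k - g k) g
  simp only [sub_add_cancel] at this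
  linarith

theorem E1_mono {x : ℝ} (h0 : 0 ≤ x) (h1 : x ≤ 1) (n : ℕ) : ∀ f g : ℕ → ℝ,
    (∀ k, f k ≤ g k) → E1 x n f ≤ E1 x n g := by
  induction n with
  | zero => intro f g h; simpa [E1] using h 0
  | succ n ih =>
    intro f g h; simp only [E1]
    have a := ih f g h
    have b := ih (fun k => f (k+1)) (fun k => g (k+1)) (fun k => h _)
    have : 0 ≤ 1 - x := by linarith
    gcongr

theorem E1_congr (x : ℝ) (n : ℕ) : ∀ f g : ℕ → ℝ,
    (∀ k ≤ n, f k = g k) → E1 x n f = E1 x n g := by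
  induction n with
  | zero => intro f g h; simpa [E1] using h 0 le_rfl
  | succ n ih =>
    intro f g h; simp only [E1]
    rw [ih f g (fun k hk => h k (by omega)),
      ih (fun k => f (k+1)) (fun k => g (k+1)) (fun k hk => h _ (by omega))]

theorem E1_flip (x : ℝ) (n : ℕ) : ∀ f : ℕ → ℝ,
    E1 (1 - x) n f = E1 x n (fun k => f (n - k)) := by
  induction n with
  | zero => intro f; simp [E1]
  | succ n ih =>
    intro f; simp only [E1]
    rw [ih f, ih (fun k => f (k+1))]
    have : E1 x n (fun k => f (n - k + 1)) = E1 x n (fun k => f (n + 1 - k)) :=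
      E1_congr x n _ _ (fun k hk => by congr 1; omega)
    rw [this]
    have : (fun k => f (n + 1 - (k + 1))) = (fun k => f (n - k)) := by
      funext k; congr 1; omega
    rw [this]; ring

theorem bp_succ_succ (n k : ℕ) (x : ℝ) :
    bp (n + 1) (k + 1) x = x * bp n k x + (1 - x) * bp n (k + 1) x := by
  unfold bp
  rw [Nat.choose_succ_succ]
  rcases lt_or_ge k n with h | h
  · have e1 : n + 1 - (k + 1) = n - k := by omega
    have e2 : n - k = n - (k + 1) + 1 := by omega
    rw [e1, e2]; push_cast; ring
  · have e1 : n + 1 - (k + 1) = n - k := by omega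
    have : n.choose (k + 1) = 0 := Nat.choose_eq_zero_of_lt (by omega)
    rw [e1, this]; push_cast; ring

theorem bp_succ_zero (n : ℕ) (x : ℝ) : bp (n + 1) 0 x = (1 - x) * bp n 0 x := by
  simp [bp, pow_succ]; ring

theorem E1_single (x : ℝ) (n : ℕ) : ∀ j, E1 x n (fun k => if k = j then 1 else 0) = bp n j x := by
  induction n with
  | zero =>
    intro j; rcases j with _ | j <;> simp [E1, bp]
  | succ n ih =>
    intro j
    rcases j with _ | j
    · simp only [E1]
      rw [ih 0, bp_succ_zero]
      have := E1_const x n 0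
      simp [this]
    · simp only [E1]
      rw [ih, bp_succ_succ, ← ih j]
      simp

theorem E1_sum (x : ℝ) (n : ℕ) {ι : Type} (S : Finset ι) (F : ι → ℕ → ℝ) :
    E1 x n (fun k => ∑ i ∈ S, F i k) = ∑ i ∈ S, E1 x n (F i) := by
  classical
  induction S using Finset.induction_on with
  | empty => simpa using E1_const x n 0
  | insert a S ha ih =>
    simp only [Finset.sum_insert ha]
    rw [E1_add, ih]

theorem E1_mem (x : ℝ) (n : ℕ) (S : Finset ℕ) :
    E1 x n (fun k => if k ∈ S then 1 else 0) = ∑ j ∈ S, bp n j x := by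
  have := E1_sum x n S (fun j k => if k = j then (1:ℝ) else 0)
  simp only [E1_single] at this
  rw [← this]
  congr 1; funext k
  simp

theorem E1_id (x : ℝ) (n : ℕ) : E1 x n (fun k => (k : ℝ)) = n * x := by
  induction n with
  | zero => simp [E1]
  | succ n ih =>
    simp only [E1]; push_cast
    rw [E1_add, ih, E1_const]; ring

theorem E1_exp (x l : ℝ) (n : ℕ) :
    E1 x n (fun k => Real.exp (l * k)) = (1 + x * (Real.exp l - 1)) ^ n := by
  induction n with
  | zero => simp [E1]
  | succ n ih =>
    simp only [E1]
    have : (fun k : ℕ => Real.exp (l * ((k + 1 : ℕ) : ℝ)))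
        = fun k : ℕ => Real.exp l * Real.exp (l * k) := by
      funext k; rw [← Real.exp_add]; congr 1; push_cast; ring
    rw [this, E1_smul, ih]; ring

theorem hasDerivAt_E1 (n : ℕ) : ∀ (f : ℕ → ℝ) (x : ℝ),
    HasDerivAt (fun x => E1 x (n + 1) f)
      ((n + 1) * (E1 x n (fun k => f (k + 1)) - E1 x n f)) x := by
  induction n with
  | zero =>
    intro f x
    simp only [E1]
    have h1 : HasDerivAt (fun x : ℝ => x * f (0+1) + (1 - x) * f 0) (1 * f (0+1) + (0 - 1) * f 0) x :=
      ((hasDerivAt_id x).mul_const _).add (((hasDerivAt_const x (1:ℝ)).sub (hasDerivAt_id x)).mul_const _)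
    convert h1 using 1
    push_cast; ring
  | succ n ih =>
    intro f x
    have h1 := ((hasDerivAt_id x).mul (ih (fun k => f (k+1)) x)).add
      (((hasDerivAt_const x (1:ℝ)).sub (hasDerivAt_id x)).mul (ih f x))
    have e : (fun x => E1 x (n + 1 + 1) f) =
      fun x => x * E1 x (n+1) (fun k => f (k+1)) + (1 - x) * E1 x (n+1) f := by
      funext x; rfl
    rw [e]
    refine HasDerivAt.congr_deriv (f := fun x => x * E1 x (n+1) (fun k => f (k+1)) + (1 - x) * E1 x (n+1) f) h1 ?_
    have d : ∀ h : ℕ → ℝ, E1 x (n+1) h = x * E1 x n (fun k => h (k + 1)) + (1 - x) * E1 x n h :=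
      fun _ => rfl
    rw [d, d]
    push_cast
    simp
    ring

theorem hasDerivAt_T (n j : ℕ) (x : ℝ) :
    HasDerivAt (fun x => T (n + 1) (j + 1) x) ((n + 1) * bp n j x) x := by
  have h := hasDerivAt_E1 n (fun k => if j + 1 ≤ k then (1:ℝ) else 0) x
  unfold T
  convert h using 2
  rw [← E1_sub, ← E1_single]
  congr 1; funext k
  simp only [add_le_add_iff_right]
  split_ifs <;> first | omega | norm_num

theorem continuous_T (n j : ℕ) : Continuous (T n j) := by
  have : ∀ f : ℕ → ℝ, Continuous (fun x => E1 x n f) := by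
    induction n with
    | zero => intro f; simp only [E1]; exact continuous_const
    | succ n ih =>
      intro f; simp only [E1]
      have := ih f
      have := ih (fun k => f (k+1))
      fun_prop
  exact this _

theorem bp_nonneg {x : ℝ} (h0 : 0 ≤ x) (h1 : x ≤ 1) (n k : ℕ) : 0 ≤ bp n k x := by
  have : 0 ≤ 1 - x := by linarith
  unfold bp; positivity

theorem T_mono (n j : ℕ) : MonotoneOn (T (n+1) (j+1)) (Icc 0 1) := by
  apply monotoneOn_of_deriv_nonneg (convex_Icc 0 1) (continuous_T _ _).continuousOn
  · intro x hx; exact (hasDerivAt_T n j x).differentiableAt.differentiableWithinAt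
  · intro x hx
    rw [interior_Icc] at hx
    have := bp_nonneg hx.1.le hx.2.le n j
    have h := (hasDerivAt_T n j x).deriv
    rw [h]; positivity

theorem T_anti {x : ℝ} (h0 : 0 ≤ x) (h1 : x ≤ 1) (n : ℕ) {i j : ℕ} (h : i ≤ j) :
    T n j x ≤ T n i x := by
  apply E1_mono h0 h1
  intro k
  split_ifs <;> first | omega | norm_num

theorem T_le_one {x : ℝ} (h0 : 0 ≤ x) (h1 : x ≤ 1) (n j : ℕ) : T n j x ≤ 1 := by
  rw [← E1_const x n 1]
  apply E1_mono h0 h1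
  intro k; split_ifs <;> norm_num

theorem T_nonneg {x : ℝ} (h0 : 0 ≤ x) (h1 : x ≤ 1) (n j : ℕ) : 0 ≤ T n j x := by
  rw [← E1_const x n 0]
  apply E1_mono h0 h1
  intro k; split_ifs <;> norm_num

theorem T_zero (n j : ℕ) : T n (j+1) 0 = 0 := by
  unfold T
  induction n with
  | zero => simp [E1]
  | succ n ih => simp only [E1]; rw [ih]; ring

theorem E1_one (n : ℕ) : ∀ f, E1 1 n f = f n := by
  induction n with
  | zero => intro f; simp [E1]
  | succ n ih => intro f; simp only [E1]; rw [ih]; ring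

theorem T_one {n j : ℕ} (h : j ≤ n) : T n j 1 = 1 := by
  unfold T; rw [E1_one]; simp [h]

/-- quantile -/
theorem exists_T_eq {n j : ℕ} (h : j + 1 ≤ n) {e : ℝ} (h0 : 0 ≤ e) (h1 : e ≤ 1) :
    ∃ x ∈ Icc (0:ℝ) 1, T n (j+1) x = e := by
  have := intermediate_value_Icc (zero_le_one (α := ℝ)) (continuous_T n (j+1)).continuousOn
  rw [T_zero, T_one h] at this
  exact this ⟨h0, h1⟩

theorem T_flip {n i : ℕ} (hi : i < n) (x : ℝ) : T n (i+1) (1 - x) = 1 - T n (n - i) x := by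
  have e : 1 - T n (n - i) x = E1 x n (fun k => 1 - if n - i ≤ k then 1 else 0) := by
    rw [E1_sub, E1_const]; rfl
  rw [e]
  unfold T
  rw [E1_flip]
  apply E1_congr
  intro k hk
  split_ifs <;> first | omega | norm_num

/-- Chernoff, upper tail. -/
theorem T_chernoff {x : ℝ} (h0 : 0 ≤ x) (h1 : x ≤ 1) (n j : ℕ) {l : ℝ} (hl : 0 ≤ l) :
    T n j x ≤ Real.exp (-(l * j) + n * x * (Real.exp l - 1)) := by
  have e : T n j x ≤ E1 x n (fun k => Real.exp (-(l*j)) * Real.exp (l * k)) := by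
    apply E1_mono h0 h1
    intro k
    rw [← Real.exp_add]
    split_ifs with h
    · apply Real.one_le_exp
      have : (j:ℝ) ≤ k := by exact_mod_cast h
      nlinarith
    · positivity
  rw [E1_smul, E1_exp] at e
  refine e.trans ?_
  rw [Real.exp_add]
  gcongr
  have : (0:ℝ) ≤ Real.exp l - 1 := by have := Real.one_le_exp hl; linarith
  calc (1 + x * (Real.exp l - 1))^n ≤ (Real.exp (x * (Real.exp l - 1)))^n := by
        gcongr
        · linarith [Real.add_one_le_exp (x * (Real.exp l - 1))]
    _ = _ := by rw [← Real.exp_nat_mul]; congr 1; ring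

/-- Chernoff, lower tail. -/
theorem one_sub_T_chernoff {x : ℝ} (h0 : 0 ≤ x) (h1 : x ≤ 1) (n j : ℕ) {l : ℝ} (hl : 0 ≤ l) :
    1 - T n (j+1) x ≤ Real.exp (l * j - n * x * (1 - Real.exp (-l))) := by
  have e : 1 - T n (j+1) x ≤ E1 x n (fun k => Real.exp (l*j) * Real.exp ((-l) * k)) := by
    have e : 1 - T n (j+1) x = E1 x n (fun k => 1 - if j + 1 ≤ k then 1 else 0) := by
      rw [E1_sub, E1_const]; rfl
    rw [e]
    apply E1_mono h0 h1
    intro k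
    rw [← Real.exp_add]
    split_ifs with h
    · simp only [sub_self]; positivity
    · rw [sub_zero]; apply Real.one_le_exp
      have : (k:ℝ) ≤ j := by exact_mod_cast (by omega : k ≤ j)
      nlinarith
  rw [E1_smul, E1_exp] at e
  refine e.trans ?_
  rw [sub_eq_add_neg (l * j), Real.exp_add]
  gcongr
  have : Real.exp (-l) ≤ 1 := by apply Real.exp_le_one_iff.2; linarith
  have : 0 ≤ Real.exp (-l) := by positivity
  calc (1 + x * (Real.exp (-l) - 1))^n ≤ (Real.exp (x * (Real.exp (-l) - 1)))^n := by
        gcongr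
        · nlinarith
        · linarith [Real.add_one_le_exp (x * (Real.exp (-l) - 1))]
    _ = _ := by rw [← Real.exp_nat_mul]; congr 1; ring

theorem T_markov {x : ℝ} (h0 : 0 ≤ x) (h1 : x ≤ 1) (n j : ℕ) : j * T n j x ≤ n * x := by
  unfold T
  rw [← E1_smul, ← E1_id]
  apply E1_mono h0 h1
  intro k
  split_ifs with h
  · simpa using h
  · simp

/-! ### covariance -/

theorem E2_one_right (s t : ℝ) (n : ℕ) : ∀ f, E2 s t n f (fun _ => 1) = E1 s n f := by
  induction n with
  | zero => intro f; simp [E1, E2]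
  | succ n ih => intro f; simp only [E1, E2]; rw [ih, ih]; ring

theorem E2_one_left (s t : ℝ) (n : ℕ) : ∀ f, E2 s t n (fun _ => 1) f = E1 t n f := by
  induction n with
  | zero => intro f; simp [E1, E2]
  | succ n ih => intro f; simp only [E1, E2]; rw [ih, ih]; ring

/-- variance -/
def V (x : ℝ) (n : ℕ) (f : ℕ → ℝ) : ℝ := E1 x n (fun k => f k ^ 2) - E1 x n f ^ 2

theorem cov_le {s t r : ℝ} (hs : 0 < s) (hst : s ≤ t) (ht : t ≤ 1) (hr : 0 < r)
    (h : s ≤ r ^ 2 * t) (n : ℕ) : ∀ f g : ℕ → ℝ,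
    2 * (E2 s t n f g - E1 s n f * E1 t n g) ≤ r * (V s n f + V t n g) := by
  induction n with
  | zero => intro f g; simp [E1, E2, V]
  | succ n ih =>
    intro f g
    have i1 := ih (fun k => f (k+1)) (fun k => g (k+1))
    have i2 := ih f (fun k => g (k+1))
    have i3 := ih f g
    simp only [E1, E2, V] at *
    set F0 := E1 s n (fun k => f (k+1))
    set F1 := E1 s n f
    set G0 := E1 t n (fun k => g (k+1))
    set G1 := E1 t n g
    set A0 := E1 s n (fun k => f (k+1) ^ 2)
    set A1 := E1 s n (fun k => f k ^ 2)
    set B0 := E1 t n (fun k => g (k+1) ^ 2)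
    set B1 := E1 t n (fun k => g k ^ 2)
    have j1 := mul_le_mul_of_nonneg_left i1 hs.le
    have j2 := mul_le_mul_of_nonneg_left i2 (sub_nonneg.2 hst)
    have j3 := mul_le_mul_of_nonneg_left i3 (sub_nonneg.2 ht)
    have key : 2 * (s * (1 - t) * (F0 - F1) * (G0 - G1)) ≤
        r * ((F0 - F1)^2 * (s * (1 - s)) + (G0 - G1)^2 * (t * (1 - t))) := by
      set a := F0 - F1
      set c := G0 - G1
      have q1 : 2 * (s * a * c) ≤ r * (a^2 * s + c^2 * t) := by
        have ht0 : 0 < t := by linarith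
        have : 0 ≤ (r * t) * (r * (a^2 * s + c^2 * t) - 2 * (s * a * c)) := by
          have e : (r * t) * (r * (a^2 * s + c^2 * t) - 2 * (s * a * c))
            = (r * t * c - s * a)^2 + a^2 * s * (r^2 * t - s) := by ring
          rw [e]
          have : 0 ≤ r^2 * t - s := by linarith
          positivity
        have := nonneg_of_mul_nonneg_right this (by positivity)
        linarith
      have q2 := mul_le_mul_of_nonneg_left q1 (sub_nonneg.2 ht)
      have q3 : a^2 * s * (1 - t) ≤ a^2 * s * (1 - s) := by gcongr
      nlinarith [mul_le_mul_of_nonneg_left q3 hr.le]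
    nlinarith [j1, j2, j3, key]

end BJ

end


noncomputable section

namespace BJ

/-- Number of sample points at most `s`. -/
def cnt (s : ℝ) {n : ℕ} (u : Fin n → ℝ) : ℕ := ∑ k, if u k ≤ s then 1 else 0

/-- uniform law -/
abbrev unif : Measure ℝ := MeasureTheory.volume.restrict (Set.Icc (0:ℝ) 1)

instance : IsProbabilityMeasure unif := ⟨by simp [unif]⟩

instance (n : ℕ) : IsProbabilityMeasure (nullMeasure n) := by
  unfold nullMeasure; infer_instance

theorem measurable_cnt (s : ℝ) (n : ℕ) : Measurable (fun u : Fin n → ℝ => cnt s u) := by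
  unfold cnt
  apply Finset.measurable_sum
  intro k _
  exact Measurable.ite (measurableSet_le (measurable_pi_apply k) measurable_const)
    measurable_const measurable_const

theorem cnt_le (s : ℝ) {n : ℕ} (u : Fin n → ℝ) : cnt s u ≤ n := by
  unfold cnt
  calc _ ≤ ∑ k : Fin n, 1 := Finset.sum_le_sum (fun k _ => by split_ifs <;> norm_num)
    _ = n := by simp

theorem cnt_succ (s : ℝ) {n : ℕ} (u : Fin (n+1) → ℝ) :
    cnt s u = (if u 0 ≤ s then 1 else 0) + cnt s (fun k : Fin n => u k.succ) := by
  unfold cnt; rw [Fin.sum_univ_succ]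

theorem integrable_cnt {n : ℕ} (F : ℕ → ℕ → ℝ) (s t : ℝ) (μ : Measure (Fin n → ℝ))
    [IsFiniteMeasure μ] : Integrable (fun u => F (cnt s u) (cnt t u)) μ := by
  have hm : Measurable (fun u : Fin n → ℝ => F (cnt s u) (cnt t u)) := by
    have : Measurable (fun p : ℕ × ℕ => F p.1 p.2) := Measurable.of_discrete
    exact this.comp ((measurable_cnt s n).prodMk (measurable_cnt t n))
  refine Integrable.of_bound hm.aestronglyMeasurable
    (∑ a ∈ Finset.range (n+1), ∑ b ∈ Finset.range (n+1), |F a b|) (ae_of_all _ fun u => ?_)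
  have h1 : cnt s u ∈ Finset.range (n+1) := by simpa [Nat.lt_succ_iff] using cnt_le s u
  have h2 : cnt t u ∈ Finset.range (n+1) := by simpa [Nat.lt_succ_iff] using cnt_le t u
  rw [Real.norm_eq_abs]
  calc |F (cnt s u) (cnt t u)| ≤ ∑ b ∈ Finset.range (n+1), |F (cnt s u) b| :=
        Finset.single_le_sum (f := fun b => |F (cnt s u) b|) (fun _ _ => abs_nonneg _) h2
    _ ≤ _ := Finset.single_le_sum (f := fun a => ∑ b ∈ Finset.range (n+1), |F a b|)
        (fun _ _ => Finset.sum_nonneg fun _ _ => abs_nonneg _) h1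

theorem integral_three {s t : ℝ} (hs : 0 ≤ s) (hst : s ≤ t) (ht : t ≤ 1) (a b c : ℝ) :
    ∫ x, (if x ≤ s then a else if x ≤ t then b else c) ∂unif
      = s * a + (t - s) * b + (1 - t) * c := by
  have e : (fun x : ℝ => if x ≤ s then a else if x ≤ t then b else c)
      = fun x => (Iic s).indicator (fun _ => a - b) x + (Iic t).indicator (fun _ => b - c) x + c := by
    funext x
    simp only [indicator, mem_Iic]
    split_ifs <;> first | linarith | (exfalso; linarith)
  have i1 : ∀ r d : ℝ, Integrable ((Iic r).indicator (fun _ => d)) unif := fun r d =>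
    (integrable_const d).indicator measurableSet_Iic
  have v : ∀ r : ℝ, 0 ≤ r → r ≤ 1 → unif.real (Iic r) = r := by
    intro r h0 h1
    rw [measureReal_restrict_apply measurableSet_Iic]
    have : Iic r ∩ Icc 0 1 = Icc 0 r := by
      ext x; simp only [mem_inter_iff, mem_Iic, mem_Icc]; constructor
      · rintro ⟨h, h2, _⟩; exact ⟨h2, h⟩
      · rintro ⟨h, h2⟩; exact ⟨h2, h, by linarith⟩
    rw [this]; simp [h0]
  have i2 : Integrable (fun x => (Iic s).indicator (fun _ => a - b) x + (Iic t).indicator (fun _ => b - c) x) unif :=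
    (i1 _ _).add (i1 _ _)
  rw [e, integral_add i2 (integrable_const c), integral_add (i1 _ _) (i1 _ _),
    integral_indicator_const _ measurableSet_Iic, integral_indicator_const _ measurableSet_Iic,
    v s hs (hst.trans ht), v t (hs.trans hst) ht]
  simp
  ring

theorem integral_cnt {s t : ℝ} (hs : 0 ≤ s) (hst : s ≤ t) (ht : t ≤ 1) (n : ℕ) : ∀ f g : ℕ → ℝ,
    ∫ u, f (cnt s u) * g (cnt t u) ∂(nullMeasure n) = E2 s t n f g := by
  induction n with
  | zero =>
    intro f g
    simp [cnt, E2]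
  | succ n ih =>
    intro f g
    have mp := (measurePreserving_piFinSuccAbove (fun _ : Fin (n+1) => unif) 0).symm
    have e1 := mp.integral_comp' (g := fun u => f (cnt s u) * g (cnt t u))
    have hF : ∀ p : ℝ × (Fin n → ℝ), 
        ((MeasurableEquiv.piFinSuccAbove (fun _ : Fin (n+1) => ℝ) 0).symm p) 0 = p.1 := by
      intro p; simp [MeasurableEquiv.piFinSuccAbove]
    have hS : ∀ (p : ℝ × (Fin n → ℝ)) (k : Fin n),
        ((MeasurableEquiv.piFinSuccAbove (fun _ : Fin (n+1) => ℝ) 0).symm p) k.succ = p.2 k := by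
      intro p k; simp [MeasurableEquiv.piFinSuccAbove]
    have hInt : Integrable (fun u : Fin (n+1) → ℝ => f (cnt s u) * g (cnt t u))
        (Measure.pi (fun _ : Fin (n+1) => unif)) :=
      integrable_cnt (fun a b => f a * g b) s t _
    have hInt2 := (mp.integrable_comp_emb (MeasurableEquiv.measurableEmbedding _)).2 hInt
    simp only [Function.comp_def] at hInt2
    change ∫ u, f (cnt s u) * g (cnt t u) ∂(Measure.pi (fun _ : Fin (n+1) => unif)) = _
    rw [← e1, integral_prod _ hInt2]
    simp only [E2]
    rw [← integral_three hs hst ht]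
    congr 1; funext x
    have hnu : (Measure.pi fun j : Fin n => unif) = nullMeasure n := rfl
    simp only [cnt_succ, hF, hS]
    by_cases h1 : x ≤ s
    · have h2 : x ≤ t := h1.trans hst
      simp only [h1, h2, if_true]
      rw [← ih]; simp only [add_comm 1, hnu]
    · by_cases h2 : x ≤ t
      · simp only [h1, h2, if_true, if_false]
        rw [← ih]; simp only [add_comm 1, zero_add, hnu]
      · simp only [h1, h2, if_false]
        rw [← ih]; simp only [zero_add, hnu]

theorem prob_cnt {s : ℝ} (hs : 0 ≤ s) (ht : s ≤ 1) (n j : ℕ) :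
    (nullMeasure n).real {u | j ≤ cnt s u} = T n j s := by
  have h := integral_cnt hs le_rfl ht n (fun k => if j ≤ k then 1 else 0) (fun _ => 1)
  rw [E2_one_right] at h
  have hm : MeasurableSet {u : Fin n → ℝ | j ≤ cnt s u} :=
    measurableSet_le measurable_const (measurable_cnt s n)
  rw [T, ← h, ← integral_indicator_one hm]
  congr 1; funext u
  simp [indicator]

theorem prob_cnt2 {s t : ℝ} (hs : 0 ≤ s) (hst : s ≤ t) (ht : t ≤ 1) (n i j : ℕ) :
    (nullMeasure n).real ({u | i ≤ cnt s u} ∩ {u | j ≤ cnt t u}) =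
     E2 s t n (fun k => if i ≤ k then 1 else 0) (fun k => if j ≤ k then 1 else 0) := by
  have h := integral_cnt hs hst ht n (fun k => if i ≤ k then 1 else 0) (fun k => if j ≤ k then 1 else 0)
  have hm : MeasurableSet ({u : Fin n → ℝ | i ≤ cnt s u} ∩ {u | j ≤ cnt t u}) :=
    (measurableSet_le measurable_const (measurable_cnt s n)).inter
    (measurableSet_le measurable_const (measurable_cnt t n))
  rw [← h, ← integral_indicator_one hm]
  congr 1; funext u
  simp only [indicator, mem_inter_iff, mem_ofPred_eq]
  split_ifs <;> simp_all

theorem prob_cov {s t r e : ℝ} (hs : 0 < s) (hst : s ≤ t) (ht : t ≤ 1) (hr : 0 < r)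
    (h : s ≤ r ^ 2 * t) (n i j : ℕ) (hi : T n i s = e) (hj : T n j t = e) :
    (nullMeasure n).real ({u | i ≤ cnt s u} ∩ {u | j ≤ cnt t u}) - e * e ≤ r * e := by
  rw [prob_cnt2 hs.le hst ht]
  have := cov_le hs hst ht hr h n (fun k => if i ≤ k then 1 else 0) (fun k => if j ≤ k then 1 else 0)
  have q : ∀ a : ℕ, (fun k : ℕ => (if a ≤ k then (1:ℝ) else 0)^2) = fun k => if a ≤ k then 1 else 0 := by
    intro a; funext k; split_ifs <;> norm_num
  simp only [V] at this
  rw [q, q] at this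
  change 2 * (_ - T n i s * T n j t) ≤ r * (T n i s - (T n i s)^2 + (T n j t - (T n j t)^2)) at this
  rw [hi, hj] at this
  nlinarith [mul_nonneg hr.le (sq_nonneg e)]

end BJ

end


noncomputable section

namespace BJ

theorem betaPDF_eq {m i : ℕ} (h : i ≤ m) (t : ℝ) :
    betaPDF ((i : ℕ) + 1 : ℝ) (((m + 1 : ℕ) : ℝ) - (i : ℕ)) t = (m + 1) * bp m i t := by
  unfold betaPDF bp
  have e1 : ((m + 1 : ℕ) : ℝ) - (i : ℕ) = ((m - i : ℕ) : ℝ) + 1 := by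
    push_cast [Nat.cast_sub h]; ring
  have e2 : ((i:ℝ) + 1 + (((m - i : ℕ) : ℝ) + 1)) = ((m + 1 : ℕ) : ℝ) + 1 := by
    push_cast [Nat.cast_sub h]; ring
  rw [e1, e2, add_sub_cancel_right, add_sub_cancel_right, Real.rpow_natCast, Real.rpow_natCast,
    Real.Gamma_nat_eq_factorial, Real.Gamma_nat_eq_factorial, Real.Gamma_nat_eq_factorial,
    Nat.cast_choose ℝ h, Nat.factorial_succ]
  have := Nat.factorial_pos i
  have := Nat.factorial_pos (m - i)
  have := Nat.factorial_pos m
  push_cast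
  field_simp

theorem regIncBeta_eq {m i : ℕ} (h : i ≤ m) {x : ℝ} (hx : 0 ≤ x) :
    regIncBeta ((i : ℕ) + 1 : ℝ) (((m + 1 : ℕ) : ℝ) - (i : ℕ)) x = T (m+1) (i+1) x := by
  unfold regIncBeta
  simp only [betaPDF_eq h]
  rw [← intervalIntegral.integral_of_le hx,
    intervalIntegral.integral_eq_sub_of_hasDerivAt (f := fun x => T (m+1) (i+1) x)
      (fun y _ => hasDerivAt_T m i y), T_zero, sub_zero]
  apply Continuous.intervalIntegrable
  unfold bp
  fun_prop

/-- the unit cube -/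
def cube (n : ℕ) : Set (Fin n → ℝ) := {u | ∀ k, u k ∈ Icc (0:ℝ) 1}

theorem orderStat_mem {n : ℕ} {u : Fin n → ℝ} (hu : u ∈ cube n) (i : Fin n) :
    orderStat u i ∈ Icc (0:ℝ) 1 := hu _

theorem pOrd_eq {n : ℕ} {u : Fin n → ℝ} (hu : u ∈ cube n) (i : Fin n) :
    pOrd u i = T n (i + 1) (orderStat u i) := by
  rcases n with _ | m
  · exact i.elim0
  · unfold pOrd
    exact regIncBeta_eq (Nat.lt_succ_iff.1 i.2) (orderStat_mem hu i).1

theorem orderStat_le_iff {n : ℕ} (u : Fin n → ℝ) (i : Fin n) (x : ℝ) :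
    orderStat u i ≤ x ↔ (i : ℕ) + 1 ≤ cnt x u := by
  have h := Tuple.lt_card_le_iff_apply_le_of_monotone (j := i) (f := u ∘ Tuple.sort u) (a := x)
    (Tuple.monotone_sort u)
  have e : (Finset.univ.filter (fun k => (u ∘ Tuple.sort u) k ≤ x)).card = cnt x u := by
    unfold cnt
    rw [Finset.card_filter]
    exact Equiv.sum_comp (Tuple.sort u) (fun k => if u k ≤ x then 1 else 0)
  rw [e] at h
  exact h.symm

theorem orderStat_mono {n : ℕ} (u : Fin n → ℝ) : Monotone (orderStat u) := Tuple.monotone_sort u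

theorem cube_compl (n : ℕ) : nullMeasure n (cube n)ᶜ = 0 := by
  have : ∀ᵐ u ∂(nullMeasure n), ∀ k, u k ∈ Icc (0:ℝ) 1 := by
    rw [ae_all_iff]
    intro k
    have h : ∀ᵐ x ∂unif, x ∈ Icc (0:ℝ) 1 := ae_restrict_mem measurableSet_Icc
    exact (MeasureTheory.Measure.quasiMeasurePreserving_eval (fun _ : Fin n => unif) k).ae h
  exact this

/-- reflection -/
def refl {n : ℕ} (u : Fin n → ℝ) : Fin n → ℝ := fun k => 1 - u k

theorem refl_mem {n : ℕ} {u : Fin n → ℝ} (hu : u ∈ cube n) : refl u ∈ cube n := by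
  intro k
  have := hu k
  simp only [refl, mem_Icc] at *
  constructor <;> linarith [this.1, this.2]

theorem mp_refl (n : ℕ) : MeasurePreserving (refl (n := n)) (nullMeasure n) (nullMeasure n) := by
  have h : MeasurePreserving (fun x : ℝ => 1 - x) unif unif := by
    have := (volume.measurePreserving_sub_left (1:ℝ)).restrict_preimage
      (measurableSet_Icc (a := (0:ℝ)) (b := 1))
    have e : (fun x : ℝ => 1 - x) ⁻¹' Icc 0 1 = Icc 0 1 := by
      ext x; simp only [mem_preimage, mem_Icc]; constructor <;> rintro ⟨a, b⟩ <;> constructor <;> linarith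
    rwa [e] at this
  exact measurePreserving_pi (fun _ : Fin n => unif) (fun _ => unif) (fun _ => h)

theorem orderStat_refl {n : ℕ} (u : Fin n → ℝ) (i : Fin n) :
    orderStat (refl u) i = 1 - orderStat u i.rev := by
  have h1 : Monotone ((refl u) ∘ (Fin.revPerm.trans (Tuple.sort u))) := by
    intro a b hab
    have := Tuple.monotone_sort u (Fin.rev_le_rev.2 hab)
    simp only [Function.comp, refl, Equiv.trans_apply, Fin.revPerm_apply] at *
    linarith
  have := (Tuple.comp_sort_eq_comp_iff_monotone (f := refl u) (σ := Fin.revPerm.trans (Tuple.sort u))).2 h1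
  have := congrFun this i
  simp only [Function.comp] at this
  rw [orderStat, ← this]
  simp [refl, orderStat]

theorem pOrd_refl {n : ℕ} {u : Fin n → ℝ} (hu : u ∈ cube n) (i : Fin n) :
    pOrd (refl u) i = 1 - pOrd u i.rev := by
  rw [pOrd_eq (refl_mem hu), pOrd_eq hu, orderStat_refl, T_flip i.2]
  congr 2
  rw [Fin.val_rev]
  have := i.2
  omega

end BJ

end


noncomputable section

namespace BJ

theorem block_up {n m b : ℕ} (hn : m + b < n) {e x : ℝ} (he : 0 < e)
    (hx : x ∈ Icc (0:ℝ) 1) (hT : T n (m + b + 1) x = 2 * e) :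
    (nullMeasure n).real {u | u ∈ cube n ∧ ∃ i : Fin n, m ≤ (i:ℕ) ∧ (i:ℕ) ≤ m + b ∧ pOrd u i ≤ e}
      ≤ T n (m + 1) x := by
  rw [← prob_cnt hx.1 hx.2]
  refine measureReal_mono ?_
  rintro u ⟨hu, i, h1, h2, h3⟩
  obtain ⟨N, rfl⟩ : ∃ N, n = N + 1 := ⟨n - 1, by omega⟩
  rw [pOrd_eq hu] at h3
  have hlt : orderStat u i < x := by
    by_contra hcon
    push Not at hcon
    have a1 := T_mono N i hx (orderStat_mem hu i) hcon
    have a2 := T_anti hx.1 hx.2 (N+1) (show (i:ℕ) + 1 ≤ m + b + 1 by omega)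
    linarith
  have : orderStat u ⟨m, by omega⟩ ≤ x := (orderStat_mono u (show (⟨m, by omega⟩ : Fin (N+1)) ≤ i from h1)).trans hlt.le
  exact (orderStat_le_iff u _ x).1 this

theorem block_down {n m b : ℕ} (hn : m + b < n) {e x : ℝ} (he : 0 < e)
    (hx : x ∈ Icc (0:ℝ) 1) (hT : T n (m + 1) x = 1 - 2 * e) :
    (nullMeasure n).real {u | u ∈ cube n ∧ ∃ i : Fin n, m ≤ (i:ℕ) ∧ (i:ℕ) ≤ m + b ∧ 1 - pOrd u i ≤ e}
      ≤ 1 - T n (m + b + 1) x := by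
  have hm : MeasurableSet {u : Fin n → ℝ | m + b + 1 ≤ cnt x u} :=
    measurableSet_le measurable_const (measurable_cnt x n)
  rw [← prob_cnt hx.1 hx.2, ← probReal_compl_eq_one_sub hm]
  refine measureReal_mono ?_
  rintro u ⟨hu, i, h1, h2, h3⟩
  obtain ⟨N, rfl⟩ : ∃ N, n = N + 1 := ⟨n - 1, by omega⟩
  rw [pOrd_eq hu] at h3
  have hlt : x < orderStat u i := by
    by_contra hcon
    push Not at hcon
    have a1 := T_mono N i (orderStat_mem hu i) hx hcon
    have a2 := T_anti hx.1 hx.2 (N+1) (show m + 1 ≤ (i:ℕ) + 1 by omega)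
    linarith
  intro hc
  have hc' := (orderStat_le_iff u ⟨m + b, hn⟩ x).2 hc
  have := orderStat_mono u (show i ≤ (⟨m + b, hn⟩ : Fin (N+1)) from h2)
  linarith

theorem bp_ratio {n k : ℕ} (h : k < n) (x : ℝ) :
    bp n k x * (((n:ℝ) - k) * x) = bp n (k+1) x * ((k + 1) * (1 - x)) := by
  unfold bp
  have e : n - k = (n - (k+1)) + 1 := by omega
  have c : ((n.choose (k+1) : ℕ) : ℝ) * (k + 1) = n.choose k * ((n:ℝ) - k) := by
    rw [← Nat.cast_sub h.le]
    exact_mod_cast Nat.choose_succ_right_eq n k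
  rw [e]
  have : (n.choose k : ℝ) * x ^ k * (1 - x) ^ (n - (k + 1) + 1) * (((n:ℝ) - k) * x)
    = (n.choose k * ((n:ℝ) - k)) * x ^ (k+1) * (1 - x) ^ (n - (k + 1) + 1) := by ring
  rw [this, ← c]; ring

theorem T_split (n : ℕ) (x : ℝ) (lo b : ℕ) :
    T n lo x = T n (lo + b) x + ∑ k ∈ Finset.Ico lo (lo + b), bp n k x := by
  rw [← E1_mem, T, T, ← E1_add]
  congr 1; funext k
  simp only [Finset.mem_Ico]
  split_ifs <;> first | omega | norm_num

theorem ratio_up {n lo b : ℕ} {x c : ℝ} (hx : x ∈ Icc (0:ℝ) 1) (hc : 0 ≤ c) (hn : lo + 2 * b ≤ n)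
    (hx0 : 0 < x)
    (h : ∀ k : ℕ, lo ≤ k → k < lo + 2 * b → ((k:ℝ) + 1) * (1 - x) ≤ c * (((n:ℝ) - k) * x)) :
    T n lo x ≤ (1 + c ^ b) * T n (lo + b) x := by
  have step : ∀ k : ℕ, lo ≤ k → k < lo + 2 * b → bp n k x ≤ c * bp n (k+1) x := by
    intro k h1 h2
    have hk : k < n := by omega
    have hk' : (k:ℝ) < n := by exact_mod_cast hk
    have r := bp_ratio hk x
    have q := mul_le_mul_of_nonneg_left (h k h1 h2) (bp_nonneg hx.1 hx.2 n (k+1))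
    rw [← r] at q
    have pos : 0 < ((n:ℝ) - k) * x := by
      have : 0 < (n:ℝ) - k := by linarith
      positivity
    nlinarith
  have multi : ∀ d k : ℕ, lo ≤ k → k + d ≤ lo + 2 * b → bp n k x ≤ c ^ d * bp n (k+d) x := by
    intro d
    induction d with
    | zero => intro k _ _; simp
    | succ d ih =>
      intro k h1 h2
      have a1 := ih k h1 (by omega)
      have a2 := step (k+d) (by omega) (by omega)
      calc _ ≤ _ := a1
        _ ≤ c ^ d * (c * bp n (k+d+1) x) := by gcongr
        _ = _ := by rw [pow_succ, mul_assoc]; rfl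
  rw [T_split n x lo b]
  have e1 : ∑ k ∈ Finset.Ico lo (lo + b), bp n k x ≤ c ^ b * ∑ k ∈ Finset.Ico lo (lo + b), bp n (k+b) x := by
    rw [Finset.mul_sum]
    apply Finset.sum_le_sum
    intro k hk
    rw [Finset.mem_Ico] at hk
    exact multi b k hk.1 (by omega)
  have e2 : ∑ k ∈ Finset.Ico lo (lo + b), bp n (k+b) x ≤ T n (lo + b) x := by
    rw [T_split n x (lo + b) b, Finset.sum_Ico_add' (fun k => bp n k x)]
    linarith [T_nonneg hx.1 hx.2 n (lo + b + b)]
  nlinarith [mul_le_mul_of_nonneg_left e2 (pow_nonneg hc b)]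

theorem ratio_down {n lo b : ℕ} {x c : ℝ} (hx : x ∈ Icc (0:ℝ) 1) (hc : 0 ≤ c) (hn : lo + 2 * b ≤ n)
    (hx0 : x < 1)
    (h : ∀ k : ℕ, lo ≤ k → k < lo + 2 * b → ((n:ℝ) - k) * x ≤ c * (((k:ℝ) + 1) * (1 - x))) :
    1 - T n (lo + b + b) x ≤ (1 + c ^ b) * (1 - T n (lo + b) x) := by
  have step : ∀ k : ℕ, lo ≤ k → k < lo + 2 * b → bp n (k+1) x ≤ c * bp n k x := by
    intro k h1 h2
    have hk : k < n := by omega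
    have r := bp_ratio hk x
    have q := mul_le_mul_of_nonneg_left (h k h1 h2) (bp_nonneg hx.1 hx.2 n k)
    rw [r] at q
    have pos : 0 < ((k:ℝ) + 1) * (1 - x) := by
      have : 0 < 1 - x := by linarith
      positivity
    nlinarith
  have multi : ∀ d k : ℕ, lo ≤ k → k + d ≤ lo + 2 * b → bp n (k+d) x ≤ c ^ d * bp n k x := by
    intro d
    induction d with
    | zero => intro k _ _; simp
    | succ d ih =>
      intro k h1 h2
      have a1 := ih k h1 (by omega)
      have a2 := step (k+d) (by omega) (by omega)
      calc _ ≤ _ := a2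
        _ ≤ c * (c ^ d * bp n k x) := by gcongr
        _ = _ := by rw [pow_succ]; ring
  have s1 := T_split n x lo b
  have s2 := T_split n x (lo + b) b
  have e1 : ∑ k ∈ Finset.Ico (lo + b) (lo + b + b), bp n k x ≤ c ^ b * ∑ k ∈ Finset.Ico lo (lo + b), bp n k x := by
    rw [← Finset.sum_Ico_add' (fun k => bp n k x), Finset.mul_sum]
    apply Finset.sum_le_sum
    intro k hk
    rw [Finset.mem_Ico] at hk
    exact multi b k hk.1 (by omega)
  have e2 : ∑ k ∈ Finset.Ico lo (lo + b), bp n k x ≤ 1 - T n (lo + b) x := by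
    linarith [T_le_one hx.1 hx.2 n lo]
  nlinarith [mul_le_mul_of_nonneg_left e2 (pow_nonneg hc b)]

theorem pow_c {b : ℕ} (hb : 8 ≤ b) : (1 + 4 * (1 / (b:ℝ))) ^ b ≤ Real.exp 4 := by
  have hb' : (8:ℝ) ≤ b := by exact_mod_cast hb
  calc (1 + 4 * (1 / (b:ℝ))) ^ b ≤ (Real.exp (4 * (1/(b:ℝ)))) ^ b := by
        gcongr
        linarith [Real.add_one_le_exp (4 * (1/(b:ℝ)))]
    _ = Real.exp 4 := by
        rw [← Real.exp_nat_mul]; congr 1; field_simp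

/-- quantile lower bound from Chernoff -/
theorem nx_ge {n j : ℕ} {x h e : ℝ} (hx : x ∈ Icc (0:ℝ) 1) (h0 : 0 < h) (h1 : h ≤ 1/8)
    (hT : T n j x = e) (he : Real.exp (-(j * h ^ 3)) < e) : j * (1 - h) ≤ n * x := by
  by_contra hc
  push Not at hc
  have c := T_chernoff hx.1 hx.2 n j h0.le
  rw [hT] at c
  have q : Real.exp h - 1 ≤ h + h^2 := by
    have := Real.abs_exp_sub_one_sub_id_le (x := h) (by rw [abs_of_pos h0]; linarith)
    have := (abs_le.1 this).2
    linarith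
  have q0 : 0 ≤ Real.exp h - 1 := by linarith [Real.one_le_exp h0.le]
  have : -(h * j) + n * x * (Real.exp h - 1) ≤ -(j * h^3) := by
    have a1 : n * x * (Real.exp h - 1) ≤ (j * (1 - h)) * (Real.exp h - 1) := by gcongr
    have a2 : (j * (1 - h)) * (Real.exp h - 1) ≤ (j * (1 - h)) * (h + h^2) := by
      have : 0 ≤ 1 - h := by linarith
      gcongr
    nlinarith
  have := Real.exp_le_exp.2 this
  linarith

theorem nx_le {n j : ℕ} {x h e : ℝ} (hx : x ∈ Icc (0:ℝ) 1) (h0 : 0 < h) (h1 : h ≤ 1/8)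
    (hT : 1 - T n (j+1) x = e) (he : Real.exp (-(j * h ^ 3)) < e) : n * x ≤ j * (1 + h) := by
  by_contra hc
  push Not at hc
  have c := one_sub_T_chernoff hx.1 hx.2 n j h0.le
  rw [hT] at c
  have q : h - h^2/2 - h^3/2 ≤ 1 - Real.exp (-h) := by
    have := Real.exp_bound_div_one_sub_of_interval h0.le (by linarith : h < 1)
    have g := Real.quadratic_le_exp_of_nonneg h0.le
    have e1 : Real.exp (-h) * Real.exp h = 1 := by rw [← Real.exp_add]; simp
    have e0 := Real.exp_pos (-h)
    have e2 : Real.exp (-h) * (1 + h + h^2/2) ≤ 1 := by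
      calc _ ≤ Real.exp (-h) * Real.exp h := by gcongr
        _ = 1 := e1
    have e3 : (1:ℝ) ≤ (1 - h + h^2/2 + h^3/2) * (1 + h + h^2/2) := by
      have : (1 - h + h^2/2 + h^3/2) * (1 + h + h^2/2) = 1 + h^3/2 + 3 * h^4/4 + h^5/4 := by ring
      rw [this]
      have : 0 ≤ h^3/2 + 3 * h^4/4 + h^5/4 := by positivity
      linarith
    have pos : 0 < 1 + h + h^2/2 := by positivity
    have : Real.exp (-h) ≤ 1 - h + h^2/2 + h^3/2 := by
      by_contra hh
      push Not at hh
      nlinarith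
    linarith
  have : h * j - n * x * (1 - Real.exp (-h)) ≤ -(j * h^3) := by
    have q0 : 0 ≤ h - h^2/2 - h^3/2 := by nlinarith [sq_nonneg h]
    have jn : (0:ℝ) ≤ j := by positivity
    have a1 : (j * (1 + h)) * (h - h^2/2 - h^3/2) ≤ n * x * (1 - Real.exp (-h)) := by
      apply mul_le_mul hc.le q q0
      have := hx.1
      positivity
    have a2 : h + h^3 ≤ (1 + h) * (h - h^2/2 - h^3/2) := by
      have : (1 + h) * (h - h^2/2 - h^3/2) - (h + h^3) = h^2 * (1/2 - 2 * h - h^2/2) := by ring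
      have : 0 ≤ h^2 * (1/2 - 2 * h - h^2/2) := by
        apply mul_nonneg (sq_nonneg h); nlinarith
      linarith
    nlinarith [mul_le_mul_of_nonneg_left a2 jn]
  have := Real.exp_le_exp.2 this
  linarith

theorem c_ineq {h : ℝ} (h0 : 0 < h) (h1 : h ≤ 1/8) : 1 + h ≤ (1 + 4 * h) * (1 - h)^2 := by
  nlinarith [mul_pos h0 h0, mul_pos h0 (mul_pos h0 h0), mul_nonneg h0.le (sub_nonneg.2 h1)]

theorem edge_up {n m b : ℕ} {e : ℝ} (hb : 8 ≤ b) (hm : b ^ 2 ≤ m) (hn : b * (m + 1 + 2 * b) ≤ n)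
    (he : Real.exp (-(m / (b:ℝ)^3)) < 2 * e) (he1 : 2 * e ≤ 1) :
    (nullMeasure n).real {u | u ∈ cube n ∧ ∃ i : Fin n, m ≤ (i:ℕ) ∧ (i:ℕ) ≤ m + b ∧ pOrd u i ≤ e}
      ≤ (1 + Real.exp 4) * (2 * e) := by
  have hnn : m + 1 + 2 * b ≤ n := le_trans (Nat.le_mul_of_pos_left _ (by omega)) hn
  have epos : 0 < 2 * e := lt_trans (Real.exp_pos _) he
  obtain ⟨x, hx, hT⟩ := exists_T_eq (n := n) (j := m + b) (by omega) epos.le he1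
  refine (block_up (by omega) (by linarith) hx hT).trans ?_
  have hb' : (8:ℝ) ≤ b := by exact_mod_cast hb
  set h : ℝ := 1 / b with hh
  have h0 : 0 < h := by positivity
  have hbh : (b:ℝ) * h = 1 := by rw [hh]; field_simp
  have h1 : h ≤ 1 / 8 := by rw [hh]; gcongr
  have hm' : (b:ℝ)^2 ≤ m := by exact_mod_cast hm
  have hn' : (b:ℝ) * (m + 1 + 2 * b) ≤ n := by exact_mod_cast hn
  have nx : ((m + b + 1 : ℕ):ℝ) * (1 - h) ≤ n * x := by
    apply nx_ge hx h0 h1 hT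
    refine lt_of_le_of_lt ?_ he
    apply Real.exp_le_exp.2
    have : (m / (b:ℝ)^3) = m * h^3 := by rw [hh]; field_simp
    rw [this]; push_cast
    have : 0 ≤ h^3 := by positivity
    nlinarith
  push_cast at nx
  have npos : (0:ℝ) < n := by
    have : 0 < n := by omega
    exact_mod_cast this
  have xpos : 0 < x := by
    have : 0 < n * x := lt_of_lt_of_le (mul_pos (by positivity) (by linarith)) nx
    exact pos_of_mul_pos_right this npos.le
  have key := ratio_up (n := n) (lo := m + 1) (b := b) (c := 1 + 4 * h) hx (by positivity) (by omega) xpos ?_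
  · have e3 : m + 1 + b = m + b + 1 := by ring
    rw [e3, hT] at key
    refine key.trans ?_
    have := pow_c hb
    gcongr
  · intro k k1 k2
    have k2' : (k:ℝ) + 1 ≤ m + 1 + 2 * b := by
      have : k + 1 ≤ m + 1 + 2 * b := by omega
      exact_mod_cast this
    have kn : (n:ℝ) * (1 - h) ≤ n - k := by
      have : (k:ℝ) ≤ n * h := by
        have : (b * h) * (m + 1 + 2 * b) ≤ n * h := by nlinarith
        rw [hbh] at this; linarith
      linarith
    have g1 : ((k:ℝ)+1) ≤ (m + b + 1) * (1 + h) := by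
      have : (b:ℝ) ≤ (m + b + 1) * h := by
        have : (b:ℝ)^2 * h ≤ m * h := by gcongr
        have : (b:ℝ)^2 * h = b := by rw [sq, mul_assoc, hbh, mul_one]
        nlinarith
      nlinarith
    have g2 : ((n:ℝ) * x) * (1 - h) ≤ (n - k) * x := by nlinarith
    have h1' : 0 ≤ 1 - h := by linarith
    calc ((k:ℝ)+1) * (1 - x) ≤ (k+1) * 1 := by gcongr; linarith
      _ ≤ (m + b + 1) * (1 + h) := by linarith
      _ ≤ (m + b + 1) * ((1 + 4 * h) * (1 - h)^2) := by gcongr; exact c_ineq h0 h1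
      _ = (1 + 4 * h) * (((m + b + 1) * (1 - h)) * (1 - h)) := by ring
      _ ≤ (1 + 4 * h) * ((n * x) * (1 - h)) := by gcongr
      _ ≤ _ := by gcongr

theorem edge_down {n m b : ℕ} {e : ℝ} (hb : 8 ≤ b) (hm : b ^ 2 ≤ m) (hn : 2 * b * (m + 1 + 2 * b) ≤ n)
    (he : Real.exp (-(m / (b:ℝ)^3)) < 2 * e) (he1 : 2 * e ≤ 1) :
    (nullMeasure n).real {u | u ∈ cube n ∧ ∃ i : Fin n, m ≤ (i:ℕ) ∧ (i:ℕ) ≤ m + b ∧ 1 - pOrd u i ≤ e}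
      ≤ (1 + Real.exp 4) * (2 * e) := by
  have hnn : m + 1 + 2 * b ≤ n := le_trans (Nat.le_mul_of_pos_left _ (by omega)) hn
  have epos : 0 < 2 * e := lt_trans (Real.exp_pos _) he
  obtain ⟨x, hx, hT⟩ := exists_T_eq (n := n) (j := m) (e := 1 - 2 * e) (by omega) (by linarith) (by linarith)
  refine (block_down (by omega) (by linarith) hx hT).trans ?_
  have hb' : (8:ℝ) ≤ b := by exact_mod_cast hb
  set h : ℝ := 1 / b with hh
  have h0 : 0 < h := by positivity
  have hbh : (b:ℝ) * h = 1 := by rw [hh]; field_simp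
  have h1 : h ≤ 1 / 8 := by rw [hh]; gcongr
  have hm' : (b:ℝ)^2 ≤ m := by exact_mod_cast hm
  have hn' : 2 * (b:ℝ) * (m + 1 + 2 * b) ≤ n := by exact_mod_cast hn
  have nx : n * x ≤ (m:ℝ) * (1 + h) := by
    apply nx_le hx h0 h1 (e := 2 * e) (by rw [hT]; ring)
    have : (m / (b:ℝ)^3) = m * h^3 := by rw [hh]; field_simp
    rwa [this] at he
  have npos : (0:ℝ) < n := by
    have : 0 < n := by omega
    exact_mod_cast this
  have xh : x ≤ h := by
    have a1 : (m:ℝ) * (1 + h) ≤ n * h := by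
      have : (b * h) * (2 * (m + 1 + 2 * b)) ≤ n * h := by nlinarith
      rw [hbh] at this
      nlinarith [(by positivity : (0:ℝ) ≤ m)]
    exact le_of_mul_le_mul_left (nx.trans a1) npos
  have hbm : b ≤ m := le_trans (by nlinarith) hm
  have key := ratio_down (n := n) (lo := m + 1 - b) (b := b) (c := 1 + 4 * h) hx (by positivity) (by omega)
    (by linarith) ?_
  · have e3 : m + 1 - b + b = m + 1 := by omega
    rw [e3, hT] at key
    have e4 : m + 1 + b = m + b + 1 := by ring
    rw [e4] at key
    refine key.trans ?_
    have := pow_c hb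
    have e5 : 1 - (1 - 2 * e) = 2 * e := by ring
    rw [e5]
    gcongr
  · intro k k1 k2
    have k1' : (m:ℝ) - b ≤ k + 1 := by
      have : m ≤ k + 1 + b := by omega
      have : (m:ℝ) ≤ k + 1 + b := by exact_mod_cast this
      linarith
    have g1 : (m:ℝ) * (1 - h) ≤ k + 1 := by
      have : (b:ℝ) ≤ m * h := by
        have : (b:ℝ)^2 * h ≤ m * h := by gcongr
        have : (b:ℝ)^2 * h = b := by rw [sq, mul_assoc, hbh, mul_one]
        linarith
      linarith
    have h1' : 0 ≤ 1 - h := by linarith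
    have := hx.1
    calc ((n:ℝ) - k) * x ≤ n * x := by gcongr; linarith [(by positivity : (0:ℝ) ≤ k)]
      _ ≤ m * (1 + h) := nx
      _ ≤ m * ((1 + 4 * h) * (1 - h)^2) := by gcongr; exact c_ineq h0 h1
      _ = (1 + 4 * h) * ((m * (1 - h)) * (1 - h)) := by ring
      _ ≤ (1 + 4 * h) * ((k + 1) * (1 - x)) := by gcongr

theorem single_up {n m : ℕ} {e : ℝ} (hn : m < n) (he : 0 < e) (he1 : 2 * e ≤ 1) :
    (nullMeasure n).real {u | u ∈ cube n ∧ ∃ i : Fin n, m ≤ (i:ℕ) ∧ (i:ℕ) ≤ m + 0 ∧ pOrd u i ≤ e}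
      ≤ 2 * e := by
  obtain ⟨x, hx, hT⟩ := exists_T_eq (n := n) (j := m) (by omega) (by linarith : 0 ≤ 2 * e) he1
  exact (block_up (b := 0) (by omega) he hx hT).trans hT.le

theorem single_down {n m : ℕ} {e : ℝ} (hn : m < n) (he : 0 < e) (he1 : 2 * e ≤ 1) :
    (nullMeasure n).real {u | u ∈ cube n ∧ ∃ i : Fin n, m ≤ (i:ℕ) ∧ (i:ℕ) ≤ m + 0 ∧ 1 - pOrd u i ≤ e}
      ≤ 2 * e := by
  obtain ⟨x, hx, hT⟩ := exists_T_eq (n := n) (j := m) (e := 1 - 2 * e) (by omega) (by linarith) (by linarith)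
  refine (block_down (b := 0) (by omega) he hx hT).trans ?_
  have : T n (m + 0 + 1) x = 1 - 2 * e := hT
  linarith

theorem edge_union {n b m0 R : ℕ} {e : ℝ} (Q : (Fin n → ℝ) → Fin n → Prop) (hb : 8 ≤ b)
    (h1 : ∀ m < m0, (nullMeasure n).real
      {u | u ∈ cube n ∧ ∃ i : Fin n, m ≤ (i:ℕ) ∧ (i:ℕ) ≤ m + 0 ∧ Q u i} ≤ 2 * e)
    (h2 : ∀ r < R, (nullMeasure n).real
      {u | u ∈ cube n ∧ ∃ i : Fin n, m0 + r * b ≤ (i:ℕ) ∧ (i:ℕ) ≤ m0 + r * b + b ∧ Q u i}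
        ≤ (1 + Real.exp 4) * (2 * e)) :
    (nullMeasure n).real {u | u ∈ cube n ∧ ∃ i : Fin n, (i:ℕ) < m0 + R * b ∧ Q u i}
      ≤ m0 * (2 * e) + R * ((1 + Real.exp 4) * (2 * e)) := by
  have sub : {u | u ∈ cube n ∧ ∃ i : Fin n, (i:ℕ) < m0 + R * b ∧ Q u i} ⊆
      (⋃ m ∈ Finset.range m0, {u | u ∈ cube n ∧ ∃ i : Fin n, m ≤ (i:ℕ) ∧ (i:ℕ) ≤ m + 0 ∧ Q u i}) ∪
      (⋃ r ∈ Finset.range R, {u | u ∈ cube n ∧ ∃ i : Fin n, m0 + r * b ≤ (i:ℕ) ∧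
        (i:ℕ) ≤ m0 + r * b + b ∧ Q u i}) := by
    rintro u ⟨hu, i, hi, hq⟩
    rcases lt_or_ge (i:ℕ) m0 with h | h
    · left
      simp only [mem_iUnion, Finset.mem_range]
      exact ⟨i, h, hu, i, le_rfl, le_rfl, hq⟩
    · right
      simp only [mem_iUnion, Finset.mem_range]
      have d1 := Nat.div_add_mod ((i:ℕ) - m0) b
      have d2 := Nat.mod_lt ((i:ℕ) - m0) (show b > 0 by omega)
      have d3 : b * (((i:ℕ) - m0) / b) = ((i:ℕ) - m0) / b * b := mul_comm _ _
      refine ⟨((i:ℕ) - m0) / b, ?_, hu, i, by omega, by omega, hq⟩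
      rw [Nat.div_lt_iff_lt_mul (by omega)]
      omega
  refine (measureReal_mono sub).trans ((measureReal_union_le _ _).trans ?_)
  gcongr
  · refine (measureReal_biUnion_finset_le _ _).trans ?_
    refine (Finset.sum_le_sum fun m hm => h1 m (Finset.mem_range.1 hm)).trans ?_
    simp
  · refine (measureReal_biUnion_finset_le _ _).trans ?_
    refine (Finset.sum_le_sum fun m hm => h2 m (Finset.mem_range.1 hm)).trans ?_
    simp

theorem edge_bounds {n b m0 R : ℕ} {e : ℝ} (hb : 8 ≤ b) (hm : b ^ 2 ≤ m0)
    (hn : 2 * b * (m0 + R * b + 1 + 2 * b) ≤ n)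
    (he : Real.exp (-(m0 / (b:ℝ)^3)) < 2 * e) (he1 : 2 * e ≤ 1) :
    (nullMeasure n).real {u | u ∈ cube n ∧ ∃ i : Fin n, (i:ℕ) < m0 + R * b ∧ pOrd u i ≤ e}
      ≤ m0 * (2 * e) + R * ((1 + Real.exp 4) * (2 * e)) ∧
    (nullMeasure n).real {u | u ∈ cube n ∧ ∃ i : Fin n, (i:ℕ) < m0 + R * b ∧ 1 - pOrd u i ≤ e}
      ≤ m0 * (2 * e) + R * ((1 + Real.exp 4) * (2 * e)) := by
  have epos : 0 < 2 * e := lt_trans (Real.exp_pos _) he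
  have hmn : m0 + R * b + 1 + 2 * b ≤ n := le_trans (Nat.le_mul_of_pos_left _ (by omega)) hn
  have mono : ∀ r < R, 2 * b * (m0 + r * b + 1 + 2 * b) ≤ n := by
    intro r hr
    refine le_trans ?_ hn
    gcongr
  have ex : ∀ r : ℕ, Real.exp (-(((m0 + r * b : ℕ):ℝ) / (b:ℝ)^3)) < 2 * e := by
    intro r
    refine lt_of_le_of_lt (Real.exp_le_exp.2 ?_) he
    push_cast
    gcongr
    have : (0:ℝ) ≤ r * b := by positivity
    linarith
  constructor
  · apply edge_union (fun u i => pOrd u i ≤ e) hb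
    · intro m hm; exact single_up (by omega) (by linarith) he1
    · intro r hr
      refine edge_up hb (by omega) ?_ (ex r) he1
      refine le_trans ?_ (mono r hr)
      rw [mul_assoc]; exact Nat.le_mul_of_pos_left _ (by norm_num)
  · apply edge_union (fun u i => 1 - pOrd u i ≤ e) hb
    · intro m hm; exact single_down (by omega) (by linarith) he1
    · intro r hr
      exact edge_down hb (by omega) (mono r hr) (ex r) he1

end BJ

end


noncomputable section

namespace BJ

theorem second_moment {Ω : Type} [MeasurableSpace Ω] (μ : Measure Ω) [IsProbabilityMeasure μ]
    (K : ℕ) (A : ℕ → Set Ω) (hA : ∀ k, MeasurableSet (A k)) {e r : ℝ} (he : 0 ≤ e) (hr : 0 ≤ r)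
    (h1 : ∀ k < K, μ.real (A k) = e)
    (h2 : ∀ k < K, ∀ l < K, k < l → μ.real (A k ∩ A l) - e * e ≤ r * e) :
    μ.real {w | ∀ k < K, w ∉ A k} * (K * e) ^ 2 ≤ K * e + K ^ 2 * (r * e) := by
  set I : ℕ → Ω → ℝ := fun k => (A k).indicator 1 with hI
  have hInt : ∀ k, Integrable (I k) μ := fun k => (integrable_const (1:ℝ)).indicator (hA k)
  have hmul : ∀ k l, (fun w => I k w * I l w) = (A k ∩ A l).indicator 1 := by
    intro k l; funext w
    simp only [hI, Set.inter_indicator_one, Pi.mul_apply]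
  have hIntm : ∀ k l, Integrable (fun w => I k w * I l w) μ := by
    intro k l; rw [hmul]; exact (integrable_const (1:ℝ)).indicator ((hA k).inter (hA l))
  have hpair : ∀ k l, (fun w => (I k w - e) * (I l w - e))
      = fun w => I k w * I l w - e * I k w - e * I l w + e * e := by
    intro k l; funext w; ring
  have hi3 : ∀ k l, Integrable (fun w => I k w * I l w - e * I k w - e * I l w) μ := fun k l =>
    ((hIntm k l).sub ((hInt k).const_mul e)).sub ((hInt l).const_mul e)
  have hi2 : ∀ k l, Integrable (fun w => I k w * I l w - e * I k w) μ := fun k l =>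
    (hIntm k l).sub ((hInt k).const_mul e)
  have hip : ∀ k l, Integrable (fun w => (I k w - e) * (I l w - e)) μ := by
    intro k l; rw [hpair]; exact (hi3 k l).add (integrable_const _)
  have hval : ∀ k < K, ∀ l < K, ∫ w, (I k w - e) * (I l w - e) ∂μ = μ.real (A k ∩ A l) - e * e := by
    intro k hk l hl
    rw [hpair, integral_add (hi3 k l) (integrable_const _),
      integral_sub (hi2 k l) ((hInt l).const_mul e), integral_sub (hIntm k l) ((hInt k).const_mul e),
      integral_const_mul, integral_const_mul, hmul, integral_indicator_one ((hA k).inter (hA l))]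
    simp only [hI]
    rw [integral_indicator_one (hA k), integral_indicator_one (hA l), h1 k hk, h1 l hl]
    simp
  have hb : ∀ k < K, ∀ l < K, ∫ w, (I k w - e) * (I l w - e) ∂μ ≤ (if k = l then e else 0) + r * e := by
    intro k hk l hl
    rw [hval k hk l hl]
    have p := mul_nonneg hr he
    rcases lt_trichotomy k l with h | h | h
    · rw [if_neg h.ne]; linarith [h2 k hk l hl h]
    · subst h; rw [if_pos rfl, Set.inter_self, h1 k hk]; nlinarith
    · rw [if_neg h.ne', Set.inter_comm]; linarith [h2 l hl k hk h]
  set Z : Set Ω := {w | ∀ k < K, w ∉ A k} with hZ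
  have hZm : MeasurableSet Z := by
    have : Z = ⋂ k ∈ Finset.range K, (A k)ᶜ := by
      ext w; simp [hZ]
    rw [this]
    exact Finset.measurableSet_biInter _ fun k _ => (hA k).compl
  have hsq : ∀ w, (∑ k ∈ Finset.range K, (I k w - e)) ^ 2
      = ∑ k ∈ Finset.range K, ∑ l ∈ Finset.range K, (I k w - e) * (I l w - e) := by
    intro w; rw [sq, Finset.sum_mul_sum]
  have hiS : Integrable (fun w => (∑ k ∈ Finset.range K, (I k w - e)) ^ 2) μ := by
    simp only [hsq]
    exact integrable_finsetSum _ fun k _ => integrable_finsetSum _ fun l _ => hip k l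
  have lower : μ.real Z * (K * e) ^ 2 ≤ ∫ w, (∑ k ∈ Finset.range K, (I k w - e)) ^ 2 ∂μ := by
    have : μ.real Z * (K * e) ^ 2 = ∫ w, Z.indicator (fun _ => (K * e)^2) w ∂μ := by
      rw [integral_indicator_const _ hZm, smul_eq_mul]
    rw [this]
    apply integral_mono ((integrable_const _).indicator hZm) hiS
    intro w
    by_cases hw : w ∈ Z
    · simp only [Set.indicator_of_mem hw]
      have : ∑ k ∈ Finset.range K, (I k w - e) = ∑ k ∈ Finset.range K, (-e) := by
        apply Finset.sum_congr rfl
        intro k hk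
        simp only [hI]
        rw [Set.indicator_of_notMem (hw k (Finset.mem_range.1 hk))]; ring
      rw [this]; simp
    · simp only [Set.indicator_of_notMem hw]; positivity
  refine lower.trans ?_
  simp only [hsq]
  rw [integral_finsetSum _ fun k _ => integrable_finsetSum _ fun l _ => hip k l]
  have : ∀ k ∈ Finset.range K, ∫ w, ∑ l ∈ Finset.range K, (I k w - e) * (I l w - e) ∂μ
      ≤ e + K * (r * e) := by
    intro k hk
    rw [integral_finsetSum _ fun l _ => hip k l]
    refine (Finset.sum_le_sum fun l hl => hb k (Finset.mem_range.1 hk) l (Finset.mem_range.1 hl)).trans ?_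
    rw [Finset.sum_add_distrib, Finset.sum_ite_eq, if_pos hk]
    simp
  refine (Finset.sum_le_sum this).trans ?_
  simp only [Finset.sum_const, Finset.card_range, nsmul_eq_mul]
  apply le_of_eq; ring

theorem center {n B K : ℕ} {e r : ℝ} (hB : 2 ≤ B) (hn : 4 * B ^ K ≤ n) (he : 0 < e) (he1 : e < 1 / 2)
    (hr : 0 < r) (hr1 : r ≤ 1) (hrB : 4 ≤ r ^ 2 * (e * B)) :
    (nullMeasure n).real {u | u ∈ cube n ∧ e < MnPlus u} * (K * e) ^ 2 ≤ K * e + K ^ 2 * (r * e) := by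
  have hBp : ∀ k, 1 ≤ B ^ k := fun k => Nat.one_le_pow _ _ (by omega)
  have hle : ∀ k < K, 4 * B ^ (k+1) ≤ n := by
    intro k hk
    refine le_trans ?_ hn
    have : B ^ (k+1) ≤ B ^ K := Nat.pow_le_pow_right (by omega) hk
    omega
  have hx : ∀ k, ∃ x, k < K → x ∈ Icc (0:ℝ) 1 ∧ T n (B ^ (k+1)) x = e := by
    intro k
    by_cases hk : k < K
    · have h1 := hle k hk
      have h2 := hBp (k+1)
      obtain ⟨x, hx, h⟩ := exists_T_eq (n := n) (j := B ^ (k+1) - 1) (e := e) (by omega) he.le (by linarith)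
      refine ⟨x, fun _ => ⟨hx, ?_⟩⟩
      rwa [Nat.sub_add_cancel h2] at h
    · exact ⟨0, fun h => absurd h hk⟩
  choose x hx using hx
  have low : ∀ k < K, e * (B:ℝ) ^ (k+1) ≤ n * x k := by
    intro k hk
    have := T_markov (hx k hk).1.1 (hx k hk).1.2 n (B ^ (k+1))
    rw [(hx k hk).2] at this
    push_cast at this
    linarith
  have up : ∀ k < K, n * x k ≤ 4 * (B:ℝ) ^ (k+1) := by
    intro k hk
    by_contra hc
    push Not at hc
    have h2 := hBp (k+1)
    have c := one_sub_T_chernoff (hx k hk).1.1 (hx k hk).1.2 n (B ^ (k+1) - 1) (l := 1) (by norm_num)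
    rw [Nat.sub_add_cancel h2, (hx k hk).2] at c
    have c2 : ((B ^ (k+1) - 1 : ℕ) : ℝ) = (B:ℝ)^(k+1) - 1 := by
      push_cast [Nat.cast_sub h2]; ring
    rw [c2] at c
    have e1 : Real.exp (-1) ≤ 1/2 := by
      have := Real.exp_one_gt_d9
      rw [Real.exp_neg]
      rw [inv_le_comm₀ (by positivity) (by norm_num)]
      norm_num
      linarith
    have hb1 : (1:ℝ) ≤ (B:ℝ)^(k+1) := by exact_mod_cast h2
    have : 1 * ((B:ℝ)^(k+1) - 1) - n * x k * (1 - Real.exp (-1)) ≤ -1 := by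
      nlinarith
    have := Real.exp_le_exp.2 this
    linarith
  have hn0 : (0:ℝ) < n := by
    have := hBp K
    have : 0 < n := by omega
    exact_mod_cast this
  have hB0 : (0:ℝ) < B := by
    have : 0 < B := by omega
    exact_mod_cast this
  have xpos : ∀ k < K, 0 < x k := by
    intro k hk
    have := low k hk
    have p : 0 < n * x k := lt_of_lt_of_le (by positivity) this
    exact pos_of_mul_pos_right p hn0.le
  have ratio : ∀ k < K, ∀ l < K, k < l → x k ≤ r ^ 2 * x l := by
    intro k hk l hl hkl
    have a1 := up k hk
    have a2 := low l hl
    have a3 : (B:ℝ) ^ (k+1) * B ≤ (B:ℝ)^(l+1) := by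
      rw [← pow_succ]
      exact_mod_cast Nat.pow_le_pow_right (by omega) (by omega)
    have a4 : 4 * (B:ℝ)^(k+1) ≤ r^2 * (e * (B:ℝ)^(l+1)) := by
      calc 4 * (B:ℝ)^(k+1) ≤ (r ^ 2 * (e * B)) * (B:ℝ)^(k+1) := by gcongr
        _ = r^2 * (e * ((B:ℝ)^(k+1) * B)) := by ring
        _ ≤ _ := by gcongr
    have a5 : n * x k ≤ n * (r^2 * x l) := by
      calc n * x k ≤ _ := a1
        _ ≤ _ := a4
        _ ≤ r^2 * (n * x l) := by gcongr
        _ = _ := by ring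
    exact le_of_mul_le_mul_left a5 hn0
  have sm := second_moment (nullMeasure n) K (fun k => {u | B ^ (k+1) ≤ cnt (x k) u})
    (fun k => measurableSet_le measurable_const (measurable_cnt _ n)) he.le hr.le
    (fun k hk => by rw [prob_cnt (hx k hk).1.1 (hx k hk).1.2]; exact (hx k hk).2)
    (fun k hk l hl hkl => by
      have rr := ratio k hk l hl hkl
      refine prob_cov (xpos k hk) ?_ (hx l hl).1.2 hr rr n _ _ (hx k hk).2 (hx l hl).2
      refine rr.trans ?_
      have : r^2 ≤ 1 := by nlinarith
      nlinarith [xpos l hl])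
  refine le_trans ?_ sm
  refine mul_le_mul_of_nonneg_right (measureReal_mono ?_) (by positivity)
  rintro u ⟨hu, hM⟩ k hk hc
  have h1 := hle k hk
  have h2 := hBp (k+1)
  obtain ⟨N, rfl⟩ : ∃ N, n = N + 1 := ⟨n - 1, by omega⟩
  have hi : B ^ (k+1) - 1 < N + 1 := by omega
  have ho := (orderStat_le_iff u ⟨B ^ (k+1) - 1, hi⟩ (x k)).2
    (by simp only [Nat.sub_add_cancel h2]; exact hc)
  have hm := T_mono N (B ^ (k+1) - 1) (orderStat_mem hu _) (hx k hk).1 ho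
  have hp := pOrd_eq hu ⟨B ^ (k+1) - 1, hi⟩
  simp only at hp
  rw [← hp, Nat.sub_add_cancel h2, (hx k hk).2] at hm
  have : MnPlus u ≤ pOrd u ⟨B ^ (k+1) - 1, hi⟩ := ciInf_le (Set.finite_range _).bddBelow _
  linarith

end BJ

end

noncomputable section
namespace BJ

theorem real_preimage_refl_le {n : ℕ} (s : Set (Fin n → ℝ)) :
    (nullMeasure n).real (refl ⁻¹' s) ≤ (nullMeasure n).real s := by
  have h : (nullMeasure n) (refl ⁻¹' s) ≤ (nullMeasure n) s := by
    calc (nullMeasure n) (refl ⁻¹' s) ≤ (nullMeasure n) (refl ⁻¹' (toMeasurable (nullMeasure n) s)) :=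
          measure_mono (preimage_mono (subset_toMeasurable _ _))
      _ = (nullMeasure n) (toMeasurable (nullMeasure n) s) :=
          (mp_refl n).measure_preimage (measurableSet_toMeasurable _ _).nullMeasurableSet
      _ = _ := measure_toMeasurable _
  exact ENNReal.toReal_mono (measure_ne_top _ _) h

theorem MnMinus_eq {n : ℕ} {u : Fin n → ℝ} (hu : u ∈ cube n) : MnPlus (refl u) = MnMinus u := by
  unfold MnPlus MnMinus
  simp only [pOrd_refl hu]
  exact Function.Surjective.iInf_comp (f := Fin.rev) Fin.rev_surjective (fun i => 1 - pOrd u i)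

/-- left edge events -/
def EL (n m : ℕ) (e : ℝ) : Set (Fin n → ℝ) :=
  {u | u ∈ cube n ∧ ∃ i : Fin n, (i:ℕ) < m ∧ pOrd u i ≤ e}
def EL' (n m : ℕ) (e : ℝ) : Set (Fin n → ℝ) :=
  {u | u ∈ cube n ∧ ∃ i : Fin n, (i:ℕ) < m ∧ 1 - pOrd u i ≤ e}
def CE (n : ℕ) (e : ℝ) : Set (Fin n → ℝ) := {u | u ∈ cube n ∧ e < MnPlus u}

/-- union of the bad events -/
def bad (n m : ℕ) (e : ℝ) : Set (Fin n → ℝ) :=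
  (cube n)ᶜ ∪ CE n e ∪ refl ⁻¹' (CE n e) ∪ EL n m e ∪ EL' n m e
    ∪ refl ⁻¹' (EL n m e) ∪ refl ⁻¹' (EL' n m e)

theorem bad_le {n m : ℕ} {e c d : ℝ} (hc : (nullMeasure n).real (CE n e) ≤ c)
    (h1 : (nullMeasure n).real (EL n m e) ≤ d) (h2 : (nullMeasure n).real (EL' n m e) ≤ d) :
    (nullMeasure n).real (bad n m e) ≤ 2 * c + 4 * d := by
  have z : (nullMeasure n).real (cube n)ᶜ = 0 := by simp [measureReal_def, cube_compl]
  have a1 := real_preimage_refl_le (CE n e)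
  have a2 := real_preimage_refl_le (EL n m e)
  have a3 := real_preimage_refl_le (EL' n m e)
  unfold bad
  refine (measureReal_union_le _ _).trans ?_
  have b5 := measureReal_union_le (μ := nullMeasure n) ((cube n)ᶜ ∪ CE n e ∪ refl ⁻¹' (CE n e) ∪ EL n m e ∪ EL' n m e) (refl ⁻¹' (EL n m e))
  have b4 := measureReal_union_le (μ := nullMeasure n) ((cube n)ᶜ ∪ CE n e ∪ refl ⁻¹' (CE n e) ∪ EL n m e) (EL' n m e)
  have b3 := measureReal_union_le (μ := nullMeasure n) ((cube n)ᶜ ∪ CE n e ∪ refl ⁻¹' (CE n e)) (EL n m e)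
  have b2 := measureReal_union_le (μ := nullMeasure n) ((cube n)ᶜ ∪ CE n e) (refl ⁻¹' (CE n e))
  have b1 := measureReal_union_le (μ := nullMeasure n) ((cube n)ᶜ) (CE n e)
  linarith

theorem one_sub_le {n : ℕ} {S b : Set (Fin n → ℝ)} {δ : ℝ} (hb : (nullMeasure n).real b ≤ δ)
    (h : ∀ u, u ∉ b → u ∈ S) : 1 - δ ≤ (nullMeasure n).real S := by
  have h1 : (nullMeasure n).real (b ∪ S) = 1 := by
    have : b ∪ S = univ := by
      ext u
      by_cases hu : u ∈ b
      · simp [hu]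
      · simp [h u hu]
    rw [this]; simp
  have := measureReal_union_le (μ := nullMeasure n) b S
  linarith

/-- outside the bad set, edge indices have both values above `e`. -/
theorem not_bad {n m : ℕ} {e : ℝ} {u : Fin n → ℝ} (hu : u ∉ bad n m e) :
    u ∈ cube n ∧ MnPlus u ≤ e ∧ MnMinus u ≤ e ∧
    ∀ i : Fin n, ((i:ℕ) < m ∨ (i.rev : ℕ) < m) → e < pOrd u i ∧ e < 1 - pOrd u i := by
  simp only [bad, mem_union, not_or, mem_compl_iff, not_not, mem_preimage] at hu
  obtain ⟨⟨⟨⟨⟨⟨hc, h1⟩, h2⟩, h3⟩, h4⟩, h5⟩, h6⟩ := hu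
  have hr := refl_mem hc
  refine ⟨hc, ?_, ?_, ?_⟩
  · by_contra h; exact h1 ⟨hc, not_le.1 h⟩
  · by_contra h; exact h2 ⟨hr, by rw [MnMinus_eq hc]; exact not_le.1 h⟩
  · rintro i (hi | hi)
    · constructor
      · by_contra h; exact h3 ⟨hc, i, hi, not_lt.1 h⟩
      · by_contra h; exact h4 ⟨hc, i, hi, not_lt.1 h⟩
    · constructor
      · by_contra h
        refine h6 ⟨hr, i.rev, hi, ?_⟩
        rw [pOrd_refl hc, Fin.rev_rev]; linarith
      · by_contra h
        refine h5 ⟨hr, i.rev, hi, ?_⟩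
        rw [pOrd_refl hc, Fin.rev_rev]; linarith

theorem loc {n m : ℕ} {L : ℝ} (hL : L ≤ m) (i : Fin n) (h : ¬ ((i:ℕ) < m ∨ (i.rev : ℕ) < m)) :
    L ≤ ((i : ℕ) + 1 : ℝ) ∧ ((i : ℕ) + 1 : ℝ) ≤ n - L := by
  push Not at h
  obtain ⟨h1, h2⟩ := h
  rw [Fin.val_rev] at h2
  have h3 : (i:ℕ) + 1 + m ≤ n := by omega
  have h1' : (m:ℝ) ≤ (i:ℕ) := by exact_mod_cast h1
  have h3' : ((i:ℕ):ℝ) + 1 + m ≤ n := by exact_mod_cast h3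
  constructor <;> linarith

theorem assemble {n m : ℕ} {L e δ : ℝ} (hL : L ≤ m) (hb : (nullMeasure n).real (bad n m e) ≤ δ) :
    1 - δ ≤ (nullMeasure n).real {u | ∀ i : Fin n, pOrd u i = MnPlus u →
          L ≤ ((i : ℕ) + 1 : ℝ) ∧ ((i : ℕ) + 1 : ℝ) ≤ n - L} ∧
    1 - δ ≤ (nullMeasure n).real {u | ∀ i : Fin n, 1 - pOrd u i = MnMinus u →
          L ≤ ((i : ℕ) + 1 : ℝ) ∧ ((i : ℕ) + 1 : ℝ) ≤ n - L} ∧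
    1 - δ ≤ (nullMeasure n).real {u | ∀ i : Fin n, min (pOrd u i) (1 - pOrd u i) = Mn u →
          L ≤ ((i : ℕ) + 1 : ℝ) ∧ ((i : ℕ) + 1 : ℝ) ≤ n - L} := by
  refine ⟨one_sub_le hb ?_, one_sub_le hb ?_, one_sub_le hb ?_⟩
  all_goals
    intro u hu i hi
    obtain ⟨-, h1, h2, h3⟩ := not_bad hu
    refine loc hL i fun hcon => ?_
    have := h3 i hcon
  · linarith
  · linarith
  · have h4 : Mn u ≤ e := (min_le_left _ _).trans h1
    have h5 := lt_min this.1 this.2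
    linarith

theorem tendsto_of_le {f : ℕ → ℝ} {δ : ℕ → ℝ} (hδ : Tendsto δ atTop (nhds 0))
    (h : ∀ᶠ n in atTop, 1 - δ n ≤ f n) (h1 : ∀ n, f n ≤ 1) : Tendsto f atTop (nhds 1) := by
  have h2 : Tendsto (fun n => 1 - δ n) atTop (nhds 1) := by simpa using tendsto_const_nhds.sub hδ
  exact tendsto_of_tendsto_of_tendsto_of_le_of_le' h2 tendsto_const_nhds h
    (Eventually.of_forall h1)

end BJ
end

noncomputable section
namespace BJ

/-- the explicit constant -/
def C0 : ℝ := 2 * 17 + 4 * (2 + 4 * (1 + Real.exp 4))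

theorem center_q {n q : ℕ} (hq : 8 ≤ q) (h1 : (q:ℝ)^20 ≤ Real.log n) (h2 : Real.log n ≤ Real.exp q) :
    (nullMeasure n).real (CE n ((q:ℝ)^2 / Real.log n)) ≤ 17 / q := by
  set L := Real.log n with hLdef
  have hq' : (8:ℝ) ≤ q := by exact_mod_cast hq
  have hq0 : (0:ℝ) < q := by linarith
  have hq1 : (1:ℝ) ≤ q := by linarith
  have p3 : (q:ℝ)^3 ≤ L := (pow_le_pow_right₀ hq1 (by norm_num)).trans h1
  have q2 : 64 * (q:ℝ) ≤ q^3 := by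
    have h64 : (64:ℝ) ≤ q^2 := by nlinarith
    calc 64 * (q:ℝ) ≤ q^2 * q := by gcongr
      _ = q^3 := by ring
  have hLq : 64 * (q:ℝ) ≤ L := q2.trans p3
  have hL0 : 0 < L := by linarith
  have hn0 : 0 < n := by
    rcases Nat.eq_zero_or_pos n with h | h
    · subst h; simp [hLdef] at hL0
    · exact h
  have hn0' : (0:ℝ) < n := by exact_mod_cast hn0
  have hn4 : 4 ≤ n := by
    have : L ≤ n := (Real.log_le_sub_one_of_pos hn0').trans (by linarith)
    have : (4:ℝ) ≤ n := by linarith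
    exact_mod_cast this
  set A := ⌈L⌉₊ with hA
  have hAL : L ≤ A := Nat.le_ceil L
  have hA2 : 2 ≤ A := by
    have : (2:ℝ) ≤ A := by linarith
    exact_mod_cast this
  have hAlog : Real.log A ≤ q + 1 := by
    have hA0 : (0:ℝ) < A := by linarith
    rw [Real.log_le_iff_le_exp hA0, Real.exp_add]
    have h3 : (A:ℝ) < L + 1 := Nat.ceil_lt_add_one hL0.le
    have h4 : (1:ℝ) ≤ Real.exp q := Real.one_le_exp hq0.le
    have h5 : (2:ℝ) ≤ Real.exp 1 := by have := Real.add_one_le_exp (1:ℝ); linarith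
    nlinarith
  set B := A ^ 4 with hB
  have hB2 : 2 ≤ B := hA2.trans (Nat.le_self_pow (by norm_num) A)
  set K := Nat.log B (n/4) with hK
  have hn4' : n / 4 ≠ 0 := by omega
  have hBK : 4 * B ^ K ≤ n := by
    have := Nat.pow_log_le_self B hn4'
    rw [← hK] at this
    omega
  have hBK' : n ≤ 4 * B ^ (K+1) := by
    have := Nat.lt_pow_succ_log_self (b := B) (by omega) (n/4)
    rw [← hK, Nat.succ_eq_add_one] at this
    omega
  have hKlow : L ≤ 16 * q * K := by
    have h3 : L ≤ Real.log (4 * (B:ℝ)^(K+1)) := by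
      apply Real.log_le_log hn0'
      exact_mod_cast hBK'
    have hB0 : (B:ℝ) ≠ 0 := by have : B ≠ 0 := by omega
                               exact_mod_cast this
    rw [Real.log_mul (by norm_num) (pow_ne_zero _ hB0), Real.log_pow] at h3
    have h4 : Real.log B = 4 * Real.log A := by rw [hB]; push_cast; rw [Real.log_pow]; norm_num
    have h5 : Real.log 4 ≤ 3 := by have := Real.log_le_sub_one_of_pos (show (0:ℝ) < 4 by norm_num); linarith
    rw [h4] at h3
    push_cast at h3
    have h6 : ((K:ℝ)+1) * (4 * Real.log A) ≤ (K+1) * (4 * (q+1)) := by gcongr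
    have hK0 : (0:ℝ) ≤ K := Nat.cast_nonneg _
    have h7 : ((K:ℝ)+1) * (4 * (q+1)) ≤ (K+1) * (8 * q) :=
      mul_le_mul_of_nonneg_left (by linarith) (by linarith)
    nlinarith
  have hKe0 : (q:ℝ)/16 ≤ K * ((q:ℝ)^2/L) := by
    rw [div_le_iff₀ (by norm_num), ← mul_div_assoc, div_mul_eq_mul_div, le_div_iff₀ hL0]
    nlinarith
  have he : 0 < (q:ℝ)^2/L := by positivity
  have he1 : (q:ℝ)^2/L < 1/2 := by
    rw [div_lt_iff₀ hL0]; nlinarith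
  have hr1 : 1 / L ≤ 1 := by rw [div_le_one hL0]; linarith
  have hrB : 4 ≤ (1/L)^2 * ((q:ℝ)^2/L * B) := by
    have : L^4 ≤ (B:ℝ) := by rw [hB]; push_cast; gcongr
    calc (4:ℝ) ≤ q^2 * L := by nlinarith
      _ = (1/L)^2 * ((q:ℝ)^2/L * L^4) := by field_simp
      _ ≤ _ := by gcongr
  have hc := center hB2 hBK he he1 (show 0 < 1/L by positivity) hr1 hrB
  change (nullMeasure n).real (CE n ((q:ℝ)^2 / L)) * _ ≤ _ at hc
  set P := (nullMeasure n).real (CE n ((q:ℝ)^2 / L))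
  set y := (K:ℝ) * ((q:ℝ)^2/L) with hy
  have hy0 : 0 < y := lt_of_lt_of_le (by positivity) hKe0
  have h8 : (K:ℝ)^2 * (1/L * ((q:ℝ)^2/L)) = y^2 / q^2 := by
    rw [hy]; field_simp
  rw [h8] at hc
  have h9 : P ≤ 1/y + 1/q^2 := by
    have : P * y^2 ≤ (1/y + 1/q^2) * y^2 := by
      refine hc.trans (le_of_eq ?_); field_simp
    exact le_of_mul_le_mul_right this (by positivity)
  have h10 : 1/y ≤ 16/q := by
    rw [div_le_div_iff₀ hy0 hq0]; linarith
  have h11 : 1/(q:ℝ)^2 ≤ 1/q := by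
    apply one_div_le_one_div_of_le hq0; nlinarith
  have h12 : (17:ℝ)/q = 16/q + 1/q := by ring
  linarith

theorem edge_q {n q : ℕ} (hq : 8 ≤ q) (h1 : (q:ℝ)^20 ≤ Real.log n) (h2 : Real.log n ≤ Real.exp q) :
    ∃ m : ℕ, Real.log n ≤ m ∧
    (nullMeasure n).real (EL n m ((q:ℝ)^2 / Real.log n)) ≤ (2 + 4 * (1 + Real.exp 4)) / q ∧
    (nullMeasure n).real (EL' n m ((q:ℝ)^2 / Real.log n)) ≤ (2 + 4 * (1 + Real.exp 4)) / q := by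
  set L := Real.log n with hLdef
  have hq' : (8:ℝ) ≤ q := by exact_mod_cast hq
  have hq0 : (0:ℝ) < q := by linarith
  have hq1 : (1:ℝ) ≤ q := by linarith
  have p3 : (q:ℝ)^3 ≤ L := (pow_le_pow_right₀ hq1 (by norm_num)).trans h1
  have p10 : (q:ℝ)^10 ≤ L := (pow_le_pow_right₀ hq1 (by norm_num)).trans h1
  have p13 : (q:ℝ)^13 ≤ L := (pow_le_pow_right₀ hq1 (by norm_num)).trans h1
  have q2 : 64 * (q:ℝ) ≤ q^3 := by
    have h64 : (64:ℝ) ≤ q^2 := by nlinarith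
    calc 64 * (q:ℝ) ≤ q^2 * q := by gcongr
      _ = q^3 := by ring
  have hLq : 64 * (q:ℝ) ≤ L := q2.trans p3
  have hL0 : 0 < L := by linarith
  have hn0 : 0 < n := by
    rcases Nat.eq_zero_or_pos n with h | h
    · subst h; simp [hLdef] at hL0
    · exact h
  have hn0' : (0:ℝ) < n := by exact_mod_cast hn0
  set R := ⌊L / (q:ℝ)^3⌋₊ + 1 with hR
  have hR1 : L / (q:ℝ)^3 ≤ R := by
    rw [hR]; push_cast; exact (Nat.lt_floor_add_one _).le
  have hR2 : (R:ℝ) ≤ L / (q:ℝ)^3 + 1 := by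
    rw [hR]; push_cast; gcongr; exact Nat.floor_le (by positivity)
  have hRb : L ≤ R * (q:ℝ)^3 := by rwa [div_le_iff₀ (by positivity)] at hR1
  have hRb2 : R * (q:ℝ)^3 ≤ L + q^3 := by
    calc R * (q:ℝ)^3 ≤ (L / (q:ℝ)^3 + 1) * q^3 := by gcongr
      _ = _ := by field_simp
  have hnL : (n:ℝ) = Real.exp L := (Real.exp_log hn0').symm
  have hexp : 12 * L^2 ≤ n := by
    rw [hnL]
    have h3 : L^3 / (Nat.factorial 3 : ℕ) ≤ Real.exp L := Real.pow_div_factorial_le_exp L hL0.le 3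
    norm_num [Nat.factorial] at h3
    nlinarith [sq_nonneg L]
  have hn : 2 * q^3 * (q^10 + R * q^3 + 1 + 2 * q^3) ≤ n := by
    have : 2 * (q:ℝ)^3 * (q^10 + R * q^3 + 1 + 2 * q^3) ≤ n := by
      calc 2 * (q:ℝ)^3 * (q^10 + R * q^3 + 1 + 2 * q^3) ≤ 2 * L * (6 * L) := by
            gcongr; linarith
        _ = 12 * L^2 := by ring
        _ ≤ _ := hexp
    exact_mod_cast this
  have hb : 8 ≤ q^3 := hq.trans (Nat.le_self_pow (by norm_num) q)
  have hm : (q^3)^2 ≤ q^10 := by rw [← pow_mul]; exact Nat.pow_le_pow_right (by omega) (by norm_num)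
  have he0 : 0 < (q:ℝ)^2/L := by positivity
  have he : Real.exp (-(((q^10 : ℕ):ℝ) / ((q^3 : ℕ):ℝ)^3)) < 2 * ((q:ℝ)^2/L) := by
    have : ((q^10 : ℕ):ℝ) / ((q^3 : ℕ):ℝ)^3 = q := by push_cast; field_simp
    rw [this, Real.exp_neg]
    calc (Real.exp q)⁻¹ ≤ L⁻¹ := by gcongr
      _ = 1 / L := by ring
      _ < 2 * q^2 / L := by gcongr; nlinarith
      _ = _ := by ring
  have he1 : 2 * ((q:ℝ)^2/L) ≤ 1 := by
    rw [← mul_div_assoc, div_le_one hL0]; nlinarith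
  have hE := edge_bounds hb hm hn he he1
  have hbound : ((q^10:ℕ):ℝ) * (2 * ((q:ℝ)^2/L)) + R * ((1 + Real.exp 4) * (2 * ((q:ℝ)^2/L)))
      ≤ (2 + 4 * (1 + Real.exp 4)) / q := by
    have a1 : ((q^10:ℕ):ℝ) * ((q:ℝ)^2/L) ≤ 1 / q := by
      push_cast
      rw [← mul_div_assoc, div_le_div_iff₀ hL0 hq0]
      calc _ = (q:ℝ)^13 := by ring
        _ ≤ _ := by linarith
    have a2 : (R:ℝ) * ((q:ℝ)^2/L) ≤ 2 / q := by
      calc (R:ℝ) * ((q:ℝ)^2/L) ≤ (L / (q:ℝ)^3 + 1) * ((q:ℝ)^2/L) := by gcongr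
        _ = 1/q + q^2/L := by field_simp
        _ ≤ 1/q + 1/q := by
            refine add_le_add le_rfl ?_
            rw [div_le_div_iff₀ hL0 hq0]
            calc _ = (q:ℝ)^3 := by ring
              _ ≤ _ := by linarith
        _ = _ := by ring
    have a3 : (0:ℝ) ≤ 1 + Real.exp 4 := by positivity
    calc _ = 2 * (((q^10:ℕ):ℝ) * ((q:ℝ)^2/L)) + 2 * (1 + Real.exp 4) * ((R:ℝ) * ((q:ℝ)^2/L)) := by ring
      _ ≤ 2 * (1/q) + 2 * (1 + Real.exp 4) * (2/q) := by gcongr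
      _ = _ := by ring
  refine ⟨q^10 + R * q^3, ?_, hE.1.trans hbound, hE.2.trans hbound⟩
  push_cast
  have : (0:ℝ) ≤ (q:ℝ)^10 := by positivity
  linarith

/-- iterated logarithm -/
def qn (n : ℕ) : ℕ := ⌈Real.log (Real.log n)⌉₊

theorem qn_tendsto : Tendsto qn atTop atTop :=
  tendsto_nat_ceil_atTop.comp (Real.tendsto_log_atTop.comp
    (Real.tendsto_log_atTop.comp tendsto_natCast_atTop_atTop))

theorem ev_q : ∀ᶠ n : ℕ in atTop, 8 ≤ qn n ∧ (qn n:ℝ)^20 ≤ Real.log n ∧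
    Real.log n ≤ Real.exp (qn n) := by
  have h1 : ∀ᶠ n in atTop, 8 ≤ qn n := qn_tendsto.eventually_ge_atTop 8
  have h2 : ∀ᶠ n in atTop, (qn n : ℝ)^20 * Real.exp (-(qn n : ℝ)) < Real.exp (-1) :=
    ((Real.tendsto_pow_mul_exp_neg_atTop_nhds_zero 20).comp
      (tendsto_natCast_atTop_atTop.comp qn_tendsto)).eventually_lt_const (Real.exp_pos _)
  have h3 : ∀ᶠ n : ℕ in atTop, 1 ≤ Real.log n :=
    (Real.tendsto_log_atTop.comp tendsto_natCast_atTop_atTop).eventually_ge_atTop 1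
  filter_upwards [h1, h2, h3] with n h1 h2 h3
  have hL0 : 0 < Real.log n := by linarith
  have hl : 0 ≤ Real.log (Real.log n) := Real.log_nonneg h3
  refine ⟨h1, ?_, ?_⟩
  · have h4 : (qn n : ℝ) < Real.log (Real.log n) + 1 := Nat.ceil_lt_add_one hl
    have h5 : Real.exp ((qn n : ℝ) - 1) ≤ Real.log n := by
      rw [← Real.le_log_iff_exp_le hL0]; linarith
    refine le_trans ?_ h5
    rw [Real.exp_neg, ← div_eq_mul_inv, div_lt_iff₀ (Real.exp_pos _), ← Real.exp_add] at h2
    refine h2.le.trans (le_of_eq ?_)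
    congr 1; ring
  · rw [← Real.log_le_iff_le_exp hL0]
    exact Nat.le_ceil _

theorem final : ∀ᶠ n : ℕ in atTop, ∃ m : ℕ, ∃ e : ℝ, Real.log n ≤ m ∧
    (nullMeasure n).real (bad n m e) ≤ C0 / (qn n : ℝ) := by
  filter_upwards [ev_q] with n hn
  obtain ⟨m, hm, ha, hb⟩ := edge_q hn.1 hn.2.1 hn.2.2
  refine ⟨m, _, hm, (bad_le (center_q hn.1 hn.2.1 hn.2.2) ha hb).trans (le_of_eq ?_)⟩
  unfold C0; ring

theorem delta_tendsto : Tendsto (fun n => C0 / (qn n : ℝ)) atTop (nhds 0) :=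
  (tendsto_natCast_atTop_atTop.comp qn_tendsto).const_div_atTop C0

end BJ
end

theorem berk_jones_argmin_location :
    Filter.Tendsto (fun n : ℕ =>
        ((nullMeasure n) {u | ∀ i : Fin n, pOrd u i = MnPlus u →
          Real.log n ≤ ((i : ℕ) + 1 : ℝ) ∧ ((i : ℕ) + 1 : ℝ) ≤ n - Real.log n}).toReal)
      Filter.atTop (nhds 1) ∧
    Filter.Tendsto (fun n : ℕ =>
        ((nullMeasure n) {u | ∀ i : Fin n, 1 - pOrd u i = MnMinus u →
          Real.log n ≤ ((i : ℕ) + 1 : ℝ) ∧ ((i : ℕ) + 1 : ℝ) ≤ n - Real.log n}).toReal)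
      Filter.atTop (nhds 1) ∧
    Filter.Tendsto (fun n : ℕ =>
        ((nullMeasure n) {u | ∀ i : Fin n, min (pOrd u i) (1 - pOrd u i) = Mn u →
          Real.log n ≤ ((i : ℕ) + 1 : ℝ) ∧ ((i : ℕ) + 1 : ℝ) ≤ n - Real.log n}).toReal)
      Filter.atTop (nhds 1) := by
  have h1 : ∀ (n : ℕ) (S : Set (Fin n → ℝ)), ((nullMeasure n) S).toReal ≤ 1 := by
    intro n S
    exact measureReal_le_one
  refine ⟨?_, ?_, ?_⟩
  · refine BJ.tendsto_of_le BJ.delta_tendsto ?_ (fun n => h1 n _)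
    filter_upwards [BJ.final] with n hn
    obtain ⟨m, e, hm, hb⟩ := hn
    exact (BJ.assemble hm hb).1
  · refine BJ.tendsto_of_le BJ.delta_tendsto ?_ (fun n => h1 n _)
    filter_upwards [BJ.final] with n hn
    obtain ⟨m, e, hm, hb⟩ := hn
    exact (BJ.assemble hm hb).2.1
  · refine BJ.tendsto_of_le BJ.delta_tendsto ?_ (fun n => h1 n _)
    filter_upwards [BJ.final] with n hn
    obtain ⟨m, e, hm, hb⟩ := hn
    exact (BJ.assemble hm hb).2.2
end
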